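/- arXiv:2208.10699 — 4 statements merged into one kernel-verified Lean document; each statement's English description precedes it below -/
import Mathlib

section
/- Let F be a finite field with q = |F| elements and n ≥ 2. The number of transvections in GL_n(F) satisfies (q − 1) · |𝒯_{n,q}| = (qⁿ − 1)(q^{n−1} − 1); that is, |𝒯_{n,q}| = (qⁿ − 1)(q^{n−1} − 1)/(q − 1). -/
/-- The set of transvections: matrices of the form `I + v aᵀ` with `a, v` nonzero vectors
satisfying `aᵀ v = 0`. -/
def transvections (n : ℕ) (F : Type*) [Field F] : Set (Matrix (Fin n) (Fin n) F) :=
  {M | ∃ a v : Fin n → F, a ≠ 0 ∧ v ≠ 0 ∧ (∑ i, a i * v i) = 0 ∧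
    M = 1 + Matrix.vecMulVec v a}

/-!
A nontrivial transvection `x ↦ x + f x • v` determines the pair `(f, v)` exactly up to
`(f, v) ↦ (c • f, c⁻¹ • v)`, so the unit group of the field acts freely on such pairs with the
transvections as orbits. The pairs themselves are counted by choosing first a nonzero form `f`
and then a nonzero vector in the hyperplane `ker f`.
-/

open Module

theorem natCard_ne_zero_eq_pow_finrank_sub_one (K V : Type*) [DivisionRing K] [Finite K]
    [AddCommGroup V] [Module K V] [Module.Finite K V] :
    Nat.card {v : V // v ≠ 0} = Nat.card K ^ finrank K V - 1 := by
  have : Finite V := Module.finite_of_finite K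
  calc
    Nat.card {v : V // v ≠ 0} = Nat.card V - Set.ncard {(0 : V)} := Set.ncard_compl {0}
    _ = Nat.card K ^ finrank K V - 1 := by
      rw [Set.ncard_singleton, Module.natCard_eq_pow_finrank (K := K)]

section

variable {K V : Type*} [Field K] [AddCommGroup V] [Module K V]

theorem exists_units_smul_eq_of_forall_smul_eq {X : Type*} {f g : X → K} {v w : V}
    (hf : f ≠ 0) (hv : v ≠ 0) (h : ∀ x, f x • v = g x • w) :
    ∃ c : Kˣ, c • g = f ∧ c⁻¹ • w = v := by
  obtain ⟨x, hfx⟩ := Function.ne_iff.mp hf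
  have hgx : g x ≠ 0 := fun hgx ↦ smul_ne_zero hfx hv (by rw [h x, hgx, zero_smul])
  let c : Kˣ := Units.mk0 (f x) hfx / Units.mk0 (g x) hgx
  have hw : w = c • v := by
    rw [Units.smul_def, Units.val_div_eq_div_val, Units.val_mk0, Units.val_mk0, div_eq_inv_mul,
      mul_smul, h x, inv_smul_smul₀ hgx]
  refine ⟨c, funext fun y ↦ smul_left_injective K hv ?_, by rw [hw, inv_smul_smul]⟩
  calc
    (c • g y) • v = g y • w := by rw [hw, smul_assoc, smul_comm]
    _ = f y • v := (h y).symm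

variable (K V) in
/-- A representation of a nontrivial transvection `x ↦ x + f x • v`: a nonzero linear form `f`
together with a nonzero vector `v` of its kernel. The transvection determines this pair only up to
scaling `f` and `v` by inverse factors. -/
@[ext]
structure TransvectionDatum where
  form : Dual K V
  vector : V
  form_ne_zero : form ≠ 0
  vector_ne_zero : vector ≠ 0
  form_vector : form vector = 0

namespace TransvectionDatum

instance : SMul Kˣ (TransvectionDatum K V) where
  smul c p :=
    { form := c • p.form
      vector := c⁻¹ • p.vector
      form_ne_zero := (smul_ne_zero_iff_ne c).mpr p.form_ne_zero
      vector_ne_zero := (smul_ne_zero_iff_ne c⁻¹).mpr p.vector_ne_zero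
      form_vector := by simp [Units.smul_def, p.form_vector] }

@[simp]
theorem form_smul (c : Kˣ) (p : TransvectionDatum K V) : (c • p).form = c • p.form :=
  rfl

@[simp]
theorem vector_smul (c : Kˣ) (p : TransvectionDatum K V) : (c • p).vector = c⁻¹ • p.vector :=
  rfl

instance : MulAction Kˣ (TransvectionDatum K V) where
  one_smul p := TransvectionDatum.ext (by simp) (by simp)
  mul_smul c d p := TransvectionDatum.ext (by simp [mul_smul])
    (by simp [mul_inv, mul_smul, -mul_inv_rev])

theorem stabilizer_eq_bot (p : TransvectionDatum K V) : MulAction.stabilizer Kˣ p = ⊥ := by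
  rw [eq_bot_iff, ← Module.stabilizer_units_eq_bot_of_ne_zero K p.form_ne_zero]
  exact fun c hc ↦ congrArg form hc

/-- The transvection `x ↦ x + f x • v` represented by the pair `(f, v)`. -/
def toLinearEquiv (p : TransvectionDatum K V) : V ≃ₗ[K] V :=
  LinearEquiv.transvection p.form_vector

@[simp]
theorem toLinearEquiv_apply (p : TransvectionDatum K V) (x : V) :
    p.toLinearEquiv x = x + p.form x • p.vector :=
  LinearEquiv.transvection.apply p.form_vector x

@[simp]
theorem toLinearEquiv_smul (c : Kˣ) (p : TransvectionDatum K V) :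
    (c • p).toLinearEquiv = p.toLinearEquiv := by
  ext x
  simp [Units.smul_def, smul_smul, mul_right_comm]

theorem orbitRel_eq_ker_toLinearEquiv :
    MulAction.orbitRel Kˣ (TransvectionDatum K V) = Setoid.ker toLinearEquiv := by
  ext p r
  rw [MulAction.orbitRel_apply, MulAction.mem_orbit_iff, Setoid.ker_def]
  constructor
  · rintro ⟨c, rfl⟩
    exact toLinearEquiv_smul c r
  · intro h
    have hpr (x : V) : p.form x • p.vector = r.form x • r.vector := by
      simpa using LinearEquiv.congr_fun h x
    obtain ⟨c, hform, hvector⟩ :=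
      exists_units_smul_eq_of_forall_smul_eq (DFunLike.coe_injective.ne p.form_ne_zero)
        p.vector_ne_zero hpr
    exact ⟨c, TransvectionDatum.ext (DFunLike.coe_injective hform) hvector⟩

theorem range_toLinearEquiv :
    Set.range (toLinearEquiv (K := K) (V := V)) = LinearEquiv.transvections K V \ {1} := by
  ext e
  constructor
  · rintro ⟨p, rfl⟩
    refine ⟨LinearEquiv.mem_transvections p.form_vector, fun h ↦ ?_⟩
    obtain ⟨x, hx⟩ := DFunLike.ne_iff.mp p.form_ne_zero
    refine smul_ne_zero hx p.vector_ne_zero ?_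
    simpa using LinearEquiv.congr_fun h x
  · rintro ⟨⟨f, v, hfv, rfl⟩, hne⟩
    refine ⟨⟨f, v, ?_, ?_, hfv⟩, rfl⟩
    · rintro rfl
      exact hne (LinearEquiv.transvection.of_left_eq_zero v)
    · rintro rfl
      exact hne (LinearEquiv.transvection.of_right_eq_zero f)

variable (K V) in
theorem natCard_eq_natCard_transvections_mul_natCard_units :
    Nat.card (TransvectionDatum K V) =
      Nat.card (LinearEquiv.transvections K V \ {1} : Set (V ≃ₗ[K] V)) * Nat.card Kˣ := by
  rw [Nat.card_congr (MulAction.selfEquivOrbitsQuotientProd stabilizer_eq_bot), Nat.card_prod,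
    orbitRel_eq_ker_toLinearEquiv, Nat.card_congr (Setoid.quotientKerEquivRange toLinearEquiv),
    range_toLinearEquiv]

variable (K V) in
/-- Transvection data fibred over their linear form, so that they can be counted form by form. -/
def equivSigmaKer :
    TransvectionDatum K V ≃ Σ f : {f : Dual K V // f ≠ 0}, {v : LinearMap.ker f.1 // v ≠ 0} where
  toFun p := ⟨⟨p.form, p.form_ne_zero⟩, ⟨p.vector, p.form_vector⟩,
    Subtype.coe_ne_coe.mp p.vector_ne_zero⟩
  invFun s := ⟨s.1.1, s.2.1, s.1.2, Subtype.coe_ne_coe.mpr s.2.2, s.2.1.2⟩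
  left_inv _ := rfl
  right_inv _ := rfl

variable (K V) in
theorem natCard_eq [Finite K] [Module.Finite K V] :
    Nat.card (TransvectionDatum K V) =
      (Nat.card K ^ finrank K V - 1) * (Nat.card K ^ (finrank K V - 1) - 1) := by
  have hker (f : {f : Dual K V // f ≠ 0}) :
      Nat.card {v : LinearMap.ker f.1 // v ≠ 0} = Nat.card K ^ (finrank K V - 1) - 1 := by
    rw [natCard_ne_zero_eq_pow_finrank_sub_one K, ← Dual.finrank_ker_add_one_of_ne_zero f.2,
      Nat.add_sub_cancel]
  have : Finite V := Module.finite_of_finite K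
  have : Finite (Dual K V) := Module.finite_of_finite K
  have := Fintype.ofFinite {f : Dual K V // f ≠ 0}
  rw [Nat.card_congr (equivSigmaKer K V), Nat.card_sigma]
  simp only [hker, Finset.sum_const, Finset.card_univ, smul_eq_mul]
  rw [← Nat.card_eq_fintype_card, natCard_ne_zero_eq_pow_finrank_sub_one K,
    Subspace.dual_finrank_eq]

end TransvectionDatum

end

theorem toMatrix'_transvection_dotProductEquiv {R ι : Type*} [CommSemiring R] [Fintype ι]
    [DecidableEq ι] (a v : ι → R) :
    LinearMap.toMatrix' (LinearMap.transvection (dotProductEquiv R ι a) v) =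
      1 + Matrix.vecMulVec v a := by
  ext i j
  simp [LinearMap.toMatrix'_apply, LinearMap.transvection.apply, Matrix.vecMulVec_apply,
    Matrix.one_apply, Pi.single_apply, mul_comm]

theorem transvections_eq_image (n : ℕ) (F : Type*) [Field F] :
    transvections n F =
      (fun e : (Fin n → F) ≃ₗ[F] (Fin n → F) ↦ LinearMap.toMatrix' e.toLinearMap) ''
        (LinearEquiv.transvections F (Fin n → F) \ {1}) := by
  rw [← TransvectionDatum.range_toLinearEquiv, ← Set.range_comp]
  let φ := dotProductEquiv F (Fin n)
  ext M
  constructor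
  · rintro ⟨a, v, ha, hv, hav, rfl⟩
    exact ⟨⟨φ a, v, φ.map_ne_zero_iff.mpr ha, hv, hav⟩,
      toMatrix'_transvection_dotProductEquiv a v⟩
  · rintro ⟨⟨f, v, hf, hv, hfv⟩, rfl⟩
    obtain ⟨a, rfl⟩ := φ.surjective f
    exact ⟨a, v, φ.map_ne_zero_iff.mp hf, hv, hfv, toMatrix'_transvection_dotProductEquiv a v⟩

theorem natCard_transvections_eq_natCard_linearEquiv (n : ℕ) (F : Type*) [Field F] :
    Nat.card (transvections n F) =
      Nat.card (LinearEquiv.transvections F (Fin n → F) \ {1} :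
        Set ((Fin n → F) ≃ₗ[F] (Fin n → F))) := by
  rw [transvections_eq_image]
  exact Nat.card_image_of_injective
    (LinearMap.toMatrix'.injective.comp LinearEquiv.toLinearMap_injective) _

theorem card_transvections_general (K V : Type*) [Field K] [Finite K] [AddCommGroup V] [Module K V]
    [Module.Finite K V] :
    (Nat.card K - 1) * Nat.card (LinearEquiv.transvections K V \ {1} : Set (V ≃ₗ[K] V)) =
      (Nat.card K ^ finrank K V - 1) * (Nat.card K ^ (finrank K V - 1) - 1) := by
  rw [← TransvectionDatum.natCard_eq,
    TransvectionDatum.natCard_eq_natCard_transvections_mul_natCard_units, Nat.card_units, mul_comm]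

/-- Let `F` be a finite field with `q` elements and `n ≥ 2`.  Then
`(q − 1) · |𝒯_{n,q}| = (qⁿ − 1)(q^{n−1} − 1)`, i.e.
`|𝒯_{n,q}| = (qⁿ − 1)(q^{n−1} − 1)/(q − 1)`. -/
theorem card_transvections
    (F : Type*) [Field F] [Fintype F] (n : ℕ) (hn : 2 ≤ n) :
    (Fintype.card F - 1) * Nat.card (transvections n F)
      = (Fintype.card F ^ n - 1) * (Fintype.card F ^ (n - 1) - 1) := by
  rw [natCard_transvections_eq_natCard_linearEquiv, ← Nat.card_eq_fintype_card,
    card_transvections_general, finrank_fin_fun]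
end

section
/- Let F be a finite field with q = |F| elements and n ≥ 2. (i) Let a, v ∈ Fⁿ be nonzero with aᵀv = 0, and suppose the index j of the last nonzero entry of v is strictly smaller than the index i of the first nonzero entry of a. Then the transvection I + v aᵀ is upper triangular with all diagonal entries equal to 1, so I + v aᵀ ∈ B. (ii) The number of transvections lying in B is |𝒯_{n,q} ∩ B| = (n − 1) q^{n−1} − [n−1]_q. -/
/-- The Borel subgroup of `GL_n(F)`, viewed as the set of invertible upper-triangular
`n × n` matrices. -/
def borelSubgroup (n : ℕ) (F : Type*) [Field F] : Set (Matrix (Fin n) (Fin n) F) :=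
  {M | M.BlockTriangular id ∧ IsUnit M.det}

/-!
Row `j` of `v aᵀ` is `v j • a`. Let `j` be the position of the last nonzero entry of `v`. If
`1 + v aᵀ` is upper triangular, then row `j` shows that `a` vanishes before `j`, whence
`aᵀ v = a j * v j`, so `aᵀ v = 0` forces `a j = 0` as well. Normalizing `v j = 1` makes the
factorization of `v aᵀ` unique, leaving `q ^ j` choices for `v` and `q ^ (n - 1 - j) - 1` choices
for `a`. The product of the two numbers is `q ^ (n - 1) - q ^ j`, and it remains to sum over `j`.
-/

lemma ncard_setOf_eqOn {ι α : Type*} [Finite ι] (s : Set ι) (c : ι → α) :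
    {x : ι → α | Set.EqOn x c s}.ncard = Nat.card α ^ sᶜ.ncard := by
  classical
  have e : {x : ι → α | Set.EqOn x c s} ≃ ({i // i ∉ s} → α) :=
    (Equiv.subtypeEquivRight fun _ => Set.domRestrict_eq_domRestrict_iff.symm).trans
      (Equiv.subtypePreimage (· ∈ s) (s.domRestrict c))
  exact (Nat.card_congr e).trans Nat.card_fun

lemma sum_fin_pow_sub_pow {R : Type*} [Ring R] (q : R) (m : ℕ) :
    ∑ j : Fin (m + 1), (q ^ m - q ^ (j : ℕ)) = m * q ^ m - ∑ k ∈ Finset.range m, q ^ k := by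
  rw [Finset.sum_sub_distrib, Finset.sum_const, Finset.card_univ, Fintype.card_fin,
    Fin.sum_univ_eq_sum_range (q ^ ·), Finset.sum_range_succ, nsmul_eq_mul, Nat.cast_add_one,
    add_one_mul, add_sub_add_right_eq_sub]

lemma exists_last_ne_zero {ι R : Type*} [LinearOrder ι] [Finite ι] [Zero R] {v : ι → R}
    (hv : v ≠ 0) : ∃ j, v j ≠ 0 ∧ Set.EqOn v 0 (Set.Ioi j) := by
  obtain ⟨j, hj⟩ := (Set.toFinite {k | v k ≠ 0}).exists_maximal (Function.ne_iff.mp hv)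
  exact ⟨j, hj.prop, fun k hk => not_not.mp (hj.not_prop_of_gt hk)⟩

section Vectors

variable {ι : Type*} [LinearOrder ι]

/-- The vectors whose last nonzero entry is a `1` in position `j`. They serve as normalized
column factors of rank one matrices. -/
def pivotVectors (R : Type*) [Zero R] [One R] (j : ι) : Set (ι → R) :=
  {w | Set.EqOn w (Pi.single j 1) (Set.Ici j)}

/-- The nonzero vectors supported strictly after position `j`. They are the row factors that make
the outer product with a vector of `pivotVectors R j` strictly upper triangular. -/
def tailVectors (R : Type*) [Zero R] (j : ι) : Set (ι → R) :=
  {b | Set.EqOn b 0 (Set.Iic j)} \ {0}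

lemma apply_self_of_mem_pivotVectors {R : Type*} [Zero R] [One R] {j : ι} {w : ι → R}
    (hw : w ∈ pivotVectors R j) : w j = 1 :=
  (hw Set.self_mem_Ici).trans (Pi.single_eq_same j 1)

lemma eqOn_zero_of_mem_pivotVectors {R : Type*} [Zero R] [One R] {j : ι} {w : ι → R}
    (hw : w ∈ pivotVectors R j) : Set.EqOn w 0 (Set.Ioi j) := fun _ hk =>
  (hw (Set.Ioi_subset_Ici_self hk)).trans (Pi.single_eq_of_ne hk.ne' 1)

lemma ncard_pivotVectors [Finite ι] (R : Type*) [Zero R] [One R] (j : ι) :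
    (pivotVectors R j).ncard = Nat.card R ^ (Set.Iio j).ncard := by
  rw [pivotVectors, ncard_setOf_eqOn, Set.compl_Ici]

lemma ncard_tailVectors [Finite ι] (R : Type*) [Zero R] (j : ι) :
    (tailVectors R j).ncard = Nat.card R ^ (Set.Ioi j).ncard - 1 := by
  have h0 : (0 : ι → R) ∈ {b | Set.EqOn b 0 (Set.Iic j)} := Set.eqOn_refl 0 _
  rw [tailVectors, Set.ncard_sdiff_singleton_of_mem h0, ncard_setOf_eqOn, Set.compl_Iic]

end Vectors

section OuterProducts

open Matrix

lemma vecMulVec_left_cancel_of_ne_zero {ι κ R : Type*} [MulZeroClass R] [IsRightCancelMulZero R]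
    {v w : ι → R} {b : κ → R} (hb : b ≠ 0) (h : vecMulVec v b = vecMulVec w b) : v = w := by
  obtain ⟨l, hl⟩ := Function.ne_iff.mp hb
  exact funext fun k => mul_right_cancel₀ hl (congrFun₂ h k l)

variable {ι κ R : Type*} [LinearOrder ι]

lemma vecMulVec_apply_of_mem_pivotVectors [MulZeroOneClass R] {j : ι} {w : ι → R}
    (hw : w ∈ pivotVectors R j) (b : κ → R) (l : κ) : vecMulVec w b j l = b l := by
  rw [vecMulVec_apply, apply_self_of_mem_pivotVectors hw, one_mul]

lemma pivot_le_of_vecMulVec_eq [MulZeroOneClass R] {i j : ι} {v w : ι → R} {a b : κ → R}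
    (hv : v ∈ pivotVectors R i) (hw : w ∈ pivotVectors R j) (hb : b ≠ 0)
    (h : vecMulVec v a = vecMulVec w b) : j ≤ i := by
  by_contra! hij
  refine hb (funext fun l => ?_)
  rw [← vecMulVec_apply_of_mem_pivotVectors hw b l, ← h, vecMulVec_apply,
    eqOn_zero_of_mem_pivotVectors hv hij, Pi.zero_apply, zero_mul, Pi.zero_apply]

lemma exists_pivotVectors_vecMulVec_eq [Finite ι] [Semifield R] {v : ι → R} (hv : v ≠ 0)
    (a : κ → R) : ∃ j, ∃ w ∈ pivotVectors R j, ∃ b, vecMulVec w b = vecMulVec v a := by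
  obtain ⟨j, hj, hlast⟩ := exists_last_ne_zero hv
  refine ⟨j, (v j)⁻¹ • v, fun k hk => ?_, v j • a, ?_⟩
  · rcases (Set.mem_Ici.mp hk).eq_or_lt with rfl | hjk
    · simp [hj]
    · simp [hlast hjk, hjk.ne']
  · rw [smul_vecMulVec, vecMulVec_smul, inv_smul_smul₀ hj]

lemma vecMulVec_apply_eq_zero_of_le [MulZeroClass R] {j k l : ι} {v a : ι → R}
    (hv : Set.EqOn v 0 (Set.Ioi j)) (ha : Set.EqOn a 0 (Set.Iic j)) (hlk : l ≤ k) :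
    vecMulVec v a k l = 0 := by
  rw [vecMulVec_apply]
  rcases le_or_gt l j with hlj | hjl
  · rw [ha hlj, Pi.zero_apply, mul_zero]
  · rw [hv (hjl.trans_le hlk), Pi.zero_apply, zero_mul]

lemma one_add_vecMulVec_isUpperTriangular [NonAssocSemiring R] {j : ι} {v a : ι → R}
    (hv : Set.EqOn v 0 (Set.Ioi j)) (ha : Set.EqOn a 0 (Set.Iic j)) :
    (1 + vecMulVec v a).IsUpperTriangular := fun k l (hlk : l < k) => by
  rw [Matrix.add_apply, one_apply_ne hlk.ne', vecMulVec_apply_eq_zero_of_le hv ha hlk.le, add_zero]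

lemma one_add_vecMulVec_apply_self [NonAssocSemiring R] {j : ι} {v a : ι → R}
    (hv : Set.EqOn v 0 (Set.Ioi j)) (ha : Set.EqOn a 0 (Set.Iic j)) (k : ι) :
    (1 + vecMulVec v a) k k = 1 := by
  rw [Matrix.add_apply, one_apply_eq, vecMulVec_apply_eq_zero_of_le hv ha le_rfl, add_zero]

variable [Fintype ι]

lemma trace_vecMulVec_of_mem_pivotVectors [NonAssocSemiring R] {j : ι} {w b : ι → R}
    (hw : w ∈ pivotVectors R j) (hb : Set.EqOn b 0 (Set.Iio j)) :
    (vecMulVec w b).trace = b j := by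
  rw [trace, Finset.sum_eq_single_of_mem j (Finset.mem_univ j), diag_apply,
    vecMulVec_apply_of_mem_pivotVectors hw]
  intro k _ hkj
  rw [diag_apply, vecMulVec_apply]
  rcases hkj.lt_or_gt with hlt | hgt
  · rw [hb hlt, Pi.zero_apply, mul_zero]
  · rw [eqOn_zero_of_mem_pivotVectors hw hgt, Pi.zero_apply, zero_mul]

lemma eqOn_Iic_zero_of_isUpperTriangular [NonAssocSemiring R] {j : ι} {w b : ι → R}
    (hw : w ∈ pivotVectors R j) (hT : (1 + vecMulVec w b).IsUpperTriangular)
    (htr : (vecMulVec w b).trace = 0) : Set.EqOn b 0 (Set.Iic j) := by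
  have before : Set.EqOn b 0 (Set.Iio j) := fun k (hk : k < j) => by
    have hjk : (1 + vecMulVec w b) j k = 0 := hT hk
    rwa [Matrix.add_apply, one_apply_ne hk.ne', zero_add,
      vecMulVec_apply_of_mem_pivotVectors hw] at hjk
  intro k hk
  rcases (Set.mem_Iic.mp hk).lt_or_eq with hlt | rfl
  · exact before hlt
  · rw [← trace_vecMulVec_of_mem_pivotVectors hw before, htr, Pi.zero_apply]

end OuterProducts

section Parametrization

open Matrix

variable {ι R : Type*} [LinearOrder ι]

/-- The upper triangular transvection `1 + w bᵀ` attached to a position `j`, a vector `w` whose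
last nonzero entry is a `1` in position `j`, and a nonzero vector `b` supported after `j`. -/
def pivotTransvection [NonAssocSemiring R]
    (p : Σ j : ι, pivotVectors R j × tailVectors R j) : Matrix ι ι R :=
  1 + vecMulVec p.2.1 p.2.2

lemma pivotTransvection_injective [Ring R] [IsRightCancelMulZero R] :
    Function.Injective (pivotTransvection (ι := ι) (R := R)) := by
  rintro ⟨i, ⟨v, hv⟩, a, ha⟩ ⟨j, ⟨w, hw⟩, b, hb⟩ h
  have hprod : vecMulVec v a = vecMulVec w b := add_left_cancel h
  obtain rfl : i = j := le_antisymm (pivot_le_of_vecMulVec_eq hw hv ha.2 hprod.symm)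
    (pivot_le_of_vecMulVec_eq hv hw hb.2 hprod)
  obtain rfl : a = b := by
    ext l
    rw [← vecMulVec_apply_of_mem_pivotVectors hv a l, hprod, vecMulVec_apply_of_mem_pivotVectors hw]
  obtain rfl : v = w := vecMulVec_left_cancel_of_ne_zero ha.2 hprod
  rfl

end Parametrization

section Counting

open Matrix

variable {F : Type*} [Field F] {n : ℕ}

lemma one_add_vecMulVec_mem_borelSubgroup {j : Fin n} {v a : Fin n → F}
    (hv : Set.EqOn v 0 (Set.Ioi j)) (ha : Set.EqOn a 0 (Set.Iic j)) :
    1 + vecMulVec v a ∈ borelSubgroup n F := by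
  have hT := one_add_vecMulVec_isUpperTriangular hv ha
  refine ⟨hT, ?_⟩
  simp only [det_of_isUpperTriangular hT, one_add_vecMulVec_apply_self hv ha,
    Finset.prod_const_one, isUnit_one]

lemma range_pivotTransvection :
    Set.range (pivotTransvection (ι := Fin n) (R := F)) =
      transvections n F ∩ borelSubgroup n F := by
  apply Set.Subset.antisymm
  · rintro _ ⟨⟨j, ⟨w, hw⟩, b, hb, hb0⟩, rfl⟩
    have hw' := eqOn_zero_of_mem_pivotVectors hw
    have hw0 : w ≠ 0 := fun h => by simpa [h] using apply_self_of_mem_pivotVectors hw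
    have hbw : ∑ k, b k * w k = 0 := Finset.sum_eq_zero fun k _ =>
      (mul_comm _ _).trans (vecMulVec_apply_eq_zero_of_le hw' hb le_rfl)
    exact ⟨⟨b, w, hb0, hw0, hbw, rfl⟩, one_add_vecMulVec_mem_borelSubgroup hw' hb⟩
  · rintro _ ⟨⟨a, v, ha, hv, hav, rfl⟩, hT, -⟩
    obtain ⟨j, w, hw, b, hwb⟩ := exists_pivotVectors_vecMulVec_eq hv a
    have htr : (vecMulVec w b).trace = 0 := by
      rw [hwb, trace_vecMulVec, dotProduct_comm]
      exact hav
    have hb0 : b ≠ 0 := by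
      rintro rfl
      exact vecMulVec_ne_zero hv ha (hwb.symm.trans (vecMulVec_zero w))
    have hb := eqOn_Iic_zero_of_isUpperTriangular hw (hwb ▸ hT) htr
    exact ⟨⟨j, ⟨w, hw⟩, b, hb, hb0⟩, congrArg (1 + ·) hwb⟩

lemma natCard_transvections_inter_borelSubgroup [Finite F] :
    Nat.card ↥(transvections n F ∩ borelSubgroup n F) =
      ∑ j : Fin n, (Nat.card F ^ (n - 1) - Nat.card F ^ (j : ℕ)) := by
  rw [← range_pivotTransvection, Nat.card_range_of_injective pivotTransvection_injective,
    Nat.card_sigma]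
  refine Finset.sum_congr rfl fun j _ => ?_
  have hIio : (Set.Iio j).ncard = j := by
    rw [← Finset.coe_Iio, Set.ncard_coe_finset, Fin.card_Iio]
  have hIoi : (Set.Ioi j).ncard = n - 1 - j := by
    rw [← Finset.coe_Ioi, Set.ncard_coe_finset, Fin.card_Ioi]
  rw [Nat.card_prod, Nat.card_coe_set_eq, Nat.card_coe_set_eq, ncard_pivotVectors,
    ncard_tailVectors, hIio, hIoi, Nat.mul_sub, mul_one, ← pow_add,
    Nat.add_sub_cancel' (Nat.le_sub_one_of_lt j.isLt)]

end Counting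

/-- Let `F` be a finite field with `q` elements and `n ≥ 2`.
(i) If `a, v` are nonzero with `aᵀv = 0` and the index `j` of the last nonzero entry of `v`
is strictly smaller than the index `i` of the first nonzero entry of `a`, then `I + v aᵀ`
is upper triangular with all diagonal entries `1`, so it lies in the Borel subgroup `B`.
(ii) The number of transvections lying in `B` is `(n − 1) q^{n−1} − [n−1]_q`. -/
theorem transvections_in_borel
    (F : Type*) [Field F] [Fintype F] (n : ℕ) (hn : 2 ≤ n) :
    (∀ a v : Fin n → F, ∀ i j : Fin n, (∑ k, a k * v k) = 0 →
      a i ≠ 0 → (∀ k, k < i → a k = 0) → v j ≠ 0 → (∀ k, j < k → v k = 0) → j < i →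
      ((1 + Matrix.vecMulVec v a).BlockTriangular id ∧
        (∀ k, (1 + Matrix.vecMulVec v a) k k = 1) ∧
        (1 + Matrix.vecMulVec v a) ∈ borelSubgroup n F)) ∧
    (Nat.card ↥(transvections n F ∩ borelSubgroup n F) : ℤ)
      = ((n : ℤ) - 1) * (Fintype.card F : ℤ) ^ (n - 1)
        - ∑ k ∈ Finset.range (n - 1), (Fintype.card F : ℤ) ^ k := by
  refine ⟨fun a v i j _ _ ha _ hv hji => ?_, ?_⟩
  · have ha' : Set.EqOn a 0 (Set.Iic j) := fun k hk => ha k (lt_of_le_of_lt hk hji)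
    exact ⟨one_add_vecMulVec_isUpperTriangular hv ha', one_add_vecMulVec_apply_self hv ha',
      one_add_vecMulVec_mem_borelSubgroup hv ha'⟩
  · obtain ⟨m, rfl⟩ : ∃ m, n = m + 1 := Nat.exists_eq_add_one.mpr (by omega)
    have hle (j : Fin (m + 1)) : Fintype.card F ^ (j : ℕ) ≤ Fintype.card F ^ m :=
      Nat.pow_le_pow_right Fintype.card_pos j.is_le
    simp only [natCard_transvections_inter_borelSubgroup, Nat.card_eq_fintype_card,
      Nat.add_sub_cancel, Nat.cast_sum, Nat.cast_sub (hle _), Nat.cast_pow, sum_fin_pow_sub_pow,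
      Nat.cast_add_one, add_sub_cancel_right]
end

section
/- Let F be a finite field with q = |F| elements, n ≥ 2, and suppose log(q) > 6/n. For any c > 0 and any integer ℓ ≥ (log(n) + c)/(log(q) − 6/n), the lumped transvection chain P on S_n satisfies ∑_{x ∈ S_n} π_q(x) · χ²_x(ℓ) ≤ (e^{e^{−c}} − 1) + e^{−2c}. -/
/-- The Bruhat double coset `B ω B` associated to the permutation `ω ∈ S_n`. -/
def bruhatCell (n : ℕ) (F : Type*) [Field F] (ω : Equiv.Perm (Fin n)) :
    Set (Matrix (Fin n) (Fin n) F) :=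
  {M | ∃ b₁ ∈ borelSubgroup n F, ∃ b₂ ∈ borelSubgroup n F, M = b₁ * ω.permMatrix F * b₂}

/-- `I(ω)`: the number of inversions of the permutation `ω ∈ S_n`. -/
def inversions (n : ℕ) (ω : Equiv.Perm (Fin n)) : ℕ :=
  (Finset.univ.filter fun p : Fin n × Fin n => p.1 < p.2 ∧ ω p.2 < ω p.1).card

/-- `[n]_q! = [1]_q [2]_q ⋯ [n]_q` where `[m]_q = 1 + q + ⋯ + q^{m−1}`. -/
def qFactorial (q n : ℕ) : ℕ :=
  ∏ k ∈ Finset.range n, ∑ i ∈ Finset.range (k + 1), q ^ i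

/-- The Mallows measure `π_q(σ) = q^{I(σ)}/[n]_q!` on `S_n`. -/
noncomputable def mallows (q n : ℕ) (σ : Equiv.Perm (Fin n)) : ℝ :=
  (q : ℝ) ^ inversions n σ / (qFactorial q n : ℝ)

/-- The transition matrix of the lumped transvection chain on `S_n`:
`P(σ, τ) = |{T ∈ 𝒯 : Tσ ∈ BτB}| / |𝒯|`. -/
noncomputable def transChain (n : ℕ) (F : Type*) [Field F] [Fintype F] :
    Matrix (Equiv.Perm (Fin n)) (Equiv.Perm (Fin n)) ℝ :=
  Matrix.of fun σ τ =>
    (Nat.card {T | T ∈ transvections n F ∧ T * σ.permMatrix F ∈ bruhatCell n F τ} : ℝ)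
      / (Nat.card (transvections n F) : ℝ)

/-- The chi-square distance to stationarity after `ℓ` steps, started from `x ∈ S_n`:
`χ²_x(ℓ) = ∑_τ (P^ℓ(x,τ) − π_q(τ))² / π_q(τ)`. -/
noncomputable def chiSq (n : ℕ) (F : Type*) [Field F] [Fintype F] (ℓ : ℕ)
    (x : Equiv.Perm (Fin n)) : ℝ :=
  ∑ τ : Equiv.Perm (Fin n),
    ((transChain n F ^ ℓ) x τ - mallows (Fintype.card F) n τ) ^ 2
      / mallows (Fintype.card F) n τ

/-! Let `s = √q`. Conjugated by the diagonal matrix with entries `s ^ I(σ)`, the lumped transvection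
chain becomes an affine function of the sum of the Jucys–Murphy elements `L_k` of the Hecke algebra
`H_n(q)` acting on its regular representation. The operator obtained is symmetric and the average
chi-square distance after `ℓ` steps is the trace of its `2ℓ`-th power, minus one.

The joint eigenvalues of the `L_k` are words `q ^ c_k`, where `c` behaves like the content sequence
of a standard Young tableau: the positions at which a new maximal content `0, 1, 2, …` first occurs
play the role of the first row. Intertwiners move the `m` first-row positions to the front, onto
vectors on which the first `m - 1` generators act by `q`, so the joint eigenspaces of a given `m`
have total dimension at most `C(n, m) · n! / m! ≤ n ^ (2j) / j!`, where `j = n - m`. If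
`ℓ ≥ (log n + b) / (log q - 6 / n)`, then the `2ℓ`-th power has eigenvalues at most
`e ^ (-2bj) / n ^ (2j)` on them, and summing over `j` gives the exponential series of
`e ^ (-2b)`. -/

namespace TransvectionChain

section JucysMurphy

variable {K A : Type*} [Field K] [Ring A] [Algebra K A] {T : ℕ → A}

/-- The relations of the braid monoid, for a family of elements of a ring. -/
structure IsBraidFamily (T : ℕ → A) : Prop where
  commute : ∀ i j, i + 1 < j → Commute (T i) (T j)
  braid : ∀ i, T i * T (i + 1) * T i = T (i + 1) * T i * T (i + 1)

/-- The multiplicative Jucys–Murphy elements `L₀ = 1`, `L_{k+1} = q⁻¹ T_k L_k T_k` attached to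
generators `T_k` of a Hecke algebra with parameter `q`. -/
def jucysMurphy (q : K) (T : ℕ → A) : ℕ → A
  | 0 => 1
  | k + 1 => q⁻¹ • (T k * jucysMurphy q T k * T k)

namespace IsBraidFamily

theorem commute_jucysMurphy_of_lt (hT : IsBraidFamily T) (q : K) {i j : ℕ} (hij : i < j) :
    Commute (T j) (jucysMurphy q T i) := by
  induction i with
  | zero => exact Commute.one_right _
  | succ i ih =>
    have hcomm := (hT.commute i j hij).symm
    exact ((hcomm.mul_right (ih (by omega))).mul_right hcomm).smul_right q⁻¹

theorem commute_jucysMurphy_add_two (hT : IsBraidFamily T) (q : K) (i : ℕ) :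
    Commute (T i) (jucysMurphy q T (i + 2)) := by
  have hL : T (i + 1) * jucysMurphy q T i = jucysMurphy q T i * T (i + 1) :=
    hT.commute_jucysMurphy_of_lt q (Nat.lt_succ_self i)
  have hbraid := hT.braid i
  simp only [jucysMurphy, mul_smul_comm, smul_mul_assoc]
  refine (Commute.smul_right ?_ _).smul_right _
  generalize jucysMurphy q T i = L at *
  generalize T i = x at *
  generalize T (i + 1) = y at *
  calc x * (y * (x * L * x) * y) = (x * y * x) * L * x * y := by noncomm_ring
    _ = y * x * (y * L) * x * y := by rw [hbraid]; noncomm_ring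
    _ = y * x * L * (y * x * y) := by rw [hL]; noncomm_ring
    _ = y * (x * L * x) * y * x := by rw [← hbraid]; noncomm_ring

theorem commute_jucysMurphy_of_gt (hT : IsBraidFamily T) (q : K) {i j : ℕ} (hij : i + 1 < j) :
    Commute (T i) (jucysMurphy q T j) := by
  induction j, hij using Nat.le_induction with
  | base => exact hT.commute_jucysMurphy_add_two q i
  | succ j hij ih =>
    have hcomm := hT.commute i j hij
    exact ((hcomm.mul_right ih).mul_right hcomm).smul_right q⁻¹

theorem commute_jucysMurphy_jucysMurphy (hT : IsBraidFamily T) (q : K) (i j : ℕ) :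
    Commute (jucysMurphy q T i) (jucysMurphy q T j) := by
  wlog hij : i < j generalizing i j
  · obtain rfl | hji := (not_lt.mp hij).eq_or_lt
    · exact Commute.refl _
    · exact (this j i hji).symm
  induction i with
  | zero => exact Commute.one_left _
  | succ i ih =>
    have hcomm := hT.commute_jucysMurphy_of_gt q hij
    exact ((hcomm.mul_left (ih (by omega))).mul_left hcomm).smul_left q⁻¹

end IsBraidFamily

end JucysMurphy

section AffineHecke

/-- The relations between a generator `T` of a Hecke algebra with parameter `q` and two consecutive
Jucys–Murphy elements `L`, `L'`, for operators on a vector space. -/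
structure IsAffineHeckeTriple {K V : Type*} [Field K] [AddCommGroup V] [Module K V] (q : K)
    (T L L' : Module.End K V) : Prop where
  sq : T * T = (q - 1) • T + q • 1
  next_eq : L' = q⁻¹ • (T * L * T)

namespace IsAffineHeckeTriple

section Field

variable {K V : Type*} [Field K] [AddCommGroup V] [Module K V]
  {T L L' : Module.End K V} {q a b : K} {v : V}

theorem apply_apply (h : IsAffineHeckeTriple q T L L') (v : V) :
    T (T v) = (q - 1) • T v + q • v :=
  LinearMap.congr_fun h.sq v

theorem injective (h : IsAffineHeckeTriple q T L L') (hq : q ≠ 0) : Function.Injective T := by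
  rw [injective_iff_map_eq_zero]
  intro v hv
  have hsq := h.apply_apply v
  simp only [hv, map_zero, smul_zero, zero_add] at hsq
  exact (smul_eq_zero.mp hsq.symm).resolve_left hq

theorem next_apply (h : IsAffineHeckeTriple q T L L') (hq : q ≠ 0) (ha : L v = a • v)
    (hb : L' v = b • v) : L' (T v) = a • T v + ((q - 1) * b) • v := by
  have hcomm : L' (T v) = (q - 1) • L' v + T (L v) := by
    simp only [h.next_eq, LinearMap.smul_apply, Module.End.mul_apply, h.apply_apply, map_add,
      map_smul]
    match_scalars <;> field_simp
  rw [hcomm, ha, hb, map_smul]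
  module

theorem prev_apply (h : IsAffineHeckeTriple q T L L') (hq : q ≠ 0) (hb : L' v = b • v) :
    L (T v) = b • T v - ((q - 1) * b) • v := by
  have hcomm : T (L' v) = (q - 1) • L' v + L (T v) := by
    simp only [h.next_eq, LinearMap.smul_apply, Module.End.mul_apply, map_smul, h.apply_apply]
    match_scalars <;> field_simp
  rw [hb, map_smul] at hcomm
  rw [eq_sub_iff_add_eq, hcomm]
  module

theorem prev_apply_intertwiner (h : IsAffineHeckeTriple q T L L') (hq : q ≠ 0) (hab : a ≠ b)
    (ha : L v = a • v) (hb : L' v = b • v) :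
    L (T v - ((q - 1) * b / (b - a)) • v) = b • (T v - ((q - 1) * b / (b - a)) • v) := by
  have : b - a ≠ 0 := sub_ne_zero.mpr hab.symm
  rw [map_sub, map_smul, ha, h.prev_apply hq hb]
  match_scalars
  · rfl
  · field_simp
    ring

theorem next_apply_intertwiner (h : IsAffineHeckeTriple q T L L') (hq : q ≠ 0) (hab : a ≠ b)
    (ha : L v = a • v) (hb : L' v = b • v) :
    L' (T v - ((q - 1) * b / (b - a)) • v) = a • (T v - ((q - 1) * b / (b - a)) • v) := by
  have : b - a ≠ 0 := sub_ne_zero.mpr hab.symm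
  rw [map_sub, map_smul, hb, h.next_apply hq ha hb]
  match_scalars
  · rfl
  · field_simp
    ring

theorem eq_mul_or_eq_mul_of_intertwiner_eq_zero (h : IsAffineHeckeTriple q T L L') (hab : a ≠ b)
    (hv : v ≠ 0) (hTv : T v - ((q - 1) * b / (b - a)) • v = 0) : b = q * a ∨ a = q * b := by
  have hba : b - a ≠ 0 := sub_ne_zero.mpr hab.symm
  have hsq := h.apply_apply v
  rw [sub_eq_zero.mp hTv, map_smul, sub_eq_zero.mp hTv, smul_smul, smul_smul, ← add_smul] at hsq
  have hscalar := smul_left_injective K hv hsq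
  field_simp at hscalar
  have hfactor : (b - q * a) * (a - q * b) = 0 := by linear_combination hscalar
  exact (mul_eq_zero.mp hfactor).imp sub_eq_zero.mp sub_eq_zero.mp

end Field

section InnerProductSpace

variable {E : Type*} [NormedAddCommGroup E] [InnerProductSpace ℝ E]
  {T L L' : Module.End ℝ E} {q a b : ℝ} {v : E}

theorem eigenvalue_ne (h : IsAffineHeckeTriple q T L L') (hq : q ≠ 0) (hq' : q ≠ 1)
    (hL' : L'.IsSymmetric) (ha0 : a ≠ 0) (hv : v ≠ 0) (ha : L v = a • v) (hb : L' v = b • v) :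
    a ≠ b := by
  rintro rfl
  have hsymm := hL' (T v) v
  rw [h.next_apply hq ha hb, hb, inner_add_left, inner_smul_left, inner_smul_left,
    inner_smul_right] at hsymm
  have hzero : (q - 1) * a * inner ℝ v v = 0 := by simpa using hsymm
  simp [sub_eq_zero, hq', ha0, hv] at hzero

/-- When `κ` is a root of the quadratic relation of `T`, the intertwiner `θ = T v - κ v` satisfies
`T θ = (q - 1 - κ) θ`. As `θ` is orthogonal to `v`, so is `T θ`, whence `⟪θ, θ⟫ = ⟪v, T θ⟫ = 0`. -/
theorem apply_eq_smul (h : IsAffineHeckeTriple q T L L') (hq : q ≠ 0) (hT : T.IsSymmetric)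
    (hL : L.IsSymmetric) (hab : a ≠ b) (ha : L v = a • v) (hb : L' v = b • v) {κ : ℝ}
    (hκ : κ = (q - 1) * b / (b - a)) (hκ_sq : κ * κ = (q - 1) * κ + q) : T v = κ • v := by
  have hLθ := h.prev_apply_intertwiner hq hab ha hb
  rw [← hκ] at hLθ
  set θ := T v - κ • v with hθ
  have horth : inner ℝ v θ = 0 := by
    have hsymm := hL v θ
    rw [ha, hLθ, inner_smul_left, inner_smul_right, conj_trivial] at hsymm
    exact (mul_eq_mul_right_iff.mp hsymm).resolve_left hab
  have hTθ : T θ = (q - 1 - κ) • θ := by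
    rw [hθ, map_sub, map_smul, h.apply_apply]
    match_scalars
    · ring
    · linear_combination -hκ_sq
  have hθ_zero : inner ℝ θ θ = 0 := by
    calc inner ℝ θ θ = inner ℝ (T v) θ - κ * inner ℝ v θ := by
          conv_lhs => enter [2]; rw [hθ]
          rw [inner_sub_left, inner_smul_left, conj_trivial]
      _ = inner ℝ v (T θ) := by rw [hT v θ, horth]; ring
      _ = 0 := by rw [hTθ, inner_smul_right, horth, mul_zero]
  exact sub_eq_zero.mp (inner_self_eq_zero.mp hθ_zero)

end InnerProductSpace

end IsAffineHeckeTriple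

end AffineHecke

section HeckeRep

open Equiv

variable {E : Type*} [NormedAddCommGroup E] [InnerProductSpace ℝ E]
  {n : ℕ} {q : ℝ} {T : ℕ → Module.End ℝ E} {w : Fin n → ℝ} {i j k : Fin n}

/-- A representation of the Hecke algebra `H_n(q)` by symmetric operators. Only the generators
`T k` with `k + 1 < n` are meaningful; the braid relations then allow, e.g., `T k = 0` for the
others. -/
structure IsHeckeRep (n : ℕ) (q : ℝ) (T : ℕ → Module.End ℝ E) : Prop extends
    IsBraidFamily T where
  sq : ∀ k, k + 1 < n → T k * T k = (q - 1) • T k + q • 1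
  isSymmetric : ∀ k, (T k).IsSymmetric

/-- The simultaneous eigenspace of the Jucys–Murphy operators with eigenvalues `w`. -/
noncomputable def jmSpace (n : ℕ) (q : ℝ) (T : ℕ → Module.End ℝ E) (w : Fin n → ℝ) :
    Submodule ℝ E :=
  ⨅ k : Fin n, Module.End.eigenspace (jucysMurphy q T k) (w k)

theorem mem_jmSpace {v : E} :
    v ∈ jmSpace n q T w ↔ ∀ k : Fin n, jucysMurphy q T k v = w k • v := by
  simp [jmSpace, Submodule.mem_iInf]

theorem jmSpace_apply_zero (hw : jmSpace n q T w ≠ ⊥) (hi : (i : ℕ) = 0) : w i = 1 := by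
  obtain ⟨v, hv, hv0⟩ := Submodule.exists_mem_ne_zero_of_ne_bot hw
  have hone : (1 : ℝ) • v = w i • v := by
    rw [← mem_jmSpace.mp hv i, hi, one_smul]
    rfl
  exact (smul_left_injective ℝ hv0 hone).symm

namespace IsHeckeRep

theorem isAffineHeckeTriple (hT : IsHeckeRep n q T) (hij : (i : ℕ) + 1 = j) :
    IsAffineHeckeTriple q (T i) (jucysMurphy q T i) (jucysMurphy q T j) where
  sq := hT.sq i (by omega)
  next_eq := by rw [← hij, jucysMurphy]

theorem jucysMurphy_isSymmetric (hT : IsHeckeRep n q T) (k : ℕ) :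
    (jucysMurphy q T k).IsSymmetric := by
  induction k with
  | zero => exact LinearMap.IsSymmetric.one
  | succ k ih =>
    refine LinearMap.IsSymmetric.smul (conj_trivial _) fun x y => ?_
    simp only [Module.End.mul_apply]
    rw [hT.isSymmetric k, ih, hT.isSymmetric k]

theorem jucysMurphy_injective (hT : IsHeckeRep n q T) (hq : q ≠ 0) (k : Fin n) :
    Function.Injective ⇑(jucysMurphy q T k) := by
  obtain ⟨k, hk⟩ := k
  induction k with
  | zero => exact Function.injective_id
  | succ k ih =>
    have hTk : Function.Injective (T k) :=
      (hT.isAffineHeckeTriple (i := ⟨k, by omega⟩) (j := ⟨k + 1, hk⟩) rfl).injective hq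
    exact (smul_right_injective E (inv_ne_zero hq)).comp
      ((hTk.comp (ih (by omega))).comp hTk)

theorem commute_jucysMurphy_of_ne (hT : IsHeckeRep n q T) {i k : ℕ} (hki : k ≠ i)
    (hki' : k ≠ i + 1) : Commute (T i) (jucysMurphy q T k) := by
  obtain hlt | hgt : k < i ∨ i + 1 < k := by omega
  · exact hT.commute_jucysMurphy_of_lt q hlt
  · exact hT.commute_jucysMurphy_of_gt q hgt

theorem jmSpace_apply_ne_zero (hT : IsHeckeRep n q T) (hq : q ≠ 0) (hw : jmSpace n q T w ≠ ⊥)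
    (k : Fin n) : w k ≠ 0 := by
  obtain ⟨v, hv, hv0⟩ := Submodule.exists_mem_ne_zero_of_ne_bot hw
  intro hk
  have hker := mem_jmSpace.mp hv k
  rw [hk, zero_smul] at hker
  exact hv0 (hT.jucysMurphy_injective hq k (hker.trans (map_zero _).symm))

theorem jmSpace_apply_ne_next (hT : IsHeckeRep n q T) (hq : 1 < q) (hw : jmSpace n q T w ≠ ⊥)
    (hij : (i : ℕ) + 1 = j) : w i ≠ w j := by
  have hq0 : q ≠ 0 := by positivity
  obtain ⟨v, hv, hv0⟩ := Submodule.exists_mem_ne_zero_of_ne_bot hw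
  exact (hT.isAffineHeckeTriple hij).eigenvalue_ne hq0 hq.ne' (hT.jucysMurphy_isSymmetric j)
    (hT.jmSpace_apply_ne_zero hq0 hw i) hv0 (mem_jmSpace.mp hv i) (mem_jmSpace.mp hv j)

theorem intertwiner_mem_jmSpace (hT : IsHeckeRep n q T) (hq : q ≠ 0) (hij : (i : ℕ) + 1 = j)
    (hw : w i ≠ w j) {v : E} (hv : v ∈ jmSpace n q T w) :
    T i v - ((q - 1) * w j / (w j - w i)) • v ∈ jmSpace n q T (w ∘ swap i j) := by
  rw [mem_jmSpace] at hv ⊢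
  intro k
  rw [Function.comp_apply]
  obtain rfl | hki := eq_or_ne k i
  · rw [swap_apply_left]
    exact (hT.isAffineHeckeTriple hij).prev_apply_intertwiner hq hw (hv k) (hv j)
  obtain rfl | hkj := eq_or_ne k j
  · rw [swap_apply_right]
    exact (hT.isAffineHeckeTriple hij).next_apply_intertwiner hq hw (hv i) (hv k)
  have hcomm : jucysMurphy q T k (T i v) = T i (jucysMurphy q T k v) :=
    LinearMap.congr_fun (hT.commute_jucysMurphy_of_ne (Fin.val_ne_of_ne hki)
      (hij ▸ Fin.val_ne_of_ne hkj)).eq.symm v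
  rw [swap_apply_of_ne_of_ne hki hkj, map_sub, map_smul, hv k, hcomm, hv k, map_smul]
  module

theorem finrank_jmSpace_le_swap [FiniteDimensional ℝ E] (hT : IsHeckeRep n q T) (hq : 1 < q)
    (hij : (i : ℕ) + 1 = j) (hji : w j ≠ q * w i) (hji' : w i ≠ q * w j) :
    Module.finrank ℝ (jmSpace n q T w) ≤ Module.finrank ℝ (jmSpace n q T (w ∘ swap i j)) := by
  by_cases hbot : jmSpace n q T w = ⊥
  · rw [hbot, finrank_bot]
    exact Nat.zero_le _
  have hw := hT.jmSpace_apply_ne_next hq hbot hij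
  let θ : jmSpace n q T w →ₗ[ℝ] jmSpace n q T (w ∘ swap i j) :=
    LinearMap.restrict (T i - ((q - 1) * w j / (w j - w i)) • 1) fun v hv =>
      hT.intertwiner_mem_jmSpace (by positivity) hij hw hv
  refine LinearMap.finrank_le_finrank_of_injective (f := θ) ?_
  rw [injective_iff_map_eq_zero]
  intro v hv
  by_contra hv0
  obtain h | h := (hT.isAffineHeckeTriple hij).eq_mul_or_eq_mul_of_intertwiner_eq_zero hw
    (fun h => hv0 (Subtype.ext h)) (congrArg Subtype.val hv)
  exacts [hji h, hji' h]

theorem jmSpace_swap_ne_bot [FiniteDimensional ℝ E] (hT : IsHeckeRep n q T) (hq : 1 < q)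
    (hij : (i : ℕ) + 1 = j) (hw : jmSpace n q T w ≠ ⊥) (hji : w j ≠ q * w i)
    (hji' : w i ≠ q * w j) : jmSpace n q T (w ∘ swap i j) ≠ ⊥ := by
  intro hbot
  have hle := hT.finrank_jmSpace_le_swap hq hij hji hji'
  rw [hbot, finrank_bot, Nat.le_zero, Submodule.finrank_eq_zero] at hle
  exact hw hle

theorem apply_of_next_eq (hT : IsHeckeRep n q T) (hq : 1 < q) (hij : (i : ℕ) + 1 = j)
    (hw : w j = q * w i) {v : E} (hv : v ∈ jmSpace n q T w) : T i v = q • v := by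
  obtain rfl | hv0 := eq_or_ne v 0
  · simp
  have hbot : jmSpace n q T w ≠ ⊥ := Submodule.ne_bot_iff _ |>.mpr ⟨v, hv, hv0⟩
  have hq0 : q ≠ 0 := by positivity
  have hwi := hT.jmSpace_apply_ne_zero hq0 hbot i
  have hq1 : q - 1 ≠ 0 := sub_ne_zero.mpr hq.ne'
  refine (hT.isAffineHeckeTriple hij).apply_eq_smul hq0 (hT.isSymmetric i)
    (hT.jucysMurphy_isSymmetric i) (hT.jmSpace_apply_ne_next hq hbot hij)
    (mem_jmSpace.mp hv i) (mem_jmSpace.mp hv j) ?_ (by ring)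
  rw [hw, ← sub_one_mul]
  field_simp

theorem apply_of_eq_next (hT : IsHeckeRep n q T) (hq : 1 < q) (hij : (i : ℕ) + 1 = j)
    (hw : w i = q * w j) {v : E} (hv : v ∈ jmSpace n q T w) : T i v = (-1 : ℝ) • v := by
  obtain rfl | hv0 := eq_or_ne v 0
  · simp
  have hbot : jmSpace n q T w ≠ ⊥ := Submodule.ne_bot_iff _ |>.mpr ⟨v, hv, hv0⟩
  have hq0 : q ≠ 0 := by positivity
  have hwj := hT.jmSpace_apply_ne_zero hq0 hbot j
  have hq1 : 1 - q ≠ 0 := sub_ne_zero.mpr hq.ne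
  refine (hT.isAffineHeckeTriple hij).apply_eq_smul hq0 (hT.isSymmetric i)
    (hT.jucysMurphy_isSymmetric i) (hT.jmSpace_apply_ne_next hq hbot hij)
    (mem_jmSpace.mp hv i) (mem_jmSpace.mp hv j) ?_ (by ring)
  rw [hw, ← one_sub_mul]
  field_simp
  ring

/-- On a weight vector of weights `…, a, qa, a, …` the two generators would act by `q` and `-1`,
contradicting the braid relation. -/
theorem not_next_eq_of_apply_eq (hT : IsHeckeRep n q T) (hq : 1 < q) (hw : jmSpace n q T w ≠ ⊥)
    (hij : (i : ℕ) + 1 = j) (hjk : (j : ℕ) + 1 = k) (hik : w i = w k) :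
    w j ≠ q * w i ∧ w i ≠ q * w j := by
  obtain ⟨v, hv, hv0⟩ := Submodule.exists_mem_ne_zero_of_ne_bot hw
  have hbraid := LinearMap.congr_fun (hT.braid i) v
  rw [hij] at hbraid
  simp only [Module.End.mul_apply] at hbraid
  constructor <;> intro h
  · have hi := hT.apply_of_next_eq hq hij h hv
    have hj := hT.apply_of_eq_next hq hjk (hik ▸ h) hv
    simp only [hi, hj, map_smul, smul_smul] at hbraid
    nlinarith [smul_left_injective ℝ hv0 hbraid]
  · have hi := hT.apply_of_eq_next hq hij h hv
    have hj := hT.apply_of_next_eq hq hjk (hik ▸ h) hv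
    simp only [hi, hj, map_smul, smul_smul] at hbraid
    nlinarith [smul_left_injective ℝ hv0 hbraid]

theorem exists_lt_adjacent [FiniteDimensional ℝ E] (hT : IsHeckeRep n q T) (hq : 1 < q)
    (hw : jmSpace n q T w ≠ ⊥) (hk : (k : ℕ) ≠ 0) :
    ∃ i < k, w k = q * w i ∨ w i = q * w k := by
  obtain ⟨k, hkn⟩ := k
  obtain ⟨k, rfl⟩ := Nat.exists_eq_succ_of_ne_zero hk
  induction k generalizing w with
  | zero =>
    let i : Fin n := ⟨0, by omega⟩
    by_contra! hc
    obtain ⟨h, h'⟩ := hc i Nat.zero_lt_one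
    have hone := jmSpace_apply_zero (i := i) (hT.jmSpace_swap_ne_bot hq rfl hw h h') rfl
    rw [Function.comp_apply, swap_apply_left] at hone
    exact hT.jmSpace_apply_ne_next hq hw rfl ((jmSpace_apply_zero (i := i) hw rfl).trans hone.symm)
  | succ k ih =>
    let j : Fin n := ⟨k + 1, by omega⟩
    by_contra! hc
    obtain ⟨h, h'⟩ := hc j (Nat.lt_succ_self (k + 1))
    obtain ⟨i, hij, hi⟩ := ih (hT.jmSpace_swap_ne_bot hq rfl hw h h') j.2 (Nat.succ_ne_zero k)
    have hik : i < ⟨k + 1 + 1, hkn⟩ := hij.trans (Nat.lt_succ_self (k + 1))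
    rw [Function.comp_apply, Function.comp_apply, swap_apply_left,
      swap_apply_of_ne_of_ne hij.ne hik.ne] at hi
    exact hi.elim (hc i hik).1 (hc i hik).2

theorem exists_eq_zpow [FiniteDimensional ℝ E] (hT : IsHeckeRep n q T) (hq : 1 < q)
    (hw : jmSpace n q T w ≠ ⊥) : ∃ c : Fin n → ℤ, w = (q ^ c ·) := by
  suffices ∀ k : Fin n, ∃ c : ℤ, w k = q ^ c by
    choose c hc using this
    exact ⟨c, funext hc⟩
  have hq0 : q ≠ 0 := by positivity
  intro k
  induction k using WellFoundedLT.induction with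
  | ind k ih =>
    by_cases hk : (k : ℕ) = 0
    · exact ⟨0, by rw [jmSpace_apply_zero hw hk, zpow_zero]⟩
    obtain ⟨i, hik, hi⟩ := hT.exists_lt_adjacent hq hw hk
    obtain ⟨c, hc⟩ := ih i hik
    obtain hi | hi := hi
    · exact ⟨c + 1, by rw [hi, hc, zpow_add_one₀ hq0, mul_comm]⟩
    · refine ⟨c - 1, ?_⟩
      rw [zpow_sub_one₀ hq0, ← hc, hi]
      field_simp

end IsHeckeRep

end HeckeRep

section ContentSpace

open Equiv

variable {E : Type*} [NormedAddCommGroup E] [InnerProductSpace ℝ E]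
  {n : ℕ} {q : ℝ} {T : ℕ → Module.End ℝ E} {c : Fin n → ℤ} {i j k : Fin n}

/-- The simultaneous eigenspace of the Jucys–Murphy operators with eigenvalues `q ^ c k`. -/
noncomputable def contentSpace (n : ℕ) (q : ℝ) (T : ℕ → Module.End ℝ E) (c : Fin n → ℤ) :
    Submodule ℝ E :=
  jmSpace n q T (q ^ c ·)

theorem zpow_eq_mul_zpow_iff (hq : 1 < q) (a b : ℤ) : q ^ a = q * q ^ b ↔ a = b + 1 := by
  rw [mul_comm, ← zpow_add_one₀ (by positivity)]
  exact zpow_right_inj₀ (by positivity) hq.ne'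

theorem zpow_adjacent_iff (hq : 1 < q) (a b : ℤ) :
    q ^ a = q * q ^ b ∨ q ^ b = q * q ^ a ↔ (a - b).natAbs = 1 := by
  rw [zpow_eq_mul_zpow_iff hq, zpow_eq_mul_zpow_iff hq]
  omega

namespace IsHeckeRep

theorem content_ne_next (hT : IsHeckeRep n q T) (hq : 1 < q) (hc : contentSpace n q T c ≠ ⊥)
    (hij : (i : ℕ) + 1 = j) : c i ≠ c j :=
  fun h => hT.jmSpace_apply_ne_next hq hc hij (congrArg (q ^ ·) h)

theorem content_not_adjacent_of_eq (hT : IsHeckeRep n q T) (hq : 1 < q)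
    (hc : contentSpace n q T c ≠ ⊥) (hij : (i : ℕ) + 1 = j) (hjk : (j : ℕ) + 1 = k)
    (hik : c i = c k) : (c i - c j).natAbs ≠ 1 := by
  have hne := hT.not_next_eq_of_apply_eq hq hc hij hjk (congrArg (q ^ ·) hik)
  rw [Ne, ← zpow_adjacent_iff hq]
  tauto

theorem finrank_contentSpace_le_swap [FiniteDimensional ℝ E] (hT : IsHeckeRep n q T) (hq : 1 < q)
    (hij : (i : ℕ) + 1 = j) (hfar : (c i - c j).natAbs ≠ 1) :
    Module.finrank ℝ (contentSpace n q T c) ≤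
      Module.finrank ℝ (contentSpace n q T (c ∘ swap i j)) := by
  rw [Ne, ← zpow_adjacent_iff hq, not_or] at hfar
  exact hT.finrank_jmSpace_le_swap hq hij hfar.2 hfar.1

theorem contentSpace_swap_ne_bot [FiniteDimensional ℝ E] (hT : IsHeckeRep n q T) (hq : 1 < q)
    (hc : contentSpace n q T c ≠ ⊥) (hij : (i : ℕ) + 1 = j) (hfar : (c i - c j).natAbs ≠ 1) :
    contentSpace n q T (c ∘ swap i j) ≠ ⊥ := by
  rw [Ne, ← zpow_adjacent_iff hq, not_or] at hfar
  exact hT.jmSpace_swap_ne_bot (w := (q ^ c ·)) hq hij hc hfar.2 hfar.1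

/-- Unless the neighbours of both ends carry the content `c i - ε`, a swap at one end brings the two
equal contents closer together. If they both do, two shorter intervals lead to `c i + ε`. -/
theorem exists_content_between [FiniteDimensional ℝ E] (hT : IsHeckeRep n q T) (hq : 1 < q)
    {ε : ℤ} (hε : ε.natAbs = 1) (hc : contentSpace n q T c ≠ ⊥) (hij : i < j) (h : c i = c j) :
    ∃ k, i < k ∧ k < j ∧ c k = c i + ε := by
  induction hd : (j : ℕ) - i using Nat.strong_induction_on generalizing c i j with
  | _ d ih =>
  subst hd
  obtain ⟨i', hi'⟩ : ∃ i' : Fin n, (i : ℕ) + 1 = i' := ⟨⟨i + 1, by omega⟩, rfl⟩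
  obtain ⟨j', hj'⟩ : ∃ j' : Fin n, (j' : ℕ) + 1 = j := ⟨⟨j - 1, by omega⟩, by grind⟩
  have hii' := hT.content_ne_next hq hc hi'
  have hjj' := hT.content_ne_next hq hc hj'
  have hi'j : i' < j := lt_of_le_of_ne (by omega) fun e => hii' (e ▸ h)
  by_cases hi'_up : c i' = c i + ε
  · exact ⟨i', by omega, hi'j, hi'_up⟩
  by_cases hj'_up : c j' = c i + ε
  · exact ⟨j', by omega, by omega, hj'_up⟩
  by_cases hi'_down : c i' = c i - ε
  · by_cases hj'_down : c j' = c j - ε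
    · obtain heq | hlt : i' = j' ∨ i' < j' := by omega
      · exact absurd (by omega) (hT.content_not_adjacent_of_eq hq hc hi' (heq ▸ hj') h)
      · obtain ⟨k, hi'k, hkj', hk⟩ := ih _ (by omega) hc hlt (by omega) rfl
        obtain ⟨l, hil, hlk, hl⟩ :=
          ih _ (by omega) hc (show i < k by omega) (by rw [hk, hi'_down]; ring) rfl
        exact ⟨l, hil, by omega, hl⟩
    · have hswap := hT.contentSpace_swap_ne_bot hq hc hj' (by omega)
      have hi_fix : swap j' j i = i := swap_apply_of_ne_of_ne (by omega) hij.ne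
      obtain ⟨k, hik, hkj', hk⟩ :=
        ih _ (by omega) hswap (show i < j' by omega) (by simp [hi_fix, h]) rfl
      refine ⟨k, hik, by omega, ?_⟩
      simpa [hi_fix, swap_apply_of_ne_of_ne hkj'.ne (show k ≠ j by omega)] using hk
  · have hswap := hT.contentSpace_swap_ne_bot hq hc hi' (by omega)
    have hj_fix : swap i i' j = j := swap_apply_of_ne_of_ne hij.ne' hi'j.ne'
    obtain ⟨k, hi'k, hkj, hk⟩ := ih _ (by omega) hswap hi'j (by simp [hj_fix, h]) rfl
    refine ⟨k, by omega, hkj, ?_⟩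
    simpa [swap_apply_of_ne_of_ne (show k ≠ i by omega) hi'k.ne'] using hk

end IsHeckeRep

/-- The content vectors of Okounkov and Vershik, i.e. the words formed by the contents of the
successive boxes of a standard Young tableau. -/
structure IsContentVector (c : Fin n → ℤ) : Prop where
  eq_zero : ∀ k : Fin n, (k : ℕ) = 0 → c k = 0
  exists_lt_adjacent : ∀ k : Fin n, (k : ℕ) ≠ 0 → ∃ i < k, (c k - c i).natAbs = 1
  exists_between : ∀ ε : ℤ, ε.natAbs = 1 → ∀ i j, i < j → c i = c j →
    ∃ k, i < k ∧ k < j ∧ c k = c i + ε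

theorem IsHeckeRep.isContentVector [FiniteDimensional ℝ E] (hT : IsHeckeRep n q T) (hq : 1 < q)
    (hc : contentSpace n q T c ≠ ⊥) : IsContentVector c where
  eq_zero k hk := zpow_right_injective₀ (by positivity) hq.ne'
    ((jmSpace_apply_zero hc hk).trans (zpow_zero q).symm)
  exists_lt_adjacent k hk := by
    obtain ⟨i, hik, hi⟩ := hT.exists_lt_adjacent hq hc hk
    exact ⟨i, hik, (zpow_adjacent_iff hq _ _).mp hi⟩
  exists_between _ hε _ _ hij h := hT.exists_content_between hq hε hc hij h

end ContentSpace

section Permutations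

open Equiv

variable {n m : ℕ} {i j a b : Fin n} {p p' : Perm (Fin n)}

theorem swap_lt_swap_of_ne (hij : (i : ℕ) + 1 = j) (hab : a < b) (hne : ¬(a = i ∧ b = j)) :
    swap i j a < swap i j b := by
  simp only [swap_apply_def]
  split_ifs <;> omega

theorem inversions_mul_swap (hij : (i : ℕ) + 1 = j) (h : p i < p j) :
    inversions n (p * swap i j) = inversions n p + 1 := by
  have hmem : (i, j) ∈ Finset.univ.filter fun x : Fin n × Fin n =>
      x.1 < x.2 ∧ (p * swap i j) x.2 < (p * swap i j) x.1 :=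
    (Finset.mem_filter_univ _).mpr ⟨show i < j by omega, by simpa using h⟩
  unfold inversions
  rw [← Finset.card_erase_add_one hmem]
  congr 1
  refine Finset.card_equiv ((swap i j).prodCongr (swap i j)) fun ⟨a, b⟩ => ?_
  rw [Finset.mem_erase, Finset.mem_filter_univ, Finset.mem_filter_univ, Ne, Prod.mk.injEq]
  constructor
  · rintro ⟨hne, hab, hinv⟩
    exact ⟨swap_lt_swap_of_ne hij hab hne, hinv⟩
  · rintro ⟨hab, hinv⟩
    have hab' : a < b := by
      have hne : ¬(swap i j a = i ∧ swap i j b = j) := fun ⟨ha, hb⟩ => by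
        simp only [prodCongr_apply, Prod.map_apply, ha, hb] at hinv
        exact h.not_gt hinv
      simpa using swap_lt_swap_of_ne hij hab hne
    refine ⟨?_, hab', hinv⟩
    rintro ⟨rfl, rfl⟩
    simp only [prodCongr_apply, Prod.map_apply, swap_apply_left, swap_apply_right] at hab
    exact hab'.not_gt hab

theorem inversions_mul_swap_add_one (hij : (i : ℕ) + 1 = j) (h : p j < p i) :
    inversions n (p * swap i j) + 1 = inversions n p := by
  rw [← inversions_mul_swap hij (by simpa using h), mul_swap_mul_self]

theorem exists_descent (h : ¬StrictMonoOn p {a | (a : ℕ) < m}) :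
    ∃ i j : Fin n, (i : ℕ) + 1 = j ∧ (j : ℕ) < m ∧ p j < p i := by
  by_contra! hasc
  have hmono : MonotoneOn p {a | (a : ℕ) < m} := by
    have hconn : Set.OrdConnected {a : Fin n | (a : ℕ) < m} :=
      ⟨fun _ _ y hy z hz => lt_of_le_of_lt (Fin.le_def.mp hz.2) hy⟩
    refine monotoneOn_of_le_succ hconn fun a ha _ hm => hasc a _ ?_ hm
    exact Nat.covBy_iff_add_one_eq.mp (Fin.covBy_iff.mp (Order.covBy_succ_of_not_isMax ha))
  exact h (hmono.strictMonoOn_of_injOn p.injective.injOn)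

theorem perm_eq_of_strictMonoOn (hm : m ≤ n) (hp : StrictMonoOn p {a | (a : ℕ) < m})
    (hp' : StrictMonoOn p' {a | (a : ℕ) < m}) (h : ∀ a : Fin n, m ≤ a → p a = p' a) : p = p' := by
  have hcomp : ∀ {f : Perm (Fin n)}, StrictMonoOn f {a | (a : ℕ) < m} →
      StrictMono (f ∘ Fin.castLE hm) := fun hf x y hxy => hf x.2 y.2 hxy
  let s := Finset.univ.image (p ∘ Fin.castLE hm)
  have hs : s.card = m := by
    rw [Finset.card_image_of_injective _ (hcomp hp).injective, Finset.card_univ, Fintype.card_fin]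
  have hmem' : ∀ x, (p' ∘ Fin.castLE hm) x ∈ s := by
    intro x
    obtain ⟨y, hy⟩ := p.surjective (p' (Fin.castLE hm x))
    have hym : (y : ℕ) < m := by
      by_contra! hmy
      have hyx := p'.injective ((h y hmy).symm.trans hy)
      exact hmy.not_gt (hyx ▸ x.2)
    exact Finset.mem_image.mpr ⟨⟨y, hym⟩, Finset.mem_univ _, hy⟩
  have hhead := (s.orderEmbOfFin_unique hs
    (fun x => Finset.mem_image_of_mem _ (Finset.mem_univ x)) (hcomp hp)).trans
      (s.orderEmbOfFin_unique hs hmem' (hcomp hp')).symm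
  ext1 a
  obtain ha | ha := Nat.lt_or_ge a m
  · exact congrFun hhead ⟨a, ha⟩
  · exact h a ha

theorem card_strictMonoOn_le (hm : m ≤ n) :
    Nat.card {p : Perm (Fin n) // StrictMonoOn p {a | (a : ℕ) < m}} ≤
      n.descFactorial (n - m) := by
  classical
  let tail : {p : Perm (Fin n) // StrictMonoOn p {a | (a : ℕ) < m}} →
      ({a : Fin n // m ≤ (a : ℕ)} ↪ Fin n) :=
    fun p => (Function.Embedding.subtype _).trans p.1.toEmbedding
  have htail : Function.Injective tail := fun p p' h =>
    Subtype.ext (perm_eq_of_strictMonoOn hm p.2 p'.2 fun a ha => DFunLike.congr_fun h ⟨a, ha⟩)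
  have hcard : Fintype.card {a : Fin n // m ≤ (a : ℕ)} = n - m := by
    rw [Fintype.card_congr (subtypeEquivRight fun a => not_lt.symm), Fintype.card_subtype_compl,
      Fintype.card_subtype, Fin.card_filter_val_lt, Fintype.card_fin, min_eq_right hm]
  refine (Nat.card_le_card_of_injective tail htail).trans_eq ?_
  rw [Nat.card_eq_fintype_card, Fintype.card_embedding_eq, Fintype.card_fin, hcard]

/-- The permutation whose successive values are the elements of `I` in increasing order, followed by
the elements of its complement in increasing order. -/
def shuffle (I : Finset (Fin n)) : Perm (Fin n) :=
  (finCongr (I.card_add_card_compl.trans (Fintype.card_fin n)).symm).trans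
    (finSumFinEquiv.symm.trans (finSumEquivOfFinset (s := I) rfl rfl))

theorem shuffle_of_lt {I : Finset (Fin n)} (ha : (a : ℕ) < I.card) :
    shuffle I a = I.orderEmbOfFin rfl ⟨a, ha⟩ := by
  have hcast : finCongr (I.card_add_card_compl.trans (Fintype.card_fin n)).symm a =
      Fin.castAdd Iᶜ.card ⟨(a : ℕ), ha⟩ := rfl
  simp only [shuffle, trans_apply, hcast, finSumFinEquiv_symm_apply_castAdd,
    finSumEquivOfFinset_inl]

theorem shuffle_of_ge {I : Finset (Fin n)} (ha : I.card ≤ (a : ℕ)) :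
    shuffle I a = Iᶜ.orderEmbOfFin rfl
      ⟨a - I.card, by rw [Finset.card_compl, Fintype.card_fin]; omega⟩ := by
  have hcast : finCongr (I.card_add_card_compl.trans (Fintype.card_fin n)).symm a =
      Fin.natAdd I.card
        (⟨a - I.card, by rw [Finset.card_compl, Fintype.card_fin]; omega⟩ : Fin Iᶜ.card) :=
    Fin.ext (Nat.add_sub_of_le ha).symm
  simp only [shuffle, trans_apply, hcast, finSumFinEquiv_symm_apply_natAdd,
    finSumEquivOfFinset_inr]

theorem shuffle_inversion {I : Finset (Fin n)} (hab : a < b) (h : shuffle I b < shuffle I a) :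
    shuffle I a ∈ I ∧ shuffle I b ∉ I := by
  obtain ha | ha := Nat.lt_or_ge a I.card <;> obtain hb | hb := Nat.lt_or_ge b I.card
  · rw [shuffle_of_lt ha, shuffle_of_lt hb, OrderEmbedding.lt_iff_lt] at h
    exact absurd hab h.not_gt
  · rw [shuffle_of_lt ha, shuffle_of_ge hb]
    exact ⟨Finset.orderEmbOfFin_mem _ _ _, Finset.mem_compl.mp (Finset.orderEmbOfFin_mem _ _ _)⟩
  · omega
  · rw [shuffle_of_ge ha, shuffle_of_ge hb, OrderEmbedding.lt_iff_lt, Fin.mk_lt_mk] at h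
    omega

end Permutations

section ContentVectors

variable {n : ℕ} {c : Fin n → ℤ} {i j k : Fin n}

/-- The positions at which a nonnegative content occurs for the first time. For the content vector
of a tableau these are the positions of the boxes in the first row. -/
def firstOcc (c : Fin n → ℤ) : Finset (Fin n) :=
  Finset.univ.filter fun k => 0 ≤ c k ∧ ∀ i < k, c i ≠ c k

theorem mem_firstOcc : k ∈ firstOcc c ↔ 0 ≤ c k ∧ ∀ i < k, c i ≠ c k := by
  simp [firstOcc]

theorem exists_lt_eq_of_notMem_firstOcc (h0 : 0 ≤ c i) (hi : i ∉ firstOcc c) :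
    ∃ j < i, c j = c i := by
  simpa [mem_firstOcc, h0] using hi

theorem notMem_firstOcc_of_lt (hij : i < j) (hc : c i = c j) : j ∉ firstOcc c :=
  fun hj => (mem_firstOcc.mp hj).2 i hij hc

namespace IsContentVector

theorem exists_mem_firstOcc (hc : IsContentVector c) {x : ℤ} (hx0 : 0 ≤ x) (hx : x ≤ c k) :
    ∃ i ≤ k, i ∈ firstOcc c ∧ c i = x := by
  induction k using WellFoundedLT.induction with
  | ind k ih =>
    suffices k ∈ firstOcc c ∧ c k = x ∨ ∃ l < k, x ≤ c l by
      obtain hk | ⟨l, hlk, hl⟩ := this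
      · exact ⟨k, le_rfl, hk⟩
      · obtain ⟨i, hil, hi⟩ := ih l hlk hl
        exact ⟨i, hil.trans hlk.le, hi⟩
    obtain rfl | hlt := hx.eq_or_lt
    · by_cases hk : k ∈ firstOcc c
      · exact Or.inl ⟨hk, rfl⟩
      · obtain ⟨l, hlk, hl⟩ := exists_lt_eq_of_notMem_firstOcc hx0 hk
        exact Or.inr ⟨l, hlk, hl.ge⟩
    · obtain ⟨l, hlk, hl⟩ := hc.exists_lt_adjacent k fun hk => by
        have := hc.eq_zero k hk
        omega
      exact Or.inr ⟨l, hlk, by omega⟩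

theorem strictMonoOn_firstOcc (hc : IsContentVector c) : StrictMonoOn c (firstOcc c) := by
  intro i _ j hj hij
  by_contra! hji
  obtain ⟨l, hli, -, hl⟩ := hc.exists_mem_firstOcc (mem_firstOcc.mp hj).1 hji
  exact notMem_firstOcc_of_lt (hli.trans_lt hij) hl hj

/-- Outside the first row, a content `c i ≥ 0` is a repetition, so that `c i + 1` has occurred
before `i`. -/
theorem not_adjacent_of_mem_firstOcc (hc : IsContentVector c) (hij : i < j)
    (hi : i ∉ firstOcc c) (hj : j ∈ firstOcc c) : (c i - c j).natAbs ≠ 1 := by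
  have hj0 := (mem_firstOcc.mp hj).1
  suffices ¬c j ≤ c i ∧ c j ≠ c i + 1 by omega
  constructor
  · intro hji
    obtain ⟨l, hli, -, hl⟩ := hc.exists_mem_firstOcc hj0 hji
    exact notMem_firstOcc_of_lt (hli.trans_lt hij) hl hj
  · intro hji
    obtain hneg | hi0 := lt_or_ge (c i) 0
    · let o : Fin n := ⟨0, i.pos⟩
      have ho : c o = 0 := hc.eq_zero o rfl
      exact notMem_firstOcc_of_lt (show o < j from (Nat.zero_le _).trans_lt hij) (by omega) hj
    · obtain ⟨l, hli, hl⟩ := exists_lt_eq_of_notMem_firstOcc hi0 hi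
      obtain ⟨k, -, hki, hk⟩ := hc.exists_between 1 rfl l i hli hl
      exact notMem_firstOcc_of_lt (hki.trans hij) (by omega) hj

theorem lt_card_firstOcc (hc : IsContentVector c) (i : Fin n) : c i < (firstOcc c).card := by
  have hsub : Finset.Icc 0 (c i) ⊆ (firstOcc c).image c := by
    intro x hx
    rw [Finset.mem_Icc] at hx
    obtain ⟨k, -, hk⟩ := hc.exists_mem_firstOcc hx.1 hx.2
    exact Finset.mem_image.mpr ⟨k, hk⟩
  have hcard := (Finset.card_le_card hsub).trans Finset.card_image_le
  rw [Int.card_Icc] at hcard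
  omega

theorem apply_orderEmbOfFin_firstOcc (hc : IsContentVector c) (k : Fin (firstOcc c).card) :
    c ((firstOcc c).orderEmbOfFin rfl k) = k := by
  let s := Finset.Ico (0 : ℤ) (firstOcc c).card
  have hs : s.card = (firstOcc c).card := by simp [s]
  have hmem := (firstOcc c).orderEmbOfFin_mem rfl
  have hcontent := s.orderEmbOfFin_unique hs (f := c ∘ (firstOcc c).orderEmbOfFin rfl)
    (fun x => Finset.mem_Ico.mpr ⟨(mem_firstOcc.mp (hmem x)).1, hc.lt_card_firstOcc _⟩)
    fun x y hxy => hc.strictMonoOn_firstOcc (hmem x) (hmem y) (OrderEmbedding.strictMono _ hxy)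
  have hval := s.orderEmbOfFin_unique hs (f := fun x => (x : ℤ))
    (fun x => Finset.mem_Ico.mpr ⟨Int.natCast_nonneg x, Int.ofNat_lt.mpr x.2⟩)
    fun x y hxy => Int.ofNat_lt.mpr hxy
  exact congrFun (hcontent.trans hval.symm) k

theorem sum_firstOcc (hc : IsContentVector c) {M : Type*} [AddCommMonoid M] (f : ℤ → M) :
    ∑ i ∈ firstOcc c, f (c i) = ∑ k ∈ Finset.range (firstOcc c).card, f k := by
  conv_lhs => rw [← (firstOcc c).map_orderEmbOfFin_univ rfl]
  rw [Finset.sum_map, Finset.sum_range]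
  exact Finset.sum_congr rfl fun k _ => congrArg f (hc.apply_orderEmbOfFin_firstOcc k)

theorem add_two_le_card_firstOcc (hc : IsContentVector c) (hi : i ∉ firstOcc c) :
    c i + 2 ≤ (firstOcc c).card := by
  obtain hneg | h0 := lt_or_ge (c i) 0
  · have hpos := hc.lt_card_firstOcc ⟨0, i.pos⟩
    rw [hc.eq_zero _ rfl] at hpos
    omega
  · obtain ⟨j, hji, hj⟩ := exists_lt_eq_of_notMem_firstOcc h0 hi
    obtain ⟨k, -, -, hk⟩ := hc.exists_between 1 rfl j i hji hj
    have := hc.lt_card_firstOcc k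
    omega

theorem exists_prev_notMem_firstOcc (hc : IsContentVector c) (h0 : 0 ≤ c i)
    (hi : i ∉ firstOcc c) : ∃ j ∉ firstOcc c, c j = c i - 1 := by
  obtain ⟨j, hji, hj⟩ := exists_lt_eq_of_notMem_firstOcc h0 hi
  obtain ⟨k, hjk, -, hk⟩ := hc.exists_between (-1) rfl j i hji hj
  refine ⟨k, fun hmem => ?_, by omega⟩
  have := hc.exists_mem_firstOcc (k := j) (mem_firstOcc.mp hmem).1 (by omega)
  obtain ⟨l, hlj, -, hl⟩ := this
  exact notMem_firstOcc_of_lt (hlj.trans_lt hjk) hl hmem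

theorem add_two_le_card_compl_firstOcc (hc : IsContentVector c) (hi : i ∉ firstOcc c) :
    c i + 2 ≤ (firstOcc c)ᶜ.card := by
  have hdown : ∀ d : ℕ, (d : ℤ) ≤ c i + 1 → ∃ j ∉ firstOcc c, c j = c i - d := by
    intro d
    induction d with
    | zero => exact fun _ => ⟨i, hi, by simp⟩
    | succ d ih =>
      intro hd
      push_cast at hd ⊢
      obtain ⟨j, hj, hjd⟩ := ih (by omega)
      obtain ⟨k, hk, hkj⟩ := hc.exists_prev_notMem_firstOcc (by omega) hj
      exact ⟨k, hk, by omega⟩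
  have hsub : Finset.Icc (-1) (c i) ⊆ (firstOcc c)ᶜ.image c := by
    intro x hx
    rw [Finset.mem_Icc] at hx
    obtain ⟨j, hj, hjx⟩ := hdown (c i - x).toNat (by omega)
    exact Finset.mem_image.mpr ⟨j, Finset.mem_compl.mpr hj, by omega⟩
  have hcard := (Finset.card_le_card hsub).trans Finset.card_image_le
  have : 0 < (firstOcc c)ᶜ.card := Finset.card_pos.mpr ⟨i, Finset.mem_compl.mpr hi⟩
  rw [Int.card_Icc] at hcard
  omega

/-- Between two occurrences of `t` outside the first row there is one of `t + 1`. -/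
theorem card_filter_eq_le_succ (hc : IsContentVector c) (t : ℤ) :
    ((firstOcc c)ᶜ.filter fun i => c i = t).card ≤
      ((firstOcc c)ᶜ.filter fun i => c i = t + 1).card + 1 := by
  refine Finset.card_le_of_interleaved fun x hx y hy hxy _ => ?_
  simp only [Finset.mem_filter, Finset.mem_compl] at hx hy ⊢
  obtain ⟨z, hxz, hzy, hz⟩ := hc.exists_between 1 rfl x y hxy (hx.2.trans hy.2.symm)
  refine ⟨z, ⟨fun hmem => ?_, by omega⟩, hxz, hzy⟩
  exact hc.not_adjacent_of_mem_firstOcc hxz hx.1 hmem (by omega)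

theorem card_filter_eq_le (hc : IsContentVector c) {e : ℤ}
    (he : ∀ i ∉ firstOcc c, c i + 2 ≤ e) (k : ℕ) :
    ((firstOcc c)ᶜ.filter fun i => c i = e - 1 - k).card ≤ k := by
  induction k with
  | zero =>
    rw [Nat.le_zero, Finset.card_eq_zero, Finset.filter_eq_empty_iff]
    intro i hi
    have := he i (Finset.mem_compl.mp hi)
    push_cast
    omega
  | succ k ih =>
    refine (hc.card_filter_eq_le_succ _).trans (Nat.add_le_add_right ?_ 1)
    convert ih using 4
    push_cast
    ring

end IsContentVector

theorem sum_zpow_le_of_card_filter_le {ι : Type*} {s : Finset ι} {c : ι → ℤ} {e : ℤ} {q : ℝ}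
    (hq : 1 < q) (hlt : ∀ i ∈ s, c i < e)
    (hcard : ∀ k : ℕ, (s.filter fun i => c i = e - 1 - k).card ≤ k) :
    ∑ i ∈ s, q ^ c i ≤ q ^ e / (q - 1) ^ 2 := by
  have hq0 : 0 < q := by linarith
  have hq1 : q - 1 ≠ 0 := sub_ne_zero.mpr hq.ne'
  let depth : ι → ℕ := fun i => (e - 1 - c i).toNat
  have hdepth : ∀ i ∈ s, c i = e - 1 - depth i := fun i hi => by
    have := hlt i hi
    simp only [depth]
    omega
  have hsum : HasSum (fun k : ℕ => (k : ℝ) * q⁻¹ ^ k) (q⁻¹ / (1 - q⁻¹) ^ 2) :=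
    hasSum_coe_mul_geometric_of_norm_lt_one
      (by rw [Real.norm_of_nonneg (by positivity)]; exact inv_lt_one_of_one_lt₀ hq)
  calc ∑ i ∈ s, q ^ c i
      = ∑ i ∈ s, q ^ (e - 1) * q⁻¹ ^ depth i := Finset.sum_congr rfl fun i hi => by
        rw [hdepth i hi, zpow_sub₀ hq0.ne', zpow_natCast, inv_pow, div_eq_mul_inv]
    _ = q ^ (e - 1) * ∑ k ∈ s.image depth,
          ((s.filter fun i => depth i = k).card : ℝ) * q⁻¹ ^ k := by
        rw [← Finset.mul_sum, Finset.sum_comp (q⁻¹ ^ ·) depth]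
        simp only [nsmul_eq_mul]
    _ ≤ q ^ (e - 1) * ∑ k ∈ s.image depth, (k : ℝ) * q⁻¹ ^ k := by
        gcongr with k
        refine (Finset.card_le_card fun i hi => ?_).trans (hcard k)
        rw [Finset.mem_filter] at hi ⊢
        exact ⟨hi.1, hi.2 ▸ hdepth i hi.1⟩
    _ ≤ q ^ (e - 1) * (q⁻¹ / (1 - q⁻¹) ^ 2) := by
        gcongr
        exact sum_le_hasSum _ (fun k _ => by positivity) hsum
    _ = q ^ e / (q - 1) ^ 2 := by
        rw [zpow_sub_one₀ hq0.ne']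
        field_simp

theorem IsContentVector.sum_compl_firstOcc_le (hc : IsContentVector c) {q : ℝ} (hq : 1 < q) :
    ∑ i ∈ (firstOcc c)ᶜ, q ^ c i ≤
      q ^ min (firstOcc c)ᶜ.card (firstOcc c).card / (q - 1) ^ 2 := by
  have he : ∀ i ∉ firstOcc c,
      c i + 2 ≤ ((min (firstOcc c)ᶜ.card (firstOcc c).card : ℕ) : ℤ) := fun i hi => by
    rw [Nat.cast_min]
    exact le_min (hc.add_two_le_card_compl_firstOcc hi) (hc.add_two_le_card_firstOcc hi)
  rw [← zpow_natCast q (min _ _)]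
  refine sum_zpow_le_of_card_filter_le hq (fun i hi => ?_) (hc.card_filter_eq_le he)
  have := he i (Finset.mem_compl.mp hi)
  omega

end ContentVectors

section DimensionCount

open Equiv

theorem sum_finrank_eq_finrank_biSup {K E ι : Type*} [DivisionRing K] [AddCommGroup E] [Module K E]
    [FiniteDimensional K E] {V : ι → Submodule K E} (hV : iSupIndep V) (S : Finset ι) :
    ∑ i ∈ S, Module.finrank K (V i) = Module.finrank K (⨆ i ∈ S, V i : Submodule K E) := by
  classical
  induction S using Finset.induction_on with
  | empty => rw [Finset.sum_empty, eq_comm, Submodule.finrank_eq_zero]; simp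
  | insert a S ha ih =>
    have hdisj : Disjoint (V a) (⨆ i ∈ S, V i) := hV.disjoint_biSup (y := (S : Set ι)) (by simpa)
    rw [Finset.sum_insert ha, Finset.iSup_insert, ih, ← Submodule.finrank_sup_add_finrank_inf_eq,
      hdisj.eq_bot, finrank_bot, add_zero]

variable {E : Type*} [NormedAddCommGroup E] [InnerProductSpace ℝ E]
  {n m d : ℕ} {q : ℝ} {T : ℕ → Module.End ℝ E} {c : Fin n → ℤ}

/-- The vectors on which each of the first `m - 1` generators acts by `q`, i.e. the isotypic part of
the trivial representation of the parabolic subalgebra `H_m(q)`. -/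
def trivialSpace (q : ℝ) (T : ℕ → Module.End ℝ E) (m : ℕ) : Submodule ℝ E :=
  ⨅ (i : ℕ) (_ : i + 1 < m), Module.End.eigenspace (T i) q

theorem mem_trivialSpace {v : E} : v ∈ trivialSpace q T m ↔ ∀ i, i + 1 < m → T i v = q • v := by
  simp [trivialSpace, Submodule.mem_iInf]

theorem IsContentVector.apply_shuffle_firstOcc (hc : IsContentVector c) {a : Fin n}
    (ha : (a : ℕ) < (firstOcc c).card) : c (shuffle (firstOcc c) a) = a := by
  rw [shuffle_of_lt ha, hc.apply_orderEmbOfFin_firstOcc]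

namespace IsHeckeRep

theorem contentSpace_le_trivialSpace (hT : IsHeckeRep n q T) (hq : 1 < q) (hm : m ≤ n)
    (hc : ∀ k : Fin n, (k : ℕ) < m → c k = k) : contentSpace n q T c ≤ trivialSpace q T m := by
  intro v hv
  rw [mem_trivialSpace]
  intro k hk
  refine hT.apply_of_next_eq (i := ⟨k, by omega⟩) (j := ⟨k + 1, by omega⟩) hq rfl ?_ hv
  rw [zpow_eq_mul_zpow_iff hq, hc _ hk, hc _ (show k < m by omega)]
  push_cast
  rfl

variable [FiniteDimensional ℝ E]

theorem jmSpace_isInternal (hT : IsHeckeRep n q T) :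
    DirectSum.IsInternal (jmSpace n q T) :=
  LinearMap.IsSymmetric.directSum_isInternal_of_pairwise_commute
    (T := fun k : Fin n => jucysMurphy q T k) (fun k => hT.jucysMurphy_isSymmetric k)
    fun i j _ => hT.toIsBraidFamily.commute_jucysMurphy_jucysMurphy q i j

theorem contentSpace_isInternal (hT : IsHeckeRep n q T) (hq : 1 < q) :
    DirectSum.IsInternal (contentSpace n q T) := by
  have hinj : Function.Injective fun (c : Fin n → ℤ) (k : Fin n) => q ^ c k := fun _ _ h =>
    funext fun k => zpow_right_injective₀ (zero_lt_one.trans hq) hq.ne' (congrFun h k)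
  rw [DirectSum.isInternal_submodule_iff_iSupIndep_and_iSup_eq_top]
  refine ⟨hT.jmSpace_isInternal.submodule_iSupIndep.comp hinj, ?_⟩
  rw [eq_top_iff, ← hT.jmSpace_isInternal.submodule_iSup_eq_top]
  refine iSup_le fun w => ?_
  obtain hw | hw := eq_or_ne (jmSpace n q T w) ⊥
  · exact hw ▸ bot_le
  · obtain ⟨c, rfl⟩ := hT.exists_eq_zpow hq hw
    exact le_iSup (contentSpace n q T) c

theorem finrank_contentSpace_le_comp (hT : IsHeckeRep n q T) (hq : 1 < q) (ρ : Perm (Fin n))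
    (hρ : ∀ a b, a < b → ρ b < ρ a → (c (ρ a) - c (ρ b)).natAbs ≠ 1) :
    Module.finrank ℝ (contentSpace n q T c) ≤ Module.finrank ℝ (contentSpace n q T (c ∘ ρ)) := by
  induction hN : inversions n ρ using Nat.strong_induction_on generalizing ρ with
  | _ N ih =>
  by_cases hmono : StrictMonoOn ρ {a | (a : ℕ) < n}
  · rw [perm_eq_of_strictMonoOn le_rfl hmono (p' := 1) (fun _ _ _ _ h => h)
      fun a ha => absurd a.2 ha.not_gt, Perm.coe_one, Function.comp_id]
  obtain ⟨i, j, hij, -, hdesc⟩ := exists_descent hmono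
  have hinv := inversions_mul_swap_add_one hij hdesc
  refine (ih _ (by omega) (ρ * swap i j) (fun a b hab hlt => ?_) rfl).trans ?_
  · refine hρ _ _ (swap_lt_swap_of_ne hij hab ?_) hlt
    rintro ⟨rfl, rfl⟩
    simp only [Perm.mul_apply, swap_apply_left, swap_apply_right] at hlt
    exact hdesc.not_gt hlt
  · have hundo : c ∘ ρ = (c ∘ ⇑(ρ * swap i j)) ∘ swap i j := by
      ext
      simp
    have hfar := hρ i j (by omega) hdesc
    rw [hundo]
    refine hT.finrank_contentSpace_le_swap hq hij ?_
    rw [← Int.natAbs_neg, neg_sub]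
    simpa using hfar

/-- Shuffling the first row to the front turns these content spaces into independent subspaces of
one trivial space. -/
theorem sum_finrank_firstOcc_eq_le (hT : IsHeckeRep n q T) (hq : 1 < q) (S : Finset (Fin n → ℤ))
    (hS : ∀ c ∈ S, contentSpace n q T c ≠ ⊥) (I : Finset (Fin n)) :
    ∑ c ∈ S with firstOcc c = I, Module.finrank ℝ (contentSpace n q T c) ≤
      Module.finrank ℝ (trivialSpace q T I.card) := by
  have hcontent {c} (hc : c ∈ S) : IsContentVector c := hT.isContentVector hq (hS c hc)
  have hinj : Function.Injective fun c : Fin n → ℤ => c ∘ shuffle I :=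
    (shuffle I).surjective.injective_comp_right
  calc ∑ c ∈ S with firstOcc c = I, Module.finrank ℝ (contentSpace n q T c)
      ≤ ∑ c ∈ S with firstOcc c = I, Module.finrank ℝ (contentSpace n q T (c ∘ shuffle I)) := by
        refine Finset.sum_le_sum fun c hc => ?_
        obtain ⟨hcS, rfl⟩ := Finset.mem_filter.mp hc
        refine hT.finrank_contentSpace_le_comp hq _ fun a b hab hlt => ?_
        obtain ⟨ha, hb⟩ := shuffle_inversion hab hlt
        rw [← Int.natAbs_neg, neg_sub]
        exact (hcontent hcS).not_adjacent_of_mem_firstOcc hlt hb ha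
    _ = Module.finrank ℝ (⨆ c ∈ S.filter (firstOcc · = I), contentSpace n q T (c ∘ shuffle I) :
          Submodule ℝ E) :=
        sum_finrank_eq_finrank_biSup
          ((hT.contentSpace_isInternal hq).submodule_iSupIndep.comp hinj) _
    _ ≤ Module.finrank ℝ (trivialSpace q T I.card) := by
        refine Submodule.finrank_mono (iSup₂_le fun c hc => ?_)
        obtain ⟨hcS, rfl⟩ := Finset.mem_filter.mp hc
        exact hT.contentSpace_le_trivialSpace hq (card_finset_fin_le _) fun k hk =>
          (hcontent hcS).apply_shuffle_firstOcc hk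

theorem sum_finrank_card_firstOcc_le (hT : IsHeckeRep n q T) (hq : 1 < q)
    (S : Finset (Fin n → ℤ)) (hS : ∀ c ∈ S, contentSpace n q T c ≠ ⊥) (m : ℕ) :
    ∑ c ∈ S with (firstOcc c).card = m, Module.finrank ℝ (contentSpace n q T c) ≤
      n.choose m * Module.finrank ℝ (trivialSpace q T m) := by
  have hmaps : ∀ c ∈ S.filter (fun c => (firstOcc c).card = m),
      firstOcc c ∈ Finset.powersetCard m Finset.univ := fun c hc =>
    Finset.mem_powersetCard.mpr ⟨Finset.subset_univ _, (Finset.mem_filter.mp hc).2⟩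
  have hfiber : ∀ I ∈ Finset.powersetCard m (Finset.univ : Finset (Fin n)),
      ∑ c ∈ S.filter (fun c => (firstOcc c).card = m) with firstOcc c = I,
        Module.finrank ℝ (contentSpace n q T c) ≤ Module.finrank ℝ (trivialSpace q T m) := by
    intro I hI
    obtain ⟨-, rfl⟩ := Finset.mem_powersetCard.mp hI
    exact (Finset.sum_le_sum_of_subset (Finset.filter_subset_filter _
      (Finset.filter_subset _ _))).trans (hT.sum_finrank_firstOcc_eq_le hq S hS I)
  rw [← Finset.sum_fiberwise_of_maps_to hmaps]
  simpa using Finset.sum_le_card_nsmul _ _ _ hfiber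

end IsHeckeRep

end DimensionCount

section RegularRepresentation

open Equiv

variable {n m : ℕ} {s : ℝ} {i j k l : Fin n}

/-- Right multiplication by the generator of a transposition `(i j)` in the regular representation
of the Hecke algebra with parameter `s ^ 2`, in the basis of the rescaled `s ^ (-I(p)) T_p`, in
which it is symmetric. -/
noncomputable def heckeOp (s : ℝ) (i j : Fin n) :
    Module.End ℝ (EuclideanSpace ℝ (Perm (Fin n))) where
  toFun f := WithLp.toLp 2 fun p =>
    s * f (p * swap i j) + if p j < p i then (s ^ 2 - 1) * f p else 0
  map_add' f g := by
    ext p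
    simp only [PiLp.add_apply]
    split_ifs <;> ring
  map_smul' r f := by
    ext p
    simp only [PiLp.smul_apply, smul_eq_mul, RingHom.id_apply]
    split_ifs <;> ring

theorem heckeOp_apply (s : ℝ) (i j : Fin n) (f : EuclideanSpace ℝ (Perm (Fin n)))
    (p : Perm (Fin n)) : heckeOp s i j f p =
      s * f (p * swap i j) + if p j < p i then (s ^ 2 - 1) * f p else 0 := rfl

theorem heckeOp_mul_self (s : ℝ) (hij : i ≠ j) :
    heckeOp s i j * heckeOp s i j = (s ^ 2 - 1) • heckeOp s i j + s ^ 2 • 1 := by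
  ext f p
  simp only [Module.End.mul_apply, heckeOp_apply, LinearMap.add_apply, LinearMap.smul_apply,
    Module.End.one_apply, PiLp.add_apply, PiLp.smul_apply, smul_eq_mul, mul_assoc, swap_mul_self,
    mul_one, Perm.mul_apply, swap_apply_left, swap_apply_right]
  obtain h | h := lt_or_gt_of_ne (p.injective.ne hij)
  all_goals
    simp only [h, h.not_gt, if_true, if_false]
    ring

theorem heckeOp_commute (s : ℝ) (hik : i ≠ k) (hil : i ≠ l) (hjk : j ≠ k) (hjl : j ≠ l) :
    Commute (heckeOp s i j) (heckeOp s k l) := by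
  have hswap : swap i j * swap k l = swap k l * swap i j := by
    rw [mul_swap_eq_swap_mul, swap_apply_of_ne_of_ne hik.symm hjk.symm,
      swap_apply_of_ne_of_ne hil.symm hjl.symm]
  ext f p
  simp only [Module.End.mul_apply, heckeOp_apply, mul_assoc, hswap, Perm.mul_apply,
    swap_apply_of_ne_of_ne hik hil, swap_apply_of_ne_of_ne hjk hjl,
    swap_apply_of_ne_of_ne hik.symm hjk.symm, swap_apply_of_ne_of_ne hil.symm hjl.symm]
  split_ifs <;> ring

theorem heckeOp_braid (s : ℝ) (hij : i ≠ j) (hjk : j ≠ k) (hik : i ≠ k) :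
    heckeOp s i j * heckeOp s j k * heckeOp s i j =
      heckeOp s j k * heckeOp s i j * heckeOp s j k := by
  have hswap : swap i j * (swap j k * swap i j) = swap j k * (swap i j * swap j k) := by
    have hleft := swap_mul_swap_mul_swap hjk.symm hik.symm
    rw [swap_comm j i, swap_comm k j] at hleft
    rw [← mul_assoc, ← mul_assoc, hleft, swap_mul_swap_mul_swap hij hik, swap_comm]
  ext f p
  simp only [Module.End.mul_apply, heckeOp_apply, mul_assoc, hswap, Perm.mul_apply,
    swap_apply_left, swap_apply_right, swap_mul_self, mul_one,
    swap_apply_of_ne_of_ne hij hik, swap_apply_of_ne_of_ne hik.symm hjk.symm]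
  obtain a | a := lt_or_gt_of_ne (p.injective.ne hij) <;>
    obtain b | b := lt_or_gt_of_ne (p.injective.ne hjk) <;>
    obtain c | c := lt_or_gt_of_ne (p.injective.ne hik) <;>
    first
    | (exfalso; order)
    | (simp only [a, b, c, a.not_gt, b.not_gt, c.not_gt, if_true, if_false] <;> ring)

theorem heckeOp_isSymmetric (s : ℝ) (i j : Fin n) : (heckeOp s i j).IsSymmetric := by
  intro f g
  simp only [PiLp.inner_apply, heckeOp_apply, RCLike.inner_apply, conj_trivial, mul_add, add_mul,
    Finset.sum_add_distrib]
  congr 1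
  · refine Fintype.sum_equiv (Equiv.mulRight (swap i j)) _ _ fun p => ?_
    simp only [coe_mulRight, mul_assoc, swap_mul_self, mul_one]
    ring
  · refine Finset.sum_congr rfl fun p _ => ?_
    split_ifs <;> ring

/-- The Hecke generator of the transposition of `k` and `k + 1`, and zero when `k + 1` is out of
range. -/
noncomputable def heckeGen (n : ℕ) (s : ℝ) (k : ℕ) :
    Module.End ℝ (EuclideanSpace ℝ (Perm (Fin n))) :=
  if h : k + 1 < n then heckeOp s ⟨k, by omega⟩ ⟨k + 1, h⟩ else 0

theorem heckeGen_eq_heckeOp (s : ℝ) (hij : (i : ℕ) + 1 = j) : heckeGen n s i = heckeOp s i j := by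
  obtain ⟨j, hj⟩ := j
  subst hij
  exact dif_pos hj

theorem heckeGen_isHeckeRep (n : ℕ) (s : ℝ) : IsHeckeRep n (s ^ 2) (heckeGen n s) where
  commute i j hij := by
    unfold heckeGen
    split_ifs
    · apply heckeOp_commute <;> simp only [ne_eq, Fin.mk.injEq] <;> omega
    all_goals simp
  braid i := by
    unfold heckeGen
    split_ifs
    · apply heckeOp_braid <;> simp only [ne_eq, Fin.mk.injEq] <;> omega
    all_goals simp
  sq k hk := by
    rw [heckeGen, dif_pos hk]
    exact heckeOp_mul_self s (by simp)
  isSymmetric k := by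
    unfold heckeGen
    split_ifs
    · exact heckeOp_isSymmetric _ _ _
    · exact LinearMap.IsSymmetric.zero

theorem apply_of_mem_trivialSpace {v : EuclideanSpace ℝ (Perm (Fin n))}
    (hv : v ∈ trivialSpace (s ^ 2) (heckeGen n s) m) (hij : (i : ℕ) + 1 = j) (hj : (j : ℕ) < m)
    {p : Perm (Fin n)} (hdesc : p j < p i) : v p = s * v (p * swap i j) := by
  have heigen := mem_trivialSpace.mp hv i (hij ▸ hj)
  rw [heckeGen_eq_heckeOp s hij] at heigen
  have hp := congrArg (fun f : EuclideanSpace ℝ (Perm (Fin n)) => f p) heigen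
  simp only [heckeOp_apply, if_pos hdesc, PiLp.smul_apply, smul_eq_mul] at hp
  linarith

theorem eq_zero_of_mem_trivialSpace {v : EuclideanSpace ℝ (Perm (Fin n))}
    (hv : v ∈ trivialSpace (s ^ 2) (heckeGen n s) m)
    (h0 : ∀ p : Perm (Fin n), StrictMonoOn p {a | (a : ℕ) < m} → v p = 0) : v = 0 := by
  ext p
  induction hN : inversions n p using Nat.strong_induction_on generalizing p with
  | _ N ih =>
  by_cases hp : StrictMonoOn p {a | (a : ℕ) < m}
  · exact h0 p hp
  · obtain ⟨i, j, hij, hj, hdesc⟩ := exists_descent hp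
    have hinv := inversions_mul_swap_add_one hij hdesc
    rw [apply_of_mem_trivialSpace hv hij hj hdesc, ih _ (by omega) _ rfl]
    exact mul_zero s

theorem finrank_trivialSpace_le (s : ℝ) (hm : m ≤ n) :
    Module.finrank ℝ (trivialSpace (s ^ 2) (heckeGen n s) m) ≤ n.descFactorial (n - m) := by
  let restrict : trivialSpace (s ^ 2) (heckeGen n s) m →ₗ[ℝ]
      ({p : Perm (Fin n) // StrictMonoOn p {a | (a : ℕ) < m}} → ℝ) :=
    { toFun := fun v p => (v : EuclideanSpace ℝ (Perm (Fin n))) p.1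
      map_add' := fun _ _ => rfl
      map_smul' := fun _ _ => rfl }
  have hinj : Function.Injective restrict := by
    rw [injective_iff_map_eq_zero]
    exact fun v hv =>
      Subtype.ext (eq_zero_of_mem_trivialSpace v.2 fun p hp => congrFun hv ⟨p, hp⟩)
  calc Module.finrank ℝ (trivialSpace (s ^ 2) (heckeGen n s) m)
      ≤ Nat.card {p : Perm (Fin n) // StrictMonoOn p {a | (a : ℕ) < m}} := by
        classical
        rw [Nat.card_eq_fintype_card, ← Module.finrank_fintype_fun_eq_card ℝ]
        exact LinearMap.finrank_le_finrank_of_injective hinj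
    _ ≤ n.descFactorial (n - m) := card_strictMonoOn_le hm

end RegularRepresentation

section EigenvalueBounds

variable {q D c : ℝ} {n m j ℓ : ℕ}

/-- The eigenvalue of the lumped transvection chain on a vector on which the Jucys–Murphy elements
act by scalars with sum `D`. -/
noncomputable def chainEigenvalue (q : ℝ) (n : ℕ) (D : ℝ) : ℝ :=
  (q ^ (n - 1) * D - ∑ k ∈ Finset.range n, q ^ k) /
    ((q ^ (n - 1) - 1) * ∑ k ∈ Finset.range n, q ^ k)

theorem chainEigenvalue_geom_sum (hq : 1 < q) (hn : 2 ≤ n) :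
    chainEigenvalue q n (∑ k ∈ Finset.range n, q ^ k) = 1 := by
  have hpow : 1 < q ^ (n - 1) := one_lt_pow₀ hq (by omega)
  have hsum : 0 < ∑ k ∈ Finset.range n, q ^ k :=
    Finset.sum_pos (fun k _ => by positivity) ⟨0, by simp; omega⟩
  rw [chainEigenvalue, ← sub_one_mul, div_self]
  exact mul_ne_zero (sub_pos.mpr hpow).ne' hsum.ne'

theorem chainEigenvalue_eq (hq : 1 < q) (n : ℕ) (D : ℝ) :
    chainEigenvalue q n D = (q ^ (n - 1) * ((q - 1) * D) - (q ^ n - 1)) /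
      ((q ^ (n - 1) - 1) * (q ^ n - 1)) := by
  have hq0 : q - 1 ≠ 0 := (sub_pos.mpr hq).ne'
  rw [chainEigenvalue, ← mul_div_mul_right _ _ hq0, sub_mul, mul_assoc (_ - _) (∑ _ ∈ _, _),
    geom_sum_mul]
  ring

theorem natCast_mul_pow_min_le (hq : 2 ≤ q) (hmj : m + j = n) (hj : 1 ≤ j) :
    n * q ^ min j m ≤ 2 * j * q ^ m := by
  obtain hle | hle := le_total j m
  · obtain ⟨d, rfl⟩ := Nat.exists_eq_add_of_le hle
    have hbernoulli : 1 + (d : ℝ) * 1 ≤ (1 + 1) ^ d := one_add_mul_le_pow (by norm_num) d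
    have hpow : (1 + 1) ^ d ≤ q ^ d := pow_le_pow_left₀ (by norm_num) (by linarith) d
    have hjd : (n : ℝ) ≤ 2 * j * (1 + d) := by
      exact_mod_cast (by nlinarith : n ≤ 2 * j * (1 + d))
    calc n * q ^ min j (j + d) ≤ 2 * j * (1 + d) * q ^ j := by rw [min_eq_left hle]; gcongr
      _ ≤ 2 * j * q ^ d * q ^ j := by gcongr; linarith
      _ = 2 * j * q ^ (j + d) := by ring
  · rw [min_eq_right hle]
    gcongr
    exact_mod_cast (by omega : n ≤ 2 * j)

theorem mul_le_three_mul_sub_one_mul_sub_one {a b : ℝ} (ha : 2 ≤ a) (hb : 4 ≤ b) :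
    a * b ≤ 3 * ((a - 1) * (b - 1)) := by
  nlinarith

theorem two_le_pow_sub_one (hq : 2 ≤ q) (hn : 2 ≤ n) : 2 ≤ q ^ (n - 1) :=
  hq.trans (le_self_pow₀ (by linarith) (by omega))

theorem four_le_pow (hq : 2 ≤ q) (hn : 2 ≤ n) : 4 ≤ q ^ n := by
  have := two_le_pow_sub_one hq hn
  rw [← Nat.sub_add_cancel (by omega : 1 ≤ n), pow_succ]
  nlinarith

theorem pow_mul_chainEigenvalue_le (hq : 2 ≤ q) (hn : 2 ≤ n) (hmj : m + j = n) (hj : 1 ≤ j)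
    (hD : D ≤ ∑ k ∈ Finset.range m, q ^ k + q ^ min j m / (q - 1) ^ 2) :
    q ^ j * chainEigenvalue q n D ≤ 1 + 6 * j / n := by
  have ha := two_le_pow_sub_one hq hn
  have hb := four_le_pow hq hn
  have hab := mul_le_three_mul_sub_one_mul_sub_one ha hb
  have hrow : (q - 1) * D ≤ q ^ m - 1 + q ^ min j m := by
    calc (q - 1) * D
        ≤ (q - 1) * (∑ k ∈ Finset.range m, q ^ k + q ^ min j m / (q - 1) ^ 2) := by
          gcongr; linarith
      _ = q ^ m - 1 + q ^ min j m / (q - 1) := by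
          rw [mul_add, mul_geom_sum]
          have : q - 1 ≠ 0 := by linarith
          field_simp
      _ ≤ q ^ m - 1 + q ^ min j m := by
          gcongr
          exact div_le_self (by positivity) (by linarith)
  have hpow : q ^ m * q ^ j = q ^ n := by rw [← pow_add, hmj]
  have hmin : q ^ j * q ^ min j m ≤ 2 * j / n * q ^ n := by
    rw [div_mul_eq_mul_div, le_div_iff₀ (by positivity)]
    calc q ^ j * q ^ min j m * n = q ^ j * (n * q ^ min j m) := by ring
      _ ≤ q ^ j * (2 * j * q ^ m) :=
          mul_le_mul_of_nonneg_left (natCast_mul_pow_min_le hq hmj hj) (by positivity)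
      _ = 2 * j * q ^ n := by rw [← hpow]; ring
  rw [chainEigenvalue_eq (by linarith), ← mul_div_assoc,
    div_le_iff₀ (mul_pos (by linarith) (by linarith))]
  set a := q ^ (n - 1)
  set b := q ^ n
  calc q ^ j * (a * ((q - 1) * D) - (b - 1))
      ≤ q ^ j * (a * (q ^ m - 1 + q ^ min j m) - (b - 1)) := by gcongr
    _ = a * b + a * (q ^ j * q ^ min j m) - q ^ j * (a + b - 1) := by rw [← hpow]; ring
    _ ≤ a * b + a * (2 * j / n * b) - 1 * (a + b - 1) := by
        gcongr
        · linarith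
        · exact one_le_pow₀ (by linarith)
    _ = (a - 1) * (b - 1) + 2 * j / n * (a * b) := by ring
    _ ≤ (a - 1) * (b - 1) + 2 * j / n * (3 * ((a - 1) * (b - 1))) := by gcongr
    _ = (1 + 6 * j / n) * ((a - 1) * (b - 1)) := by ring

theorem pow_le_mul_pow_sub_one (hq : 2 ≤ q) (hn : 2 ≤ n) (hj : j < n) :
    q ^ j ≤ (1 + 6 * j / n) * (q ^ (n - 1) - 1) := by
  have ha := two_le_pow_sub_one hq hn
  obtain hlt | rfl : j < n - 1 ∨ j = n - 1 := by omega
  · have hdouble : q ^ j * 2 ≤ q ^ (n - 1) := by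
      calc q ^ j * 2 ≤ q ^ j * q := by gcongr
        _ = q ^ (j + 1) := (pow_succ q j).symm
        _ ≤ q ^ (n - 1) := pow_le_pow_right₀ (by linarith) hlt
    calc q ^ j ≤ q ^ (n - 1) - 1 := by linarith [one_le_pow₀ (by linarith : 1 ≤ q) (n := j)]
      _ ≤ (1 + 6 * j / n) * (q ^ (n - 1) - 1) :=
          le_mul_of_one_le_left (by linarith) (le_add_of_nonneg_right (by positivity))
  · have hratio : 1 ≤ 6 * ((n - 1 : ℕ) : ℝ) / n := by
      rw [one_le_div (by positivity)]
      exact_mod_cast (by omega : n ≤ 6 * (n - 1))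
    nlinarith

theorem neg_le_pow_mul_chainEigenvalue (hq : 2 ≤ q) (hn : 2 ≤ n) (hj : j < n) (hD : 0 ≤ D) :
    -(1 + 6 * j / n) ≤ q ^ j * chainEigenvalue q n D := by
  have ha := two_le_pow_sub_one hq hn
  have hb := four_le_pow hq hn
  have hpos : 0 ≤ q ^ (n - 1) * ((q - 1) * D) := by
    have : 0 ≤ q - 1 := by linarith
    positivity
  rw [chainEigenvalue_eq (by linarith), ← mul_div_assoc,
    le_div_iff₀ (mul_pos (by linarith) (by linarith))]
  calc -(1 + 6 * j / n) * ((q ^ (n - 1) - 1) * (q ^ n - 1))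
      = -((1 + 6 * j / n) * (q ^ (n - 1) - 1) * (q ^ n - 1)) := by ring
    _ ≤ -(q ^ j * (q ^ n - 1)) := by
        gcongr
        · linarith
        · exact pow_le_mul_pow_sub_one hq hn hj
    _ ≤ q ^ j * (q ^ (n - 1) * ((q - 1) * D) - (q ^ n - 1)) := by
        rw [← mul_neg]
        gcongr
        linarith

theorem abs_chainEigenvalue_le (hq : 2 ≤ q) (hn : 2 ≤ n) (hmj : m + j = n) (hj : 1 ≤ j)
    (hm : 1 ≤ m) (hD0 : 0 ≤ D)
    (hD : D ≤ ∑ k ∈ Finset.range m, q ^ k + q ^ min j m / (q - 1) ^ 2) :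
    |chainEigenvalue q n D| ≤ Real.exp (-(j * (Real.log q - 6 / n))) := by
  have hqj : 0 < q ^ j := by positivity
  calc |chainEigenvalue q n D| = |q ^ j * chainEigenvalue q n D| / q ^ j := by
        rw [abs_mul, abs_of_pos hqj, mul_div_cancel_left₀ _ hqj.ne']
    _ ≤ (1 + 6 * j / n) / q ^ j := by
        gcongr
        exact abs_le.mpr ⟨neg_le_pow_mul_chainEigenvalue hq hn (by omega) hD0,
          pow_mul_chainEigenvalue_le hq hn hmj hj hD⟩
    _ ≤ Real.exp (6 * j / n) / q ^ j := by
        gcongr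
        linarith [Real.add_one_le_exp (6 * j / n : ℝ)]
    _ = Real.exp (-(j * (Real.log q - 6 / n))) := by
        rw [← Real.exp_log hqj, Real.log_pow, ← Real.exp_sub]
        congr 1
        ring

theorem chainEigenvalue_pow_le (hq : 2 ≤ q) (hn : 2 ≤ n) (hmj : m + j = n) (hj : 1 ≤ j)
    (hm : 1 ≤ m) (hD0 : 0 ≤ D)
    (hD : D ≤ ∑ k ∈ Finset.range m, q ^ k + q ^ min j m / (q - 1) ^ 2)
    (hlog : 6 / n < Real.log q) (hℓ : (Real.log n + c) / (Real.log q - 6 / n) ≤ ℓ) :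
    chainEigenvalue q n D ^ (2 * ℓ) ≤ Real.exp (-2 * c) ^ j / (n : ℝ) ^ (2 * j) := by
  have hn0 : (0 : ℝ) < n := by positivity
  rw [div_le_iff₀ (sub_pos.mpr hlog)] at hℓ
  calc chainEigenvalue q n D ^ (2 * ℓ) = |chainEigenvalue q n D| ^ (2 * ℓ) :=
        ((even_two_mul ℓ).pow_abs _).symm
    _ ≤ Real.exp (-(j * (Real.log q - 6 / n))) ^ (2 * ℓ) := by
        gcongr
        exact abs_chainEigenvalue_le hq hn hmj hj hm hD0 hD
    _ = Real.exp (-(2 * j) * (ℓ * (Real.log q - 6 / n))) := by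
        rw [← Real.exp_nat_mul]
        push_cast
        ring_nf
    _ ≤ Real.exp (-(2 * j) * (Real.log n + c)) := by
        rw [Real.exp_le_exp]
        exact mul_le_mul_of_nonpos_left hℓ (by linarith [Nat.cast_nonneg (α := ℝ) j])
    _ = Real.exp (-2 * c) ^ j / (n : ℝ) ^ (2 * j) := by
        rw [← Real.exp_nat_mul, ← Real.exp_log (pow_pos hn0 (2 * j)), Real.log_pow,
          ← Real.exp_sub]
        push_cast
        ring_nf

end EigenvalueBounds

section PermMatrix

open Equiv Matrix

variable {ι R : Type*} [Fintype ι] [DecidableEq ι] [CommRing R]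

theorem permMatrix_mul_apply (σ : Perm ι) (M : Matrix ι ι R) (a b : ι) :
    (σ.permMatrix R * M) a b = M (σ a) b := by
  rw [Perm.permMatrix, PEquiv.toMatrix_toPEquiv_mul]
  rfl

theorem mul_permMatrix_apply (σ : Perm ι) (M : Matrix ι ι R) (a b : ι) :
    (M * σ.permMatrix R) a b = M a (σ.symm b) := by
  rw [Perm.permMatrix, PEquiv.mul_toMatrix_toPEquiv]
  rfl

theorem permMatrix_swap_mul_self (i j : ι) :
    (swap i j).permMatrix R * (swap i j).permMatrix R = 1 := by
  rw [← permMatrix_mul, Equiv.swap_mul_self, permMatrix_one]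

theorem isUnit_det_permMatrix (σ : Perm ι) : IsUnit (σ.permMatrix R).det := by
  rw [det_permutation]
  exact (Perm.sign σ).isUnit.map (Int.castRingHom R)

theorem transvection_mul_permMatrix (σ : Perm ι) (i j : ι) (t : R) :
    transvection i j t * σ.permMatrix R = σ.permMatrix R * transvection (σ i) (σ j) t := by
  ext a b
  simp only [mul_permMatrix_apply, permMatrix_mul_apply, transvection, Matrix.add_apply, one_apply,
    single_apply, EmbeddingLike.apply_eq_iff_eq, Equiv.eq_symm_apply]

end PermMatrix

section Borel

open Equiv Matrix

variable {n : ℕ} {F : Type*} [Field F] {i j : Fin n} {a b c : Matrix (Fin n) (Fin n) F}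

theorem mul_mem_borelSubgroup (ha : a ∈ borelSubgroup n F) (hb : b ∈ borelSubgroup n F) :
    a * b ∈ borelSubgroup n F :=
  ⟨ha.1.mul hb.1, det_mul a b ▸ ha.2.mul hb.2⟩

theorem one_mem_borelSubgroup : (1 : Matrix (Fin n) (Fin n) F) ∈ borelSubgroup n F :=
  ⟨blockTriangular_one, by rw [det_one]; exact isUnit_one⟩

theorem inv_mem_borelSubgroup (hb : b ∈ borelSubgroup n F) : b⁻¹ ∈ borelSubgroup n F := by
  obtain ⟨htri, hdet⟩ := hb
  have := b.invertibleOfIsUnitDet hdet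
  exact ⟨blockTriangular_inv_of_blockTriangular htri, det_nonsing_inv b ▸ hdet.ringInverse⟩

theorem transvection_mem_borelSubgroup (hij : i < j) (t : F) :
    transvection i j t ∈ borelSubgroup n F :=
  ⟨blockTriangular_transvection hij.le t, det_transvection_of_ne i j hij.ne t ▸ isUnit_one⟩

theorem diag_ne_zero_of_mem_borelSubgroup (hb : b ∈ borelSubgroup n F) (i : Fin n) :
    b i i ≠ 0 := by
  have hdet := hb.2.ne_zero
  rw [det_of_isUpperTriangular hb.1] at hdet
  exact Finset.prod_ne_zero_iff.mp hdet i (Finset.mem_univ i)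

theorem swap_conj_mem_borelSubgroup (hij : (i : ℕ) + 1 = j) (hc : c ∈ borelSubgroup n F)
    (hcij : c i j = 0) :
    (swap i j).permMatrix F * c * (swap i j).permMatrix F ∈ borelSubgroup n F := by
  refine ⟨fun a b hab => ?_, ?_⟩
  · rw [mul_permMatrix_apply, permMatrix_mul_apply, symm_swap]
    by_cases h : b = i ∧ a = j
    · rw [h.1, h.2, swap_apply_left, swap_apply_right, hcij]
    · exact hc.1 (swap_lt_swap_of_ne hij hab h)
  · rw [det_mul, det_mul]
    exact ((isUnit_det_permMatrix _).mul hc.2).mul (isUnit_det_permMatrix _)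

theorem exists_swap_mul_transvection_mul (hij : (i : ℕ) + 1 = j) (hb : b ∈ borelSubgroup n F)
    (t : F) :
    ∃ b' ∈ borelSubgroup n F, (swap i j).permMatrix F * transvection i j t * b =
      b' * ((swap i j).permMatrix F * transvection i j ((b i j + t * b j j) / b i i)) := by
  have hlt : i < j := by omega
  set u := (b i j + t * b j j) / b i i with hu
  set c := transvection i j t * b * transvection i j (-u) with hc
  have hcb : c ∈ borelSubgroup n F := mul_mem_borelSubgroup
    (mul_mem_borelSubgroup (transvection_mem_borelSubgroup hlt t) hb)
    (transvection_mem_borelSubgroup hlt _)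
  have hcij : c i j = 0 := by
    have hbi := diag_ne_zero_of_mem_borelSubgroup hb i
    have hbji : b j i = 0 := hb.1 hlt
    rw [hc, mul_transvection_apply_same, transvection_mul_apply_same, transvection_mul_apply_same,
      hbji, hu]
    field_simp
    ring
  have hcu : c * transvection i j u = transvection i j t * b := by
    rw [hc, mul_assoc, transvection_mul_transvection_same _ _ hlt.ne, neg_add_cancel,
      transvection_zero, mul_one]
  refine ⟨_, swap_conj_mem_borelSubgroup hij hcb hcij, ?_⟩
  set w := (swap i j).permMatrix F with hw
  calc
    w * transvection i j t * b = w * c * transvection i j u := by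
      rw [mul_assoc, mul_assoc w c, hcu]
    _ = w * c * (w * w) * transvection i j u := by rw [hw, permMatrix_swap_mul_self, mul_one]
    _ = w * c * w * (w * transvection i j u) := by simp only [mul_assoc]

theorem swap_mul_transvection_mul_transvection_mem_borelSubgroup (hij : i < j) {t : F}
    (ht : t ≠ 0) :
    (swap i j).permMatrix F * transvection i j t * transvection j i (-t⁻¹) ∈
      borelSubgroup n F := by
  refine ⟨fun a b hab => ?_, ?_⟩
  · change b < a at hab
    rw [mul_assoc, permMatrix_mul_apply]
    by_cases haj : a = j
    · rw [haj, swap_apply_right, transvection_mul_apply_same]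
      by_cases hbi : b = i
      · simp [hbi, transvection, hij.ne', ht]
      · simp [transvection, one_apply, Ne.symm hbi, hij.ne', (haj ▸ hab).ne']
    by_cases hai : a = i
    · rw [hai, swap_apply_left, transvection_mul_apply_of_ne _ _ _ _ hij.ne']
      simp [transvection, one_apply, (hai ▸ hab).ne', ((hai ▸ hab).trans hij).ne']
    · rw [swap_apply_of_ne_of_ne hai haj, transvection_mul_apply_of_ne _ _ _ _ hai]
      simp [transvection, one_apply, Ne.symm haj, hab.ne']
  · rw [det_mul, det_mul, det_transvection_of_ne _ _ hij.ne, det_transvection_of_ne _ _ hij.ne',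
      mul_one, mul_one]
    exact isUnit_det_permMatrix _

end Borel

section Biinvariant

open Equiv Matrix

variable {n : ℕ} {F α : Type*} [Field F] {i j : Fin n} {h : Matrix (Fin n) (Fin n) F → α}

/-- A function on matrices invariant under both translation actions of the Borel subgroup. -/
structure IsBiinvariant (h : Matrix (Fin n) (Fin n) F → α) : Prop where
  left : ∀ b ∈ borelSubgroup n F, ∀ g, h (b * g) = h g
  right : ∀ b ∈ borelSubgroup n F, ∀ g, h (g * b) = h g

/-- Convolution with the double coset `B w B` of the transposition `w` of `i` and `j`; for adjacent
`i` and `j` that coset is the disjoint union of the cosets of `w * transvection i j t`. -/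
def cosetOp [Fintype F] [AddCommMonoid α] (i j : Fin n) (h : Matrix (Fin n) (Fin n) F → α) :
    Matrix (Fin n) (Fin n) F → α :=
  fun g => ∑ t : F, h ((swap i j).permMatrix F * transvection i j t * g)

theorem IsBiinvariant.cosetOp [Fintype F] [AddCommMonoid α] (hh : IsBiinvariant h)
    (hij : (i : ℕ) + 1 = j) : IsBiinvariant (cosetOp i j h) where
  left b hb g := by
    have hbi := diag_ne_zero_of_mem_borelSubgroup hb i
    have hbj := diag_ne_zero_of_mem_borelSubgroup hb j
    have hinj : Function.Injective fun t : F => (b i j + t * b j j) / b i i := fun t t' htt =>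
      mul_right_cancel₀ hbj (add_left_cancel ((div_left_inj' hbi).mp htt))
    refine Eq.trans (Finset.sum_congr rfl fun t _ => ?_)
      ((Finite.injective_iff_bijective.mp hinj).sum_comp
        fun t => h ((swap i j).permMatrix F * transvection i j t * g))
    obtain ⟨b', hb', heq⟩ := exists_swap_mul_transvection_mul hij hb t
    rw [← mul_assoc, heq, mul_assoc b', hh.left b' hb']
  right b hb g := Finset.sum_congr rfl fun t _ => by rw [← mul_assoc, hh.right b hb]

theorem IsBiinvariant.apply_swap_mul_transvection_of_lt (hh : IsBiinvariant h)
    {σ : Perm (Fin n)} (hσ : σ i < σ j) (t : F) :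
    h ((swap i j).permMatrix F * transvection i j t * σ.permMatrix F) =
      h ((σ * swap i j).permMatrix F) := by
  rw [mul_assoc, transvection_mul_permMatrix, ← mul_assoc, ← permMatrix_mul,
    hh.right _ (transvection_mem_borelSubgroup hσ t)]

theorem IsBiinvariant.apply_swap_mul_transvection_of_gt (hh : IsBiinvariant h) (hij : i < j)
    {σ : Perm (Fin n)} (hσ : σ j < σ i) {t : F} (ht : t ≠ 0) :
    h ((swap i j).permMatrix F * transvection i j t * σ.permMatrix F) = h (σ.permMatrix F) := by
  have hinv : transvection j i (-t⁻¹) * transvection j i t⁻¹ = 1 := by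
    rw [transvection_mul_transvection_same _ _ hij.ne', neg_add_cancel, transvection_zero]
  rw [← mul_one (_ * transvection i j t), ← hinv, ← mul_assoc, mul_assoc _ _ (σ.permMatrix F),
    hh.left _ (swap_mul_transvection_mul_transvection_mem_borelSubgroup hij ht),
    transvection_mul_permMatrix, hh.right _ (transvection_mem_borelSubgroup hσ _)]

theorem IsBiinvariant.cosetOp_apply_of_lt [Fintype F] [AddCommMonoid α] (hh : IsBiinvariant h)
    {σ : Perm (Fin n)} (hσ : σ i < σ j) :
    TransvectionChain.cosetOp i j h (σ.permMatrix F) =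
      Fintype.card F • h ((σ * swap i j).permMatrix F) := by
  simp only [TransvectionChain.cosetOp, hh.apply_swap_mul_transvection_of_lt hσ,
    Finset.sum_const, Finset.card_univ]

theorem IsBiinvariant.cosetOp_apply_of_gt [Fintype F] [AddCommMonoid α] (hh : IsBiinvariant h)
    (hij : i < j) {σ : Perm (Fin n)} (hσ : σ j < σ i) :
    TransvectionChain.cosetOp i j h (σ.permMatrix F) =
      h ((σ * swap i j).permMatrix F) + (Fintype.card F - 1) • h (σ.permMatrix F) := by
  classical
  rw [TransvectionChain.cosetOp, ← Finset.add_sum_erase _ _ (Finset.mem_univ (0 : F)),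
    Finset.sum_congr rfl fun t ht =>
      hh.apply_swap_mul_transvection_of_gt hij hσ (Finset.ne_of_mem_erase ht),
    Finset.sum_const, Finset.card_erase_of_mem (Finset.mem_univ _), Finset.card_univ,
    transvection_zero, mul_one, ← permMatrix_mul]

/-- Multiplication by the weight `s ^ I`, the square root of the unnormalized Mallows weight when
`s ^ 2 = q`; conjugation by it makes the chain symmetric. -/
noncomputable def sqrtWeight (s : ℝ) :
    (Perm (Fin n) → ℝ) →ₗ[ℝ] EuclideanSpace ℝ (Perm (Fin n)) where
  toFun f := WithLp.toLp 2 fun σ => s ^ inversions n σ * f σ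
  map_add' f g := by
    ext σ
    exact mul_add _ _ _
  map_smul' r f := by
    ext σ
    exact mul_left_comm _ _ _

theorem sqrtWeight_apply (s : ℝ) (f : Perm (Fin n) → ℝ) (σ : Perm (Fin n)) :
    sqrtWeight s f σ = s ^ inversions n σ * f σ := rfl

/-- The restriction of a function on matrices to the permutation matrices, weighted so that
convolution with double cosets becomes the regular representation `heckeOp`. -/
noncomputable def weightedRestrict (s : ℝ) (h : Matrix (Fin n) (Fin n) F → ℝ) :
    EuclideanSpace ℝ (Perm (Fin n)) :=
  sqrtWeight s fun σ => h (σ.permMatrix F)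

theorem weightedRestrict_cosetOp [Fintype F] {s : ℝ} (hs : s ^ 2 = Fintype.card F)
    {h : Matrix (Fin n) (Fin n) F → ℝ} (hh : IsBiinvariant h) (hij : (i : ℕ) + 1 = j) :
    weightedRestrict s (cosetOp i j h) = heckeOp s i j (weightedRestrict s h) := by
  have hlt : i < j := by omega
  ext σ
  simp only [weightedRestrict, sqrtWeight_apply, heckeOp_apply]
  obtain hσ | hσ := lt_or_gt_of_ne (σ.injective.ne hlt.ne)
  · rw [if_neg hσ.not_gt, inversions_mul_swap hij hσ, hh.cosetOp_apply_of_lt hσ, nsmul_eq_mul, ← hs]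
    ring
  · rw [if_pos hσ, ← inversions_mul_swap_add_one hij hσ, hh.cosetOp_apply_of_gt hlt hσ,
      nsmul_eq_mul, Nat.cast_sub Fintype.card_pos, Nat.cast_one, hs]
    ring

end Biinvariant

section Shears

open Equiv Matrix

variable {ι R : Type*} [DecidableEq ι] [CommRing R] {k : ι} {x y : ι → R}

/-- The matrix `1 + e_k xᵀ`, which adds the row vector `x` to row `k` of the identity. -/
def rowShear (k : ι) (x : ι → R) : Matrix ι ι R :=
  1 + vecMulVec (Pi.single k 1) x

/-- The matrix `1 + y e_kᵀ`, which adds the column vector `y` to column `k` of the identity. -/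
def colShear (k : ι) (y : ι → R) : Matrix ι ι R :=
  1 + vecMulVec y (Pi.single k 1)

theorem transpose_rowShear (k : ι) (x : ι → R) : (rowShear k x)ᵀ = colShear k x := by
  rw [rowShear, colShear, transpose_add, transpose_one, transpose_vecMulVec]

theorem rowShear_apply (k : ι) (x : ι → R) (a b : ι) :
    rowShear k x a b = (if a = b then 1 else 0) + if a = k then x b else 0 := by
  simp [rowShear, one_apply, vecMulVec_apply, Pi.single_apply]

theorem colShear_apply (k : ι) (y : ι → R) (a b : ι) :
    colShear k y a b = (if a = b then 1 else 0) + if b = k then y a else 0 := by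
  rw [← transpose_rowShear, transpose_apply, rowShear_apply]
  simp only [eq_comm]

theorem rowShear_zero (k : ι) : rowShear k (0 : ι → R) = 1 := by
  rw [rowShear, vecMulVec_zero, add_zero]

theorem colShear_zero (k : ι) : colShear k (0 : ι → R) = 1 := by
  rw [colShear, zero_vecMulVec, add_zero]

theorem rowShear_single (i j : ι) (t : R) : rowShear i (Pi.single j t) = transvection i j t := by
  ext a b
  rw [rowShear_apply, transvection, Matrix.add_apply, one_apply, single_apply, Pi.single_apply]
  simp only [← ite_and, eq_comm]

theorem colShear_single (i j : ι) (t : R) : colShear j (Pi.single i t) = transvection i j t := by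
  rw [← transpose_rowShear, rowShear_single, transvection, transvection, transpose_add,
    transpose_one, transpose_single]

theorem comp_swap_of_eq_zero {i j : ι} (hi : x i = 0) (hj : x j = 0) : x ∘ swap i j = x := by
  ext a
  simp only [Function.comp_apply, swap_apply_def]
  split_ifs with hai haj
  · rw [hai, hi, hj]
  · rw [haj, hi, hj]
  · rfl

variable [Fintype ι]

theorem rowShear_mul_rowShear (hx : x k = 0) (y : ι → R) :
    rowShear k x * rowShear k y = rowShear k (x + y) := by
  rw [rowShear, rowShear, rowShear, mul_add, mul_one, add_mul, one_mul, vecMulVec_mul_vecMulVec,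
    dotProduct_single, hx, zero_mul, zero_smul, vecMulVec_zero, vecMulVec_add]
  abel

theorem colShear_mul_colShear (x : ι → R) (hy : y k = 0) :
    colShear k x * colShear k y = colShear k (x + y) := by
  rw [← transpose_rowShear, ← transpose_rowShear, ← transpose_mul, rowShear_mul_rowShear hy,
    transpose_rowShear, add_comm]

theorem swap_conj_rowShear (i j : ι) (x : ι → R) :
    (swap i j).permMatrix R * rowShear i x * (swap i j).permMatrix R =
      rowShear j (x ∘ swap i j) := by
  ext a b
  simp only [mul_permMatrix_apply, permMatrix_mul_apply, rowShear_apply, symm_swap,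
    EmbeddingLike.apply_eq_iff_eq, swap_apply_eq_iff, swap_apply_left, Function.comp_apply]

theorem swap_conj_colShear (i j : ι) (y : ι → R) :
    (swap i j).permMatrix R * colShear i y * (swap i j).permMatrix R =
      colShear j (y ∘ swap i j) := by
  have h := congrArg transpose (swap_conj_rowShear i j y)
  simpa only [transpose_mul, transpose_permMatrix, swap_inv, transpose_rowShear, mul_assoc] using h

theorem colShear_conj_rowShear (hy : y k = 0) (x : ι → R) :
    colShear k y * rowShear k x * colShear k (-y) =
      1 + vecMulVec (Pi.single k 1 + y) (x - (x ⬝ᵥ y) • Pi.single k 1) := by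
  rw [rowShear, mul_add, add_mul, mul_one, mul_vecMulVec, vecMulVec_mul,
    colShear_mul_colShear y (by simp [hy]), add_neg_cancel, colShear_zero]
  congr 2
  · rw [colShear, add_mulVec, one_mulVec, vecMulVec_mulVec, single_dotProduct]
    simp
  · rw [colShear, vecMul_add, vecMul_one, vecMul_vecMulVec, dotProduct_neg, neg_smul,
      sub_eq_add_neg]

theorem rowShear_add_single {i j : ι} (hij : i ≠ j) (hi : x i = 0) (hj : x j = 0) (a : R) :
    rowShear j (x + Pi.single i a) =
      (swap i j).permMatrix R * transvection i j a * rowShear i x * (swap i j).permMatrix R := by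
  have hsingle : Pi.single j a ∘ swap i j = (Pi.single i a : ι → R) := by
    rw [Pi.single_comp_equiv, symm_swap, swap_apply_right]
  rw [mul_assoc _ (transvection i j a), ← rowShear_single,
    rowShear_mul_rowShear (Pi.single_eq_of_ne hij _), swap_conj_rowShear, Pi.add_comp, hsingle,
    comp_swap_of_eq_zero hi hj, add_comm]

theorem colShear_add_single {i j : ι} (hij : i ≠ j) (hi : y i = 0) (hj : y j = 0) (b : R) :
    colShear j (y + Pi.single i b) =
      (swap i j).permMatrix R * colShear i y * (swap i j).permMatrix R * transvection i j b := by
  rw [swap_conj_colShear, comp_swap_of_eq_zero hi hj, ← colShear_single,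
    colShear_mul_colShear _ (Pi.single_eq_of_ne hij.symm _)]

theorem rowShear_mul_colShear_add_single {i j : ι} (hij : i ≠ j) (hxi : x i = 0) (hxj : x j = 0)
    (hyi : y i = 0) (hyj : y j = 0) (a b : R) :
    rowShear j (x + Pi.single i a) * colShear j (y + Pi.single i b) =
      (swap i j).permMatrix R * transvection i j a * (rowShear i x * colShear i y) *
        ((swap i j).permMatrix R * transvection i j b) := by
  rw [rowShear_add_single hij hxi hxj, colShear_add_single hij hyi hyj]
  set w := (swap i j).permMatrix R with hw
  calc
    _ = w * transvection i j a * rowShear i x * (w * w) * colShear i y *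
        (w * transvection i j b) := by simp only [mul_assoc]
    _ = _ := by rw [hw, permMatrix_swap_mul_self, mul_one]; simp only [mul_assoc]

end Shears

section SupportedVectors

variable {ι R M : Type*} [Fintype ι] [DecidableEq ι] [Fintype R] [AddCommMonoid M]
  {S T : Finset ι} {x : ι → R}

/-- The finite set of vectors over a finite ring whose support is contained in `S`. -/
def supportedVectors (R : Type*) [Fintype R] [Zero R] (S : Finset ι) : Finset (ι → R) :=
  Fintype.piFinset fun i => if i ∈ S then Finset.univ else {0}

theorem mem_supportedVectors [Zero R] : x ∈ supportedVectors R S ↔ ∀ i ∉ S, x i = 0 := by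
  rw [supportedVectors, Fintype.mem_piFinset]
  refine forall_congr' fun i => ?_
  by_cases hi : i ∈ S <;> simp [hi]

theorem supportedVectors_empty [Zero R] : supportedVectors R (∅ : Finset ι) = {0} := by
  ext x
  simp [mem_supportedVectors, funext_iff]

theorem card_supportedVectors [Zero R] (S : Finset ι) :
    (supportedVectors R S).card = Fintype.card R ^ S.card := by
  simp only [supportedVectors, Fintype.card_piFinset, apply_ite Finset.card, Finset.card_univ,
    Finset.card_singleton, Finset.prod_ite_mem, Finset.univ_inter, Finset.prod_const]

theorem sum_supportedVectors_neg [AddGroup R] (S : Finset ι) (f : (ι → R) → M) :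
    ∑ x ∈ supportedVectors R S, f (-x) = ∑ x ∈ supportedVectors R S, f x := by
  have hneg : ∀ x ∈ supportedVectors R S, -x ∈ supportedVectors R S := fun x hx =>
    mem_supportedVectors.mpr fun i hi => by simp [mem_supportedVectors.mp hx i hi]
  exact Finset.sum_nbij' Neg.neg Neg.neg hneg hneg (fun x _ => neg_neg x) (fun x _ => neg_neg x)
    fun _ _ => rfl

theorem sum_supportedVectors_singleton [Zero R] (i : ι) (f : (ι → R) → M) :
    ∑ x ∈ supportedVectors R {i}, f x = ∑ a : R, f (Pi.single i a) := by
  have hsingle : ∀ x ∈ supportedVectors R {i}, Pi.single i (x i) = x := by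
    intro x hx
    ext j
    obtain rfl | hj := eq_or_ne j i
    · simp
    · simp [hj, mem_supportedVectors.mp hx j (Finset.notMem_singleton.mpr hj)]
  refine Finset.sum_nbij' (fun x => x i) (fun a => Pi.single i a) (fun _ _ => Finset.mem_univ _)
    (fun a _ => mem_supportedVectors.mpr fun j hj => ?_) hsingle
    (fun a _ => Pi.single_eq_same (M := fun _ => R) i a) fun x hx => by rw [hsingle x hx]
  exact Pi.single_eq_of_ne (M := fun _ => R) (Finset.notMem_singleton.mp hj) a

theorem sum_supportedVectors_union [AddMonoid R] (hST : Disjoint S T) (f : (ι → R) → M) :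
    ∑ x ∈ supportedVectors R (S ∪ T), f x =
      ∑ x ∈ supportedVectors R S, ∑ y ∈ supportedVectors R T, f (x + y) := by
  have hsum : ∀ x ∈ supportedVectors R (S ∪ T), S.piecewise x 0 + T.piecewise x 0 = x := by
    intro x hx
    ext i
    by_cases hS : i ∈ S
    · simp [hS, Finset.disjoint_left.mp hST hS]
    by_cases hT : i ∈ T
    · simp [hS, hT]
    · simp [hS, hT, mem_supportedVectors.mp hx i (by simp [hS, hT])]
  rw [← Finset.sum_product']
  refine Finset.sum_nbij' (fun x => (S.piecewise x 0, T.piecewise x 0)) (fun p => p.1 + p.2)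
    (fun x _ => ?_) (fun p hp => mem_supportedVectors.mpr fun i hi => ?_) hsum (fun p hp => ?_)
    fun x hx => by rw [hsum x hx]
  · simp only [Finset.mem_product, mem_supportedVectors]
    exact ⟨fun i hi => Finset.piecewise_eq_of_notMem _ _ _ hi,
      fun i hi => Finset.piecewise_eq_of_notMem _ _ _ hi⟩
  all_goals simp only [Finset.mem_product, mem_supportedVectors] at hp
  · rw [Finset.notMem_union] at hi
    simp [hp.1 i hi.1, hp.2 i hi.2]
  · refine Prod.ext (funext fun i => ?_) (funext fun i => ?_)
    · by_cases hi : i ∈ S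
      · simp [hi, hp.2 i (Finset.disjoint_left.mp hST hi)]
      · simp [hi, hp.1 i hi]
    · by_cases hi : i ∈ T
      · simp [hi, hp.1 i (Finset.disjoint_right.mp hST hi)]
      · simp [hi, hp.2 i hi]

end SupportedVectors

section HookSum

open Equiv Matrix

variable {n : ℕ} {F : Type*} [Field F] {i j k : Fin n} {x y : Fin n → F}
  {h : Matrix (Fin n) (Fin n) F → ℝ}

theorem rowShear_mem_borelSubgroup (hx : ∀ i ≤ k, x i = 0) : rowShear k x ∈ borelSubgroup n F := by
  refine ⟨fun a b (hab : b < a) => ?_, isUnit_det_of_right_inverse (B := rowShear k (-x)) ?_⟩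
  · rw [rowShear_apply, if_neg hab.ne', zero_add, ite_eq_right_iff]
    exact fun hak => hx b (hak ▸ hab.le)
  · rw [rowShear_mul_rowShear (hx k le_rfl), add_neg_cancel, rowShear_zero]

theorem colShear_mem_borelSubgroup (hy : ∀ i, k ≤ i → y i = 0) :
    colShear k y ∈ borelSubgroup n F := by
  refine ⟨fun a b (hab : b < a) => ?_, isUnit_det_of_right_inverse (B := colShear k (-y)) ?_⟩
  · rw [colShear_apply, if_neg hab.ne', zero_add, ite_eq_right_iff]
    exact fun hbk => hy a (hbk ▸ hab.le)
  · rw [colShear_mul_colShear _ (by simp [hy k le_rfl]), add_neg_cancel, colShear_zero]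

theorem IsBiinvariant.const_smul (hh : IsBiinvariant h) (r : ℝ) : IsBiinvariant (r • h) where
  left b hb g := by simp only [Pi.smul_apply, hh.left b hb]
  right b hb g := by simp only [Pi.smul_apply, hh.right b hb]

theorem weightedRestrict_smul (s r : ℝ) (h : Matrix (Fin n) (Fin n) F → ℝ) :
    weightedRestrict s (r • h) = r • weightedRestrict s h :=
  (sqrtWeight s).map_smul r _

variable [Fintype F]

theorem sum_supportedVectors_Iio {M : Type*} [AddCommMonoid M] (hij : (i : ℕ) + 1 = j)
    (f : (Fin n → F) → M) :
    ∑ x ∈ supportedVectors F (Finset.Iio j), f x =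
      ∑ x ∈ supportedVectors F (Finset.Iio i), ∑ a : F, f (x + Pi.single i a) := by
  have hIio : Finset.Iio j = Finset.Iio i ∪ {i} := by
    ext a
    simp only [Finset.mem_Iio, Finset.mem_union, Finset.mem_singleton]
    omega
  rw [hIio, sum_supportedVectors_union (by simp)]
  exact Finset.sum_congr rfl fun x _ => sum_supportedVectors_singleton i fun z => f (x + z)

/-- The normalized sum of the left translates of `h` over products of elementary matrices supported
on the part of row and column `k` before the diagonal. It realizes the `k`-th Jucys–Murphy element
on biinvariant functions. -/
noncomputable def hookSum (k : Fin n) (h : Matrix (Fin n) (Fin n) F → ℝ) :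
    Matrix (Fin n) (Fin n) F → ℝ :=
  fun g => ((Fintype.card F : ℝ) ^ (k : ℕ))⁻¹ *
    ∑ x ∈ supportedVectors F (Finset.Iio k), ∑ y ∈ supportedVectors F (Finset.Iio k),
      h (rowShear k x * colShear k y * g)

theorem hookSum_of_eq_zero (hk : (k : ℕ) = 0) (h : Matrix (Fin n) (Fin n) F → ℝ) :
    hookSum k h = h := by
  have hIio : Finset.Iio k = ∅ := by
    ext a
    simp [Fin.lt_def, hk]
  ext g
  simp [hookSum, hIio, supportedVectors_empty, rowShear_zero, colShear_zero, hk]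

theorem hookSum_eq_cosetOp (hij : (i : ℕ) + 1 = j) (h : Matrix (Fin n) (Fin n) F → ℝ) :
    hookSum j h = (Fintype.card F : ℝ)⁻¹ • cosetOp i j (hookSum i (cosetOp i j h)) := by
  have hne : i ≠ j := by omega
  have hzero : ∀ x ∈ supportedVectors F (Finset.Iio i), x i = 0 ∧ x j = 0 := fun x hx =>
    ⟨mem_supportedVectors.mp hx i (by simp), mem_supportedVectors.mp hx j (by simp; omega)⟩
  ext g
  simp only [Pi.smul_apply, smul_eq_mul, hookSum, cosetOp, ← hij, ← Finset.mul_sum,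
    sum_supportedVectors_Iio hij]
  rw [← mul_assoc, ← mul_inv, ← pow_succ']
  congr 1
  conv_rhs => rw [Finset.sum_comm]
  refine Finset.sum_congr rfl fun x hx => ?_
  rw [Finset.sum_comm_cycle]
  refine Finset.sum_congr rfl fun b _ => ?_
  rw [Finset.sum_comm]
  refine Finset.sum_congr rfl fun y hy => Finset.sum_congr rfl fun a _ => ?_
  rw [rowShear_mul_colShear_add_single hne (hzero x hx).1 (hzero x hx).2 (hzero y hy).1
    (hzero y hy).2]
  simp only [mul_assoc]

theorem IsBiinvariant.hookSum (hh : IsBiinvariant h) (k : Fin n) : IsBiinvariant (hookSum k h) := by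
  obtain ⟨k, hk⟩ := k
  induction k generalizing h with
  | zero => rwa [hookSum_of_eq_zero rfl]
  | succ k ih =>
    have hij : ((⟨k, by omega⟩ : Fin n) : ℕ) + 1 = (⟨k + 1, hk⟩ : Fin n) := rfl
    rw [hookSum_eq_cosetOp hij]
    exact ((ih (hh.cosetOp hij) _).cosetOp hij).const_smul _

theorem weightedRestrict_hookSum {s : ℝ} (hs : s ^ 2 = Fintype.card F) (hh : IsBiinvariant h)
    (k : Fin n) :
    weightedRestrict s (hookSum k h) =
      jucysMurphy (s ^ 2) (heckeGen n s) k (weightedRestrict s h) := by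
  obtain ⟨k, hk⟩ := k
  induction k generalizing h with
  | zero => rw [hookSum_of_eq_zero rfl]; rfl
  | succ k ih =>
    have hij : ((⟨k, by omega⟩ : Fin n) : ℕ) + 1 = (⟨k + 1, hk⟩ : Fin n) := rfl
    have hcoset := hh.cosetOp hij
    rw [hookSum_eq_cosetOp hij, weightedRestrict_smul,
      weightedRestrict_cosetOp hs (hcoset.hookSum _) hij, ih hcoset,
      weightedRestrict_cosetOp hs hh hij, ← heckeGen_eq_heckeOp s hij, jucysMurphy, ← hs]
    rfl

theorem hookSum_one (k : Fin n) (g : Matrix (Fin n) (Fin n) F) :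
    hookSum k (fun _ => 1) g = (Fintype.card F : ℝ) ^ (k : ℕ) := by
  have hq : (Fintype.card F : ℝ) ≠ 0 := Nat.cast_ne_zero.mpr Fintype.card_ne_zero
  simp only [hookSum, Finset.sum_const, card_supportedVectors, Fin.card_Iio, nsmul_eq_mul, mul_one,
    Nat.cast_pow, inv_mul_cancel_left₀ (pow_ne_zero _ hq)]

theorem sum_colShear_conj_rowShear_of_mem (hh : IsBiinvariant h) (k : Fin n)
    (hy : ∀ i, k ≤ i → y i = 0) (g : Matrix (Fin n) (Fin n) F) :
    ∑ x ∈ supportedVectors F {k}ᶜ, h (colShear k y * rowShear k x * colShear k (-y) * g) =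
      (Fintype.card F : ℝ) ^ (n - 1 - k) *
        ∑ x ∈ supportedVectors F (Finset.Iio k), h (rowShear k x * colShear k (-y) * g) := by
  have hcompl : ({k}ᶜ : Finset (Fin n)) = Finset.Ioi k ∪ Finset.Iio k := by
    ext a
    simp only [Finset.mem_compl, Finset.mem_singleton, Finset.mem_union, Finset.mem_Ioi,
      Finset.mem_Iio]
    omega
  have hinv : ∀ z ∈ supportedVectors F (Finset.Ioi k), ∀ x,
      h (colShear k y * rowShear k (z + x) * colShear k (-y) * g) =
        h (rowShear k x * colShear k (-y) * g) := fun z hz x => by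
    have hz' : ∀ i ≤ k, z i = 0 := fun i hi => mem_supportedVectors.mp hz i (by simpa using hi)
    rw [← rowShear_mul_rowShear (hz' k le_rfl)]
    simp only [mul_assoc, hh.left _ (colShear_mem_borelSubgroup hy),
      hh.left _ (rowShear_mem_borelSubgroup hz')]
  rw [hcompl, sum_supportedVectors_union (Finset.disjoint_left.mpr fun a => by simp; omega),
    Finset.sum_congr rfl fun z hz => Finset.sum_congr rfl fun x _ => hinv z hz x, Finset.sum_const,
    card_supportedVectors, Fin.card_Ioi, nsmul_eq_mul, Nat.cast_pow]

theorem sum_colShear_conj_rowShear (hh : IsBiinvariant h) (k : Fin n)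
    (g : Matrix (Fin n) (Fin n) F) :
    ∑ y ∈ supportedVectors F (Finset.Iio k), ∑ x ∈ supportedVectors F {k}ᶜ,
      h (colShear k y * rowShear k x * colShear k (-y) * g) =
        (Fintype.card F : ℝ) ^ (n - 1) * hookSum k h g := by
  have hq : (Fintype.card F : ℝ) ≠ 0 := Nat.cast_ne_zero.mpr Fintype.card_ne_zero
  have hpow : (Fintype.card F : ℝ) ^ (n - 1 - k) =
      (Fintype.card F : ℝ) ^ (n - 1) * ((Fintype.card F : ℝ) ^ (k : ℕ))⁻¹ :=
    pow_sub₀ _ hq (by omega)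
  have hmem : ∀ y ∈ supportedVectors F (Finset.Iio k), ∀ i, k ≤ i → y i = 0 := fun y hy i hi =>
    mem_supportedVectors.mp hy i (by simpa using hi)
  rw [Finset.sum_congr rfl fun y hy => sum_colShear_conj_rowShear_of_mem hh k (hmem y hy) g,
    ← Finset.mul_sum, Finset.sum_comm, Finset.sum_congr rfl fun x _ =>
      sum_supportedVectors_neg _ fun y => h (rowShear k x * colShear k y * g), hpow, mul_assoc,
    hookSum]

end HookSum

section TransvectionParametrization

open Equiv Matrix

variable {ι R : Type*} [LinearOrder ι] {k l : ι} {x x' y z v w a b : ι → R}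

theorem exists_last_ne_zero [Finite ι] [Zero R] (hv : v ≠ 0) :
    ∃ k, v k ≠ 0 ∧ ∀ i, k < i → v i = 0 := by
  obtain ⟨k, hk⟩ :=
    (Set.toFinite (Function.support v)).exists_maximal (Function.support_nonempty_iff.mpr hv)
  exact ⟨k, hk.prop, fun i hki => by_contra fun hi => hk.not_prop_of_gt hki hi⟩

theorem vecMulVec_eq_of_normalized [Semiring R] [IsDomain R] (hv : v k = 1)
    (hv' : ∀ i, k < i → v i = 0) (hw : w l = 1) (hw' : ∀ i, l < i → w i = 0) (ha : a ≠ 0)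
    (hab : vecMulVec v a = vecMulVec w b) : k = l ∧ v = w ∧ a = b := by
  have hmul : ∀ i j, v i * a j = w i * b j := fun i j => by
    simpa only [vecMulVec_apply] using congrFun (congrFun hab i) j
  obtain ⟨j, hj⟩ := Function.ne_iff.mp ha
  have hk : w k * b j = a j := by rw [← hmul, hv, one_mul]
  obtain hkl | rfl | hlk := lt_trichotomy k l
  · have hb : b j = 0 := by rw [← one_mul (b j), ← hw, ← hmul, hv' l hkl, zero_mul]
    exact absurd (hk ▸ hb ▸ mul_zero _) hj
  · have hab' : a = b := by
      ext i
      rw [← one_mul (a i), ← hv, hmul, hw, one_mul]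
    exact ⟨rfl, funext fun i => mul_right_cancel₀ hj ((hmul i j).trans (by rw [hab'])), hab'⟩
  · exact absurd (hk ▸ hw' k hlk ▸ zero_mul _) hj

theorem eq_of_sub_smul_single_eq [Ring R] {s t : R} (hk : x k = x' k)
    (h : x - s • Pi.single k 1 = x' - t • Pi.single k 1) : x = x' := by
  ext i
  obtain rfl | hi := eq_or_ne i k
  · exact hk
  · simpa [hi] using congrFun h i

theorem colShear_conj_rowShear_injective [Fintype ι] [CommRing R] [IsDomain R]
    (hy : ∀ i, k ≤ i → y i = 0) (hz : ∀ i, l ≤ i → z i = 0) (hxk : x k = 0) (hx'l : x' l = 0)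
    (hx : x ≠ 0)
    (h : colShear k y * rowShear k x * colShear k (-y) =
      colShear l z * rowShear l x' * colShear l (-z)) : k = l ∧ y = z ∧ x = x' := by
  rw [colShear_conj_rowShear (hy k le_rfl), colShear_conj_rowShear (hz l le_rfl),
    add_right_inj] at h
  have hne : x - (x ⬝ᵥ y) • Pi.single k 1 ≠ 0 := fun h0 =>
    hx (eq_of_sub_smul_single_eq (t := 0) (k := k) hxk (by rw [h0, zero_smul, sub_zero]))
  obtain ⟨rfl, hyz, hxx'⟩ := vecMulVec_eq_of_normalized (k := k) (l := l)
    (by simp [hy k le_rfl]) (fun i hi => by simp [hy i hi.le, hi.ne'])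
    (by simp [hz l le_rfl]) (fun i hi => by simp [hz i hi.le, hi.ne']) hne h
  exact ⟨rfl, add_left_cancel hyz, eq_of_sub_smul_single_eq (hxk.trans hx'l.symm) hxx'⟩

variable {n : ℕ} {F : Type*} [Field F]

theorem colShear_conj_rowShear_mem_transvections {k : Fin n} {x y : Fin n → F} (hy : y k = 0)
    (hx : x k = 0) (hx0 : x ≠ 0) :
    colShear k y * rowShear k x * colShear k (-y) ∈ transvections n F := by
  refine ⟨_, _, fun h0 => hx0 ?_, fun h0 => ?_, ?_, colShear_conj_rowShear hy x⟩
  · exact eq_of_sub_smul_single_eq (t := 0) (k := k) hx (by rw [h0, zero_smul, sub_zero])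
  · simpa [hy] using congrFun h0 k
  · change (x - (x ⬝ᵥ y) • Pi.single k 1) ⬝ᵥ (Pi.single k 1 + y) = 0
    simp [sub_dotProduct, hy, hx]

theorem exists_eq_one_add_vecMulVec_of_mem_transvections {T : Matrix (Fin n) (Fin n) F}
    (hT : T ∈ transvections n F) :
    ∃ k, ∃ a v : Fin n → F, a ≠ 0 ∧ v k = 1 ∧ (∀ i, k < i → v i = 0) ∧ a ⬝ᵥ v = 0 ∧
      T = 1 + vecMulVec v a := by
  obtain ⟨a, v, ha, hv, hav, rfl⟩ := hT
  obtain ⟨k, hk, hk'⟩ := exists_last_ne_zero hv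
  refine ⟨k, v k • a, (v k)⁻¹ • v, smul_ne_zero hk ha, inv_mul_cancel₀ hk,
    fun i hi => by simp [hk' i hi], ?_, ?_⟩
  · rw [smul_dotProduct, dotProduct_smul, show a ⬝ᵥ v = 0 from hav, smul_zero, smul_zero]
  · rw [smul_vecMulVec, vecMulVec_smul, smul_smul, inv_mul_cancel₀ hk, one_smul]

theorem exists_colShear_conj_rowShear_eq {T : Matrix (Fin n) (Fin n) F}
    (hT : T ∈ transvections n F) :
    ∃ k : Fin n, ∃ y x : Fin n → F, (∀ i, k ≤ i → y i = 0) ∧ x k = 0 ∧ x ≠ 0 ∧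
      colShear k y * rowShear k x * colShear k (-y) = T := by
  obtain ⟨k, a, v, ha, hvk, hv, hav, rfl⟩ := exists_eq_one_add_vecMulVec_of_mem_transvections hT
  set y : Fin n → F := v - Pi.single k 1 with hy
  set x : Fin n → F := a - a k • Pi.single k 1 with hx
  have hyk : y k = 0 := by simp [hy, hvk]
  have hxy : x ⬝ᵥ y = -a k := by
    simp [hx, hy, sub_dotProduct, dotProduct_sub, hav, hvk]
  have hxa : x - (x ⬝ᵥ y) • Pi.single k 1 = a := by
    rw [hxy, hx, neg_smul, sub_neg_eq_add, sub_add_cancel]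
  refine ⟨k, y, x, fun i hi => ?_, by simp [hx], fun hx0 => ha ?_, ?_⟩
  · obtain rfl | hki := hi.eq_or_lt
    · exact hyk
    · simp [hy, hv i hki, hki.ne']
  · rw [← hxa, hx0, zero_dotProduct, zero_smul, sub_zero]
  · rw [colShear_conj_rowShear hyk, hxa, hy, add_sub_cancel]

variable [Fintype F]

theorem sum_transvections [DecidableEq F] {M : Type*} [AddCommMonoid M]
    (f : Matrix (Fin n) (Fin n) F → M) :
    ∑ T ∈ (Set.toFinite (transvections n F)).toFinset, f T =
      ∑ k, ∑ y ∈ supportedVectors F (Finset.Iio k), ∑ x ∈ (supportedVectors F {k}ᶜ).erase 0,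
        f (colShear k y * rowShear k x * colShear k (-y)) := by
  have hmem : ∀ p : (_ : Fin n) × (Fin n → F) × (Fin n → F),
      p ∈ Finset.univ.sigma (fun k => supportedVectors F (Finset.Iio k) ×ˢ
        (supportedVectors F {k}ᶜ).erase 0) ↔
        (∀ i, p.1 ≤ i → p.2.1 i = 0) ∧ p.2.2 p.1 = 0 ∧ p.2.2 ≠ 0 := fun p => by
    simp [mem_supportedVectors, and_comm]
  simp_rw [← Finset.sum_product']
  rw [Finset.sum_sigma']
  refine (Finset.sum_nbij (fun p : (_ : Fin n) × (Fin n → F) × (Fin n → F) =>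
    colShear p.1 p.2.1 * rowShear p.1 p.2.2 * colShear p.1 (-p.2.1)) (fun p hp => ?_) ?_
    (fun T hT => ?_) fun _ _ => rfl).symm
  · obtain ⟨hy, hx, hx0⟩ := (hmem p).mp hp
    exact (Set.Finite.mem_toFinset _).mpr
      (colShear_conj_rowShear_mem_transvections (hy _ le_rfl) hx hx0)
  · rintro ⟨k, y, x⟩ hp ⟨l, z, x'⟩ hp' heq
    obtain ⟨hy, hx, hx0⟩ := (hmem _).mp (Finset.mem_coe.mp hp)
    obtain ⟨hz, hx', -⟩ := (hmem _).mp (Finset.mem_coe.mp hp')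
    obtain ⟨rfl, rfl, rfl⟩ := colShear_conj_rowShear_injective hy hz hx hx' hx0 heq
    rfl
  · obtain ⟨k, y, x, hy, hx, hx0, rfl⟩ :=
      exists_colShear_conj_rowShear_eq ((Set.Finite.mem_toFinset _).mp (Finset.mem_coe.mp hT))
    exact ⟨⟨k, y, x⟩, Finset.mem_coe.mpr ((hmem _).mpr ⟨hy, hx, hx0⟩), rfl⟩

theorem sum_transvections_mul {h : Matrix (Fin n) (Fin n) F → ℝ} (hh : IsBiinvariant h)
    (g : Matrix (Fin n) (Fin n) F) :
    ∑ T ∈ (Set.toFinite (transvections n F)).toFinset, h (T * g) =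
      (Fintype.card F : ℝ) ^ (n - 1) * ∑ k, hookSum k h g -
        (∑ k ∈ Finset.range n, (Fintype.card F : ℝ) ^ k) * h g := by
  classical
  rw [sum_transvections fun T => h (T * g), eq_sub_iff_add_eq, Finset.mul_sum, Finset.sum_mul,
    ← Fin.sum_univ_eq_sum_range fun k => (Fintype.card F : ℝ) ^ k * h g, ← Finset.sum_add_distrib]
  refine Finset.sum_congr rfl fun k _ => ?_
  have hcard : (Fintype.card F : ℝ) ^ (k : ℕ) * h g =
      ∑ _y ∈ supportedVectors F (Finset.Iio k), h g := by
    rw [Finset.sum_const, card_supportedVectors, Fin.card_Iio, nsmul_eq_mul, Nat.cast_pow]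
  rw [← sum_colShear_conj_rowShear hh, hcard, ← Finset.sum_add_distrib]
  refine Finset.sum_congr rfl fun y hy => ?_
  have hyk : y k = 0 := mem_supportedVectors.mp hy k (by simp)
  have hone : colShear k y * rowShear k 0 * colShear k (-y) = 1 := by
    rw [rowShear_zero, mul_one, colShear_mul_colShear y (by simp [hyk]), add_neg_cancel,
      colShear_zero]
  rw [← Finset.sum_erase_add _ _ (mem_supportedVectors.mpr fun i _ => Pi.zero_apply i), hone,
    one_mul]

end TransvectionParametrization

section TraceBound

theorem pow_apply_of_apply_eq_smul {K E : Type*} [CommSemiring K] [AddCommMonoid E] [Module K E]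
    {f : Module.End K E} {v : E} {μ : K} (hf : f v = μ • v) (N : ℕ) : (f ^ N) v = μ ^ N • v := by
  induction N with
  | zero => rw [pow_zero, pow_zero, one_smul, Module.End.one_apply]
  | succ N ih => rw [pow_succ', Module.End.mul_apply, ih, map_smul, hf, smul_smul, pow_succ]

theorem trace_eq_sum_finrank_mul {K E ι : Type*} [Field K] [AddCommGroup E] [Module K E]
    [FiniteDimensional K E] [DecidableEq ι] {V : ι → Submodule K E} (hV : DirectSum.IsInternal V)
    {f : Module.End K E} {μ : ι → K} (hf : ∀ i, ∀ v ∈ V i, f v = μ i • v) {S : Finset ι}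
    (hS : ∀ i, i ∈ S ↔ V i ≠ ⊥) :
    LinearMap.trace K E f = ∑ i ∈ S, Module.finrank K (V i) * μ i := by
  have hmaps : ∀ i, Set.MapsTo f (V i) (V i) := fun i v hv => by
    rw [SetLike.mem_coe, hf i v hv]
    exact Submodule.smul_mem _ _ hv
  have hfin : {i | V i ≠ ⊥}.Finite := S.finite_toSet.subset fun i hi => (hS i).mpr hi
  have hS' : hfin.toFinset = S := by
    ext i
    rw [hfin.mem_toFinset, hS, Set.mem_ofPred_eq]
  rw [LinearMap.trace_eq_sum_trace_restrict' hV hfin hmaps, hS']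
  refine Finset.sum_congr rfl fun i _ => ?_
  have hscalar : f.restrict (hmaps i) = μ i • LinearMap.id := by
    ext v
    exact hf i v v.2
  rw [hscalar, map_smul, LinearMap.trace_id, smul_eq_mul, mul_comm]

theorem choose_mul_descFactorial_le {n m j : ℕ} (hmj : m + j = n) :
    (n.choose m * n.descFactorial j : ℝ) ≤ (n : ℝ) ^ (2 * j) / j.factorial := by
  rw [Nat.choose_symm_of_eq_add hmj.symm, two_mul, pow_add, mul_div_right_comm]
  refine mul_le_mul (Nat.choose_le_pow_div _ _) ?_ (by positivity) (by positivity)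
  exact_mod_cast Nat.descFactorial_le_pow n j

/-- The normalized sum of the transvections in a representation of the Hecke algebra `H_n(q)`,
written in terms of the Jucys–Murphy elements. -/
noncomputable def chainOp {E : Type*} [AddCommGroup E] [Module ℝ E] (n : ℕ) (q : ℝ)
    (T : ℕ → Module.End ℝ E) : Module.End ℝ E :=
  ((q ^ (n - 1) - 1) * ∑ k ∈ Finset.range n, q ^ k)⁻¹ •
    (q ^ (n - 1) • ∑ k : Fin n, jucysMurphy q T k - (∑ k ∈ Finset.range n, q ^ k) • 1)

variable {E : Type*} [NormedAddCommGroup E] [InnerProductSpace ℝ E]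
  {n m j ℓ : ℕ} {b q : ℝ} {T : ℕ → Module.End ℝ E} {c : Fin n → ℤ} {S : Finset (Fin n → ℤ)}

theorem chainOp_apply_of_mem_contentSpace {v : E} (hv : v ∈ contentSpace n q T c) :
    chainOp n q T v = chainEigenvalue q n (∑ k, q ^ c k) • v := by
  have hsum : (∑ k : Fin n, jucysMurphy q T k) v = (∑ k, q ^ c k) • v := by
    rw [LinearMap.sum_apply, Finset.sum_smul]
    exact Finset.sum_congr rfl fun k _ => mem_jmSpace.mp hv k
  rw [chainOp, LinearMap.smul_apply, LinearMap.sub_apply, LinearMap.smul_apply,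
    LinearMap.smul_apply, hsum, Module.End.one_apply, smul_smul, ← sub_smul, smul_smul,
    chainEigenvalue, div_eq_inv_mul]

theorem IsContentVector.sum_zpow_le (hc : IsContentVector c) (hq : 2 ≤ q)
    (hm : (firstOcc c).card = m) (hmj : m + j = n) :
    ∑ k, q ^ c k ≤ ∑ k ∈ Finset.range m, q ^ k + q ^ min j m / (q - 1) ^ 2 := by
  have hj : (firstOcc c)ᶜ.card = j := by
    rw [Finset.card_compl, Fintype.card_fin]
    omega
  have hcompl := hc.sum_compl_firstOcc_le (q := q) (by linarith)
  rw [hm, hj] at hcompl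
  rw [← Finset.sum_add_sum_compl (firstOcc c), hc.sum_firstOcc fun e => q ^ e, hm]
  simpa only [zpow_natCast] using add_le_add_right hcompl _

theorem IsContentVector.chainEigenvalue_pow_le (hc : IsContentVector c) (hq : 2 ≤ q) (hn : 2 ≤ n)
    (hlog : 6 / n < Real.log q) (hℓ : (Real.log n + b) / (Real.log q - 6 / n) ≤ ℓ)
    (hm : (firstOcc c).card = m) (hmj : m + j = n) :
    chainEigenvalue q n (∑ k, q ^ c k) ^ (2 * ℓ) ≤ Real.exp (-2 * b) ^ j / (n : ℝ) ^ (2 * j) := by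
  obtain rfl | hj := j.eq_zero_or_pos
  · have huniv : firstOcc c = Finset.univ := by
      rw [← Finset.card_eq_iff_eq_univ, Fintype.card_fin]
      omega
    have hsum : ∑ k, q ^ c k = ∑ k ∈ Finset.range n, q ^ k := by
      rw [← huniv, hc.sum_firstOcc fun e => q ^ e, hm, show m = n by omega]
      simp only [zpow_natCast]
    rw [hsum, chainEigenvalue_geom_sum (by linarith) hn]
    simp
  · have hfirst := hc.lt_card_firstOcc ⟨0, by omega⟩
    rw [hc.eq_zero _ rfl] at hfirst
    exact TransvectionChain.chainEigenvalue_pow_le hq hn hmj hj (by omega)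
      (Finset.sum_nonneg fun k _ => by positivity) (hc.sum_zpow_le hq hm hmj) hlog hℓ

namespace IsHeckeRep

variable [FiniteDimensional ℝ E]

theorem finite_contentSpace_ne_bot (hT : IsHeckeRep n q T) (hq : 1 < q) :
    {c | contentSpace n q T c ≠ ⊥}.Finite :=
  WellFoundedGT.finite_ne_bot_of_iSupIndep (hT.contentSpace_isInternal hq).submodule_iSupIndep

theorem sum_finrank_mul_chainEigenvalue_pow_le (hT : IsHeckeRep n q T) (hq : 2 ≤ q) (hn : 2 ≤ n)
    (hdim : Module.finrank ℝ (trivialSpace q T m) ≤ n.descFactorial (n - m))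
    (hlog : 6 / n < Real.log q) (hℓ : (Real.log n + b) / (Real.log q - 6 / n) ≤ ℓ)
    (hS : ∀ c ∈ S, contentSpace n q T c ≠ ⊥) (hmj : m + j = n) :
    ∑ c ∈ S with (firstOcc c).card = m, (Module.finrank ℝ (contentSpace n q T c) : ℝ) *
        chainEigenvalue q n (∑ k, q ^ c k) ^ (2 * ℓ) ≤ Real.exp (-2 * b) ^ j / j.factorial := by
  have hq1 : 1 < q := by linarith
  have hn0 : (0 : ℝ) < n := by exact_mod_cast (by omega : 0 < n)
  have hval : ∀ c ∈ S.filter (fun c => (firstOcc c).card = m),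
      chainEigenvalue q n (∑ k, q ^ c k) ^ (2 * ℓ) ≤
        Real.exp (-2 * b) ^ j / (n : ℝ) ^ (2 * j) := fun c hc => by
    obtain ⟨hcS, hcm⟩ := Finset.mem_filter.mp hc
    exact (hT.isContentVector hq1 (hS c hcS)).chainEigenvalue_pow_le hq hn hlog hℓ hcm hmj
  have hcount : ∑ c ∈ S with (firstOcc c).card = m, (Module.finrank ℝ (contentSpace n q T c) : ℝ) ≤
      (n : ℝ) ^ (2 * j) / j.factorial := by
    refine le_trans ?_ (choose_mul_descFactorial_le hmj)
    rw [show n - m = j by omega] at hdim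
    exact_mod_cast (hT.sum_finrank_card_firstOcc_le hq1 S hS m).trans (Nat.mul_le_mul_left _ hdim)
  calc _ ≤ ∑ c ∈ S with (firstOcc c).card = m, (Module.finrank ℝ (contentSpace n q T c) : ℝ) *
        (Real.exp (-2 * b) ^ j / (n : ℝ) ^ (2 * j)) :=
        Finset.sum_le_sum fun c hc => mul_le_mul_of_nonneg_left (hval c hc) (by positivity)
    _ ≤ (n : ℝ) ^ (2 * j) / j.factorial * (Real.exp (-2 * b) ^ j / (n : ℝ) ^ (2 * j)) := by
        rw [← Finset.sum_mul]
        exact mul_le_mul_of_nonneg_right hcount (by positivity)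
    _ = Real.exp (-2 * b) ^ j / j.factorial := by field_simp

theorem trace_chainOp_pow_le (hT : IsHeckeRep n q T) (hq : 2 ≤ q) (hn : 2 ≤ n)
    (hdim : ∀ m ≤ n, Module.finrank ℝ (trivialSpace q T m) ≤ n.descFactorial (n - m))
    (hlog : 6 / n < Real.log q) (hℓ : (Real.log n + b) / (Real.log q - 6 / n) ≤ ℓ) :
    LinearMap.trace ℝ E (chainOp n q T ^ (2 * ℓ)) ≤ Real.exp (Real.exp (-2 * b)) := by
  have hq1 : 1 < q := by linarith
  have hfin := hT.finite_contentSpace_ne_bot hq1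
  have hcard : ∀ c : Fin n → ℤ, (firstOcc c).card ≤ n := fun c => card_finset_fin_le _
  have hmaps : ∀ c ∈ hfin.toFinset, n - (firstOcc c).card ∈ Finset.range (n + 1) := fun c _ =>
    Finset.mem_range.mpr (by omega)
  rw [trace_eq_sum_finrank_mul (hT.contentSpace_isInternal hq1) (fun c v hv =>
      pow_apply_of_apply_eq_smul (chainOp_apply_of_mem_contentSpace hv) (2 * ℓ))
    fun c => hfin.mem_toFinset, ← Finset.sum_fiberwise_of_maps_to hmaps]
  refine (Finset.sum_le_sum fun j hj => ?_).trans
    (Real.sum_le_exp_of_nonneg (Real.exp_nonneg _) (n + 1))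
  rw [Finset.mem_range] at hj
  have hfilter : (hfin.toFinset.filter fun c => n - (firstOcc c).card = j) =
      hfin.toFinset.filter fun c => (firstOcc c).card = n - j :=
    Finset.filter_congr fun c _ => by have := hcard c; omega
  rw [hfilter]
  exact hT.sum_finrank_mul_chainEigenvalue_pow_le hq hn (hdim _ (by omega)) hlog hℓ
    (fun c hc => hfin.mem_toFinset.mp hc) (by omega)

end IsHeckeRep

end TraceBound

section ChainOperator

open Equiv Matrix

variable {n : ℕ} {F : Type*} [Field F]

theorem permMatrix_mem_bruhatCell (σ : Perm (Fin n)) : σ.permMatrix F ∈ bruhatCell n F σ :=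
  ⟨1, one_mem_borelSubgroup, 1, one_mem_borelSubgroup, by rw [one_mul, mul_one]⟩

theorem eq_of_permMatrix_mem_bruhatCell {σ τ : Perm (Fin n)}
    (h : σ.permMatrix F ∈ bruhatCell n F τ) : σ = τ := by
  obtain ⟨b₁, hb₁, b₂, hb₂, heq⟩ := h
  have hcancel : b₁⁻¹ * σ.permMatrix F = τ.permMatrix F * b₂ := by
    rw [heq, mul_assoc, nonsing_inv_mul_cancel_left _ _ hb₁.2]
  have hle : ∀ i, τ i ≤ σ i := fun i => by
    have hentry := congrFun (congrFun hcancel i) (σ i)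
    rw [mul_permMatrix_apply, permMatrix_mul_apply, symm_apply_apply] at hentry
    by_contra! hlt
    exact diag_ne_zero_of_mem_borelSubgroup (inv_mem_borelSubgroup hb₁) i
      (hentry.trans (hb₂.1 hlt))
  have hsum : ∑ i, (τ i : ℕ) = ∑ i, (σ i : ℕ) := by
    rw [Equiv.sum_comp τ fun i : Fin n => (i : ℕ), Equiv.sum_comp σ fun i : Fin n => (i : ℕ)]
  have heq := (Finset.sum_eq_sum_iff_of_le fun i _ => Fin.le_def.mp (hle i)).mp hsum
  exact Equiv.ext fun i => (Fin.ext (heq i (Finset.mem_univ i))).symm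

theorem isBiinvariant_mem_bruhatCell (τ : Perm (Fin n)) :
    IsBiinvariant fun g => g ∈ bruhatCell n F τ := by
  have hleft : ∀ b ∈ borelSubgroup n F, ∀ g ∈ bruhatCell n F τ, b * g ∈ bruhatCell n F τ := by
    rintro b hb _ ⟨b₁, hb₁, b₂, hb₂, rfl⟩
    exact ⟨b * b₁, mul_mem_borelSubgroup hb hb₁, b₂, hb₂, by simp only [mul_assoc]⟩
  have hright : ∀ b ∈ borelSubgroup n F, ∀ g ∈ bruhatCell n F τ, g * b ∈ bruhatCell n F τ := by
    rintro b hb _ ⟨b₁, hb₁, b₂, hb₂, rfl⟩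
    exact ⟨b₁, hb₁, b₂ * b, mul_mem_borelSubgroup hb₂ hb, by simp only [mul_assoc]⟩
  refine ⟨fun b hb g => propext ⟨fun hg => ?_, hleft b hb g⟩,
    fun b hb g => propext ⟨fun hg => ?_, hright b hb g⟩⟩
  · rw [← nonsing_inv_mul_cancel_left b g hb.2]
    exact hleft _ (inv_mem_borelSubgroup hb) _ hg
  · rw [← mul_nonsing_inv_cancel_right b g hb.2]
    exact hright _ (inv_mem_borelSubgroup hb) _ hg

open Classical in
/-- The extension of a function on permutations to a function on matrices that is constant on
Bruhat cells (and vanishes outside all of them). -/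
noncomputable def cellExtension {M : Type*} [AddCommMonoid M] (F : Type*) [Field F]
    (f : Perm (Fin n) → M) : Matrix (Fin n) (Fin n) F → M :=
  fun g => ∑ τ : Perm (Fin n), if g ∈ bruhatCell n F τ then f τ else 0

open Classical in
theorem isBiinvariant_cellExtension {M : Type*} [AddCommMonoid M] (f : Perm (Fin n) → M) :
    IsBiinvariant (cellExtension F f) where
  left b hb g := Finset.sum_congr rfl fun τ _ =>
    if_congr (iff_of_eq ((isBiinvariant_mem_bruhatCell τ).left b hb g)) rfl rfl
  right b hb g := Finset.sum_congr rfl fun τ _ =>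
    if_congr (iff_of_eq ((isBiinvariant_mem_bruhatCell τ).right b hb g)) rfl rfl

theorem cellExtension_permMatrix {M : Type*} [AddCommMonoid M] (f : Perm (Fin n) → M)
    (σ : Perm (Fin n)) : cellExtension F f (σ.permMatrix F) = f σ := by
  rw [cellExtension, Finset.sum_eq_single σ, if_pos (permMatrix_mem_bruhatCell σ)]
  · exact fun τ _ hτ => if_neg fun h => hτ (eq_of_permMatrix_mem_bruhatCell h).symm
  · exact fun h => absurd (Finset.mem_univ σ) h

theorem isBiinvariant_const {α : Type*} (a : α) :
    IsBiinvariant fun _ : Matrix (Fin n) (Fin n) F => a :=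
  ⟨fun _ _ _ => rfl, fun _ _ _ => rfl⟩

theorem sqrtWeight_injective {s : ℝ} (hs : s ≠ 0) :
    Function.Injective (sqrtWeight (n := n) s) := fun _ _ hfg =>
  funext fun σ => mul_left_cancel₀ (pow_ne_zero _ hs) (congrArg (fun v => v.ofLp σ) hfg)

theorem transvections_nonempty (hn : 2 ≤ n) : (transvections n F).Nonempty :=
  ⟨_, Pi.single ⟨0, by omega⟩ 1, Pi.single ⟨1, hn⟩ 1, Pi.single_ne_zero_iff.mpr one_ne_zero,
    Pi.single_ne_zero_iff.mpr one_ne_zero, by simp [Pi.single_apply], rfl⟩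

variable [Fintype F] {s : ℝ}

theorem card_transvections :
    (Nat.card (transvections n F) : ℝ) = ((Fintype.card F : ℝ) ^ (n - 1) - 1) *
      ∑ k ∈ Finset.range n, (Fintype.card F : ℝ) ^ k := by
  have hsum := sum_transvections_mul (n := n) (F := F) (isBiinvariant_const 1) 1
  simp only [Finset.sum_const, nsmul_eq_mul, mul_one, hookSum_one,
    Fin.sum_univ_eq_sum_range fun k => (Fintype.card F : ℝ) ^ k] at hsum
  rw [Nat.card_coe_set_eq, Set.ncard_eq_toFinset_card, hsum, sub_mul, one_mul]

theorem chainOp_weightedRestrict (hs : s ^ 2 = Fintype.card F)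
    {h : Matrix (Fin n) (Fin n) F → ℝ} (hh : IsBiinvariant h) :
    chainOp n (s ^ 2) (heckeGen n s) (weightedRestrict s h) = weightedRestrict s fun g =>
      (∑ T ∈ (Set.toFinite (transvections n F)).toFinset, h (T * g)) /
        Nat.card (transvections n F) := by
  ext σ
  simp only [chainOp, LinearMap.smul_apply, LinearMap.sub_apply, LinearMap.sum_apply,
    Module.End.one_apply, PiLp.smul_apply, PiLp.sub_apply, WithLp.ofLp_sum, Finset.sum_apply,
    ← weightedRestrict_hookSum hs hh, smul_eq_mul, sum_transvections_mul hh, card_transvections]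
  simp only [weightedRestrict, sqrtWeight_apply, ← Finset.mul_sum, hs]
  ring

theorem transChain_mulVec_apply (f : Perm (Fin n) → ℝ) (σ : Perm (Fin n)) :
    (transChain n F *ᵥ f) σ =
      (∑ T ∈ (Set.toFinite (transvections n F)).toFinset, cellExtension F f (T * σ.permMatrix F)) /
        Nat.card (transvections n F) := by
  classical
  simp only [cellExtension, mulVec, dotProduct]
  rw [Finset.sum_comm, Finset.sum_div]
  refine Finset.sum_congr rfl fun τ _ => ?_
  rw [transChain, of_apply, div_mul_eq_mul_div, ← Finset.sum_filter, Finset.sum_const,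
    nsmul_eq_mul, ← Set.ncard_coe_finset, ← Nat.card_coe_set_eq, Finset.coe_filter]
  simp only [Set.Finite.mem_toFinset]

theorem chainOp_sqrtWeight (hs : s ^ 2 = Fintype.card F) (f : Perm (Fin n) → ℝ) :
    chainOp n (s ^ 2) (heckeGen n s) (sqrtWeight s f) = sqrtWeight s (transChain n F *ᵥ f) := by
  have hchain := chainOp_weightedRestrict hs (isBiinvariant_cellExtension (F := F) f)
  simpa only [weightedRestrict, cellExtension_permMatrix, ← transChain_mulVec_apply] using hchain

theorem chainOp_pow_sqrtWeight (hs : s ^ 2 = Fintype.card F) (N : ℕ) (f : Perm (Fin n) → ℝ) :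
    (chainOp n (s ^ 2) (heckeGen n s) ^ N) (sqrtWeight s f) =
      sqrtWeight s ((transChain n F ^ N) *ᵥ f) := by
  induction N with
  | zero => rw [pow_zero, pow_zero, Module.End.one_apply, one_mulVec]
  | succ N ih =>
    rw [pow_succ', Module.End.mul_apply, ih, chainOp_sqrtWeight hs, mulVec_mulVec, ← pow_succ']

theorem transChain_mulVec_one (hn : 2 ≤ n) : transChain n F *ᵥ 1 = 1 := by
  have hs : √(Fintype.card F : ℝ) ^ 2 = Fintype.card F := Real.sq_sqrt (Nat.cast_nonneg _)
  have hs0 : √(Fintype.card F : ℝ) ≠ 0 :=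
    (Real.sqrt_pos.mpr (Nat.cast_pos.mpr Fintype.card_pos)).ne'
  have hcard : (Nat.card (transvections n F) : ℝ) ≠ 0 := by
    rw [Nat.card_coe_set_eq, Nat.cast_ne_zero]
    exact ((transvections_nonempty hn).ncard_pos (Set.toFinite _)).ne'
  have hconst := chainOp_weightedRestrict hs (isBiinvariant_const (n := n) (F := F) 1)
  simp only [Finset.sum_const, nsmul_eq_mul, mul_one, ← Set.ncard_eq_toFinset_card,
    ← Nat.card_coe_set_eq, div_self hcard] at hconst
  exact sqrtWeight_injective hs0 ((chainOp_sqrtWeight hs 1).symm.trans hconst)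

theorem sum_transChain_pow (hn : 2 ≤ n) (N : ℕ) (σ : Perm (Fin n)) :
    ∑ τ, (transChain n F ^ N) σ τ = 1 := by
  have hpow : (transChain n F ^ N) *ᵥ 1 = 1 := by
    induction N with
    | zero => rw [pow_zero, one_mulVec]
    | succ N ih => rw [pow_succ, ← mulVec_mulVec, transChain_mulVec_one hn, ih]
  have hrow := congrFun hpow σ
  simpa only [mulVec, dotProduct_one, Pi.one_apply] using hrow

end ChainOperator

section Mallows

open Equiv

variable {n : ℕ}

/-- The permutation sending `0` to `i` and keeping the relative order of the values of `σ` on the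
remaining points; every permutation of `Fin (n + 1)` arises once in this way. -/
def insertZero (i : Fin (n + 1)) (σ : Perm (Fin n)) : Perm (Fin (n + 1)) :=
  i.cycleRange.symm * Perm.decomposeFin.symm (0, σ)

theorem insertZero_zero (i : Fin (n + 1)) (σ : Perm (Fin n)) : insertZero i σ 0 = i := by
  simp [insertZero]

theorem insertZero_succ (i : Fin (n + 1)) (σ : Perm (Fin n)) (k : Fin n) :
    insertZero i σ k.succ = i.succAbove (σ k) := by
  simp [insertZero]

theorem insertZero_bijective :
    Function.Bijective fun p : Fin (n + 1) × Perm (Fin n) => insertZero p.1 p.2 := by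
  rw [Fintype.bijective_iff_injective_and_card]
  refine ⟨?_, by simp [Fintype.card_perm, Nat.factorial_succ]⟩
  rintro ⟨i, σ⟩ ⟨j, τ⟩ (h : insertZero i σ = insertZero j τ)
  obtain rfl : i = j := by rw [← insertZero_zero i σ, h, insertZero_zero]
  refine Prod.ext rfl (Equiv.ext fun k => i.succAbove_right_injective ?_)
  rw [← insertZero_succ, h, insertZero_succ]

theorem inversions_eq_sum (ω : Perm (Fin n)) :
    inversions n ω = ∑ a, ∑ b, if a < b ∧ ω b < ω a then 1 else 0 := by
  rw [inversions, Finset.card_filter, Fintype.sum_prod_type]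

theorem inversions_insertZero (i : Fin (n + 1)) (σ : Perm (Fin n)) :
    inversions (n + 1) (insertZero i σ) = i + inversions n σ := by
  have hzero : (∑ k : Fin n, if (σ k).castSucc < i then 1 else 0) = (i : ℕ) := by
    rw [Equiv.sum_comp σ fun k : Fin n => if k.castSucc < i then 1 else 0, ← Finset.card_filter]
    simp only [Fin.lt_def, Fin.val_castSucc]
    rw [Fin.card_filter_val_lt, min_eq_right (by omega)]
  rw [inversions_eq_sum, inversions_eq_sum, Fin.sum_univ_succ, Fin.sum_univ_succ]
  simp only [Fin.sum_univ_succ (n := n), insertZero_zero, insertZero_succ,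
    Fin.succAbove_lt_iff_castSucc_lt, Fin.succ_pos, Fin.not_lt_zero, false_and, if_false, true_and,
    lt_irrefl, zero_add, Fin.succ_lt_succ_iff, Fin.succAbove_lt_succAbove_iff, hzero]

theorem sum_pow_inversions (q n : ℕ) :
    ∑ σ : Perm (Fin n), q ^ inversions n σ = qFactorial q n := by
  induction n with
  | zero => simp [qFactorial, inversions]
  | succ n ih =>
    rw [← insertZero_bijective.sum_comp fun σ => q ^ inversions (n + 1) σ, Fintype.sum_prod_type]
    simp only [inversions_insertZero, pow_add, ← Finset.mul_sum, ih]
    rw [← Finset.sum_mul, Fin.sum_univ_eq_sum_range fun k => q ^ k, qFactorial, qFactorial,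
      Finset.prod_range_succ, mul_comm]

theorem qFactorial_pos (q n : ℕ) : 0 < qFactorial q n :=
  Finset.prod_pos fun k _ => by simp [Finset.sum_range_succ']

theorem mallows_pos {q : ℕ} (hq : 0 < q) (σ : Perm (Fin n)) : 0 < mallows q n σ :=
  div_pos (pow_pos (Nat.cast_pos.mpr hq) _) (Nat.cast_pos.mpr (qFactorial_pos q n))

theorem sum_mallows (q n : ℕ) : ∑ σ, mallows q n σ = 1 := by
  have hfac : (qFactorial q n : ℝ) ≠ 0 := Nat.cast_ne_zero.mpr (qFactorial_pos q n).ne'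
  simp only [mallows]
  rw [← Finset.sum_div, div_eq_one_iff_eq hfac, ← sum_pow_inversions]
  exact_mod_cast rfl

end Mallows

section AverageChiSq

open Equiv Matrix

theorem sum_sub_sq_div_eq {ι K : Type*} [Fintype ι] [Field K] {p π : ι → K} (hp : ∑ i, p i = 1)
    (hπ : ∑ i, π i = 1) (h0 : ∀ i, π i ≠ 0) :
    ∑ i, (p i - π i) ^ 2 / π i = ∑ i, p i ^ 2 / π i - 1 := by
  have hterm : ∀ i, (p i - π i) ^ 2 / π i = p i ^ 2 / π i - (2 * p i - π i) := fun i => by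
    field_simp [h0 i]
    ring
  simp only [hterm, Finset.sum_sub_distrib, ← Finset.mul_sum, hp, hπ]
  ring

theorem IsHeckeRep.chainOp_isSymmetric {E : Type*} [NormedAddCommGroup E] [InnerProductSpace ℝ E]
    {n : ℕ} {q : ℝ} {T : ℕ → Module.End ℝ E} (hT : IsHeckeRep n q T) :
    (chainOp n q T).IsSymmetric := by
  refine .smul (conj_trivial _) (.sub (.smul (conj_trivial _) ?_) (.smul (conj_trivial _) .one))
  exact Finset.sum_induction _ LinearMap.IsSymmetric (fun _ _ => .add) .zero
    fun k _ => hT.jucysMurphy_isSymmetric k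

theorem sqrtWeight_single {n : ℕ} {s : ℝ} (hs : s ≠ 0) (σ : Perm (Fin n)) :
    sqrtWeight s (Pi.single σ (s ^ inversions n σ)⁻¹) = EuclideanSpace.single σ 1 := by
  ext τ
  obtain rfl | hτ := eq_or_ne τ σ
  · simp [sqrtWeight_apply, hs]
  · simp [sqrtWeight_apply, hτ]

variable {n : ℕ} {F : Type*} [Field F] [Fintype F] {s : ℝ}

theorem norm_sq_chainOp_pow_single (hs : s ^ 2 = Fintype.card F) (ℓ : ℕ) (τ : Perm (Fin n)) :
    ‖(chainOp n (s ^ 2) (heckeGen n s) ^ ℓ) (EuclideanSpace.single τ 1)‖ ^ 2 =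
      ∑ σ, mallows (Fintype.card F) n σ *
        ((transChain n F ^ ℓ) σ τ ^ 2 / mallows (Fintype.card F) n τ) := by
  have hs0 : s ≠ 0 := by
    rintro rfl
    exact Fintype.card_ne_zero (Nat.cast_eq_zero.mp (hs.symm.trans (zero_pow two_ne_zero)))
  have hfac : (qFactorial (Fintype.card F) n : ℝ) ≠ 0 :=
    Nat.cast_ne_zero.mpr (qFactorial_pos _ n).ne'
  rw [← sqrtWeight_single hs0, chainOp_pow_sqrtWeight hs, EuclideanSpace.norm_sq_eq]
  refine Finset.sum_congr rfl fun σ _ => ?_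
  rw [sqrtWeight_apply, mulVec_single, Real.norm_eq_abs, sq_abs, mallows, mallows, ← hs]
  simp only [Pi.smul_apply, col_apply, MulOpposite.smul_eq_mul_unop, MulOpposite.unop_op]
  field_simp
  ring

theorem sum_mallows_mul_chiSq (hs : s ^ 2 = Fintype.card F) (hn : 2 ≤ n) (ℓ : ℕ) :
    ∑ σ, mallows (Fintype.card F) n σ * chiSq n F ℓ σ =
      LinearMap.trace ℝ _ (chainOp n (s ^ 2) (heckeGen n s) ^ (2 * ℓ)) - 1 := by
  have hchi : ∀ σ, chiSq n F ℓ σ =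
      ∑ τ, (transChain n F ^ ℓ) σ τ ^ 2 / mallows (Fintype.card F) n τ - 1 := fun σ =>
    sum_sub_sq_div_eq (sum_transChain_pow hn ℓ σ) (sum_mallows _ n)
      fun τ => (mallows_pos Fintype.card_pos τ).ne'
  have htrace : LinearMap.trace ℝ _ (chainOp n (s ^ 2) (heckeGen n s) ^ (2 * ℓ)) =
      ∑ τ, ‖(chainOp n (s ^ 2) (heckeGen n s) ^ ℓ) (EuclideanSpace.single τ 1)‖ ^ 2 := by
    rw [LinearMap.trace_eq_sum_inner _ (EuclideanSpace.basisFun (Perm (Fin n)) ℝ)]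
    refine Finset.sum_congr rfl fun τ _ => ?_
    rw [two_mul, pow_add, Module.End.mul_apply,
      ← (heckeGen_isHeckeRep n s).chainOp_isSymmetric.pow ℓ, real_inner_self_eq_norm_sq,
      EuclideanSpace.basisFun_apply]
  simp only [htrace, norm_sq_chainOp_pow_single hs, hchi, mul_sub, mul_one,
    Finset.sum_sub_distrib, sum_mallows, Finset.mul_sum]
  rw [Finset.sum_comm]

end AverageChiSq

end TransvectionChain

theorem average_chiSq_upper_bound_general
    (F : Type*) [Field F] [Fintype F] (n : ℕ) (hn : 2 ≤ n)
    (hlog : 6 / n < Real.log (Fintype.card F)) (c : ℝ) (ℓ : ℕ)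
    (hℓ : (Real.log n + c) / (Real.log (Fintype.card F) - 6 / n) ≤ ℓ) :
    ∑ x : Equiv.Perm (Fin n), mallows (Fintype.card F) n x * chiSq n F ℓ x
      ≤ Real.exp (Real.exp (-2 * c)) - 1 := by
  have hq : (2 : ℝ) ≤ Fintype.card F := Nat.ofNat_le_cast.mpr Fintype.one_lt_card
  have hs : √(Fintype.card F : ℝ) ^ 2 = Fintype.card F := Real.sq_sqrt (Nat.cast_nonneg _)
  rw [TransvectionChain.sum_mallows_mul_chiSq hs hn]
  rw [← hs] at hq hlog hℓ
  exact sub_le_sub_right ((TransvectionChain.heckeGen_isHeckeRep n _).trace_chainOp_pow_le hq hn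
    (fun _ => TransvectionChain.finrank_trivialSpace_le _) hlog hℓ) 1

/-- If `log q > 6/n`, `c > 0` and `ℓ ≥ (log n + c)/(log q − 6/n)`, then
the lumped transvection chain on `S_n` satisfies
`∑_x π_q(x) χ²_x(ℓ) ≤ (e^{e^{−c}} − 1) + e^{−2c}`. -/
theorem average_chiSq_upper_bound
    (F : Type*) [Field F] [Fintype F] (n : ℕ) (hn : 2 ≤ n)
    (hlog : Real.log (Fintype.card F) > 6 / n)
    (c : ℝ) (hc : 0 < c) (ℓ : ℕ)
    (hℓ : (ℓ : ℝ) ≥ (Real.log n + c) / (Real.log (Fintype.card F) - 6 / n)) :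
    ∑ x : Equiv.Perm (Fin n), mallows (Fintype.card F) n x * chiSq n F ℓ x
      ≤ (Real.exp (Real.exp (-c)) - 1) + Real.exp (-2 * c) :=
  (average_chiSq_upper_bound_general F n hn hlog c ℓ hℓ).trans <|
    le_add_of_le_of_nonneg (by gcongr; linarith) (Real.exp_nonneg _)
end

section
/- Let F be a finite field with q = |F| elements and n ≥ 2. For an invertible matrix M and 1 ≤ i ≤ n, let ℓ(M, i) denote the smallest index k such that M e_i lies in the span of e_1, …, e_k (equivalently, (M e_i)_m = 0 for all m > k). Then: (i) for every pair i ≠ j in {1, …, n}, |{T ∈ 𝒯 : ℓ(T, i) = j}| = (q − 1) q^{n + j − 3}; and (ii) for every i in {1, …, n}, (q − 1) · |{T ∈ 𝒯 : ℓ(T, i) = i}| = (q^{n−1} − 1)² + (q − 1)² (q^{i−1} − 1) q^{n−2}. Consequently the top-label chain P₁(i, j) = |{T ∈ 𝒯 : ℓ(T, i) = j}| / |𝒯| satisfies P₁(i, j) = (q−1)² q^{n+j−3} / ((qⁿ−1)(q^{n−1}−1)) for i ≠ j and P₁(i, i) = ((q^{n−1}−1)² + (q−1)²(q^{i−1}−1)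 q^{n−2}) / ((qⁿ−1)(q^{n−1}−1)). -/
/-- The set of transvections `T` with `ℓ(T, i) = j`, i.e. such that `j` is the smallest
index with `T e_i ∈ span(e_0, …, e_j)` (0-based): the `j`-th entry of column `i` of `T` is
nonzero and all lower entries vanish. -/
def transvectionsTopIdx (n : ℕ) (F : Type*) [Field F] (i j : Fin n) :
    Set (Matrix (Fin n) (Fin n) F) :=
  {T | T ∈ transvections n F ∧ T j i ≠ 0 ∧ ∀ m : Fin n, j < m → T m i = 0}

/-!
If `T = 1 + v aᵀ` has a nonzero entry in position `(j, i)` with `j ≠ i`, then `aᵢ ≠ 0`, and we may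
normalise `aᵢ = 1`. The column `u = T eᵢ` then determines `v = u - eᵢ`, and `aᵀv = 0` becomes
`aᵀu = 1`, so `T` is one of `q ^ (n - 2)` transvections with column `u`. Summing over the columns
whose last nonzero entry is the `j`-th gives the off-diagonal counts. On the other hand the pairs
`(a, v)` representing a given transvection form a torsor under `Fˣ`, which gives the total number
of transvections; since their columns never vanish, the diagonal count is what remains after
subtracting the off-diagonal ones.
-/

section Counting

theorem ncard_eq_mul_of_ncard_fiber {α β : Type*} {s : Set α} {t : Set β} {k : ℕ} (f : α → β)
    (hs : s.Finite) (ht : t.Finite) (hf : Set.MapsTo f s t)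
    (hk : ∀ b ∈ t, {a ∈ s | f a = b}.ncard = k) : s.ncard = t.ncard * k := by
  classical
  lift s to Finset α using hs
  lift t to Finset β using ht
  have card_fiber : ∀ b ∈ t, (s.filter fun a => f a = b).card = k := fun b hb => by
    rw [← hk b hb, ← Set.ncard_coe_finset, Finset.coe_filter]
    rfl
  rw [Set.ncard_coe_finset, Set.ncard_coe_finset, Finset.card_eq_sum_card_fiberwise hf,
    Finset.sum_congr rfl card_fiber, Finset.sum_const, smul_eq_mul]

theorem ncard_fiber_of_surjective {K V W : Type*} [DivisionRing K] [AddCommGroup V]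
    [Module K V] [Module.Finite K V] [AddCommGroup W] [Module K W] {f : V →ₗ[K] W}
    (hf : Function.Surjective f) (w : W) :
    {x | f x = w}.ncard = Nat.card K ^ (Module.finrank K V - Module.finrank K W) := by
  have finrank_ker : Module.finrank K f.ker = Module.finrank K V - Module.finrank K W := by
    rw [← f.finrank_range_add_finrank_ker, LinearMap.range_eq_top.mpr hf, finrank_top,
      Nat.add_sub_cancel_left]
  rw [← finrank_ker, ← Module.natCard_eq_pow_finrank, ← Nat.card_coe_set_eq]
  exact Nat.card_congr (AddMonoidHom.fiberEquivKerOfSurjective (f := f.toAddMonoidHom) hf w)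

theorem ncard_support_subset {ι M : Type*} [Finite ι] [Zero M] (s : Set ι) :
    {u : ι → M | Function.support u ⊆ s}.ncard = Nat.card M ^ s.ncard := by
  classical
  have support_subset_iff (u : ι → M) : Function.support u ⊆ s ↔
      u ∘ (Subtype.val : {m // m ∈ sᶜ} → ι) = 0 := by
    rw [Function.support_subset_iff']
    simp [funext_iff]
  simp only [support_subset_iff]
  rw [← Nat.card_coe_set_eq, ← Nat.card_coe_set_eq, ← Nat.card_fun]
  exact Nat.card_congr ((Equiv.subtypePreimage (· ∈ sᶜ) (0 : {m // m ∈ sᶜ} → M)).trans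
    (Equiv.arrowCongr (Equiv.subtypeEquivRight fun _ => Set.notMem_compl_iff) (Equiv.refl M)))

theorem ncard_isGreatest_support {M : Type*} [Zero M] [Finite M] {n : ℕ} (j : Fin n) :
    {u : Fin n → M | IsGreatest (Function.support u) j}.ncard
      = (Nat.card M - 1) * Nat.card M ^ (j : ℕ) := by
  have eq_sdiff : {u : Fin n → M | IsGreatest (Function.support u) j}
      = {u | Function.support u ⊆ Set.Iic j} \ {u | Function.support u ⊆ Set.Iio j} := by
    ext u
    constructor
    · exact fun h => ⟨h.2, fun hlt => lt_irrefl j (hlt h.1)⟩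
    · rintro ⟨hle, hlt⟩
      obtain ⟨m, hm, hjm⟩ := Set.not_subset.mp hlt
      obtain rfl : m = j := le_antisymm (hle hm) (not_lt.mp hjm)
      exact ⟨hm, hle⟩
  rw [eq_sdiff, Set.ncard_sdiff fun u hu => hu.trans Set.Iio_subset_Iic_self,
    ncard_support_subset, ncard_support_subset, ← Finset.coe_Iic, ← Finset.coe_Iio,
    Set.ncard_coe_finset, Set.ncard_coe_finset, Fin.card_Iic, Fin.card_Iio, pow_succ',
    Nat.sub_one_mul]

variable {F ι : Type*} [Field F] [Fintype ι]

theorem ncard_dotProduct_eq {a : ι → F} (ha : a ≠ 0) (c : F) :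
    {v | a ⬝ᵥ v = c}.ncard = Nat.card F ^ (Fintype.card ι - 1) := by
  classical
  obtain ⟨k, hk⟩ := Function.ne_iff.mp ha
  have dotProduct_surjective : Function.Surjective (dotProductBilin F F a) := fun y =>
    ⟨Pi.single k ((a k)⁻¹ * y), by simp [mul_inv_cancel_left₀ hk]⟩
  simpa using ncard_fiber_of_surjective dotProduct_surjective c

theorem ncard_apply_eq_and_dotProduct_eq {i k : ι} (hki : k ≠ i) {u : ι → F} (hk : u k ≠ 0)
    (b c : F) :
    {a | a i = b ∧ a ⬝ᵥ u = c}.ncard = Nat.card F ^ (Fintype.card ι - 2) := by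
  classical
  let f : (ι → F) →ₗ[F] F × F := (LinearMap.proj i).prod ((dotProductBilin F F).flip u)
  have f_surjective : Function.Surjective f := fun ⟨x, y⟩ =>
    ⟨Pi.single i x + Pi.single k ((y - x * u i) / u k), by simp [f, hki.symm, hk]⟩
  simpa [f] using ncard_fiber_of_surjective f_surjective (b, c)

theorem ncard_nonzero_orthogonal_pairs [Finite F] :
    {p : (ι → F) × (ι → F) | p.1 ≠ 0 ∧ p.2 ≠ 0 ∧ p.1 ⬝ᵥ p.2 = 0}.ncard
      = (Nat.card F ^ Fintype.card ι - 1) * (Nat.card F ^ (Fintype.card ι - 1) - 1) := by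
  have ncard_ne_zero : {a : ι → F | a ≠ 0}.ncard = Nat.card F ^ Fintype.card ι - 1 := by
    rw [← Set.compl_singleton_eq, Set.ncard_compl, Set.ncard_singleton, Nat.card_fun,
      Nat.card_eq_fintype_card (α := ι)]
  rw [← ncard_ne_zero]
  refine ncard_eq_mul_of_ncard_fiber Prod.fst (Set.toFinite _) (Set.toFinite _)
    (fun p hp => hp.1) fun a ha => ?_
  have fiber_eq_image : {p ∈ {p : (ι → F) × (ι → F) | p.1 ≠ 0 ∧ p.2 ≠ 0 ∧ p.1 ⬝ᵥ p.2 = 0} |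
      p.1 = a} = Prod.mk a '' ({v | a ⬝ᵥ v = 0} \ {0}) := by
    ext ⟨b, v⟩
    simp only [Set.mem_ofPred_eq, Set.mem_image, Set.mem_sdiff, Set.mem_singleton_iff]
    grind
  rw [fiber_eq_image, Set.ncard_image_of_injective _ (Prod.mk_right_injective a),
    Set.ncard_sdiff_singleton_of_mem (by simp), ncard_dotProduct_eq ha]

end Counting

theorem exists_isGreatest_support {ι M : Type*} [Finite ι] [LinearOrder ι] [Zero M]
    {u : ι → M} (hu : u ≠ 0) : ∃ j, IsGreatest (Function.support u) j := by
  obtain ⟨j, hj⟩ := (Set.toFinite _).exists_maximal (Function.support_nonempty_iff.mpr hu)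
  exact ⟨j, hj.prop, fun m hm => (le_total m j).elim id (hj.le_of_ge hm)⟩

theorem vecMulVec_eq_vecMulVec_iff {F ι κ : Type*} [Field F] {v w : ι → F} {a b : κ → F}
    (hv : v ≠ 0) (ha : a ≠ 0) :
    Matrix.vecMulVec w b = Matrix.vecMulVec v a ↔ ∃ c : Fˣ, b = c • a ∧ w = c⁻¹ • v := by
  constructor
  · intro h
    have entry_eq (r s) : w r * b s = v r * a s := congrFun (congrFun h r) s
    obtain ⟨l, hvl⟩ := Function.ne_iff.mp hv
    obtain ⟨k, hak⟩ := Function.ne_iff.mp ha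
    have hwb : w l * b k ≠ 0 := entry_eq l k ▸ mul_ne_zero hvl hak
    have hwl : w l ≠ 0 := left_ne_zero_of_mul hwb
    have hb : b = (v l / w l) • a := by
      ext s
      rw [Pi.smul_apply, smul_eq_mul, div_mul_eq_mul_div, ← entry_eq, mul_div_cancel_left₀ _ hwl]
    have hw : w = (v l / w l)⁻¹ • v := by
      ext r
      refine mul_right_cancel₀ (right_ne_zero_of_mul hwb) ?_
      rw [entry_eq, hb, inv_div]
      simp only [Pi.smul_apply, smul_eq_mul]
      field_simp [show v l ≠ 0 from hvl]
    exact ⟨Units.mk0 (v l / w l) (div_ne_zero hvl hwl), hb, hw⟩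
  · rintro ⟨c, rfl, rfl⟩
    simp [Matrix.smul_vecMulVec, Matrix.vecMulVec_smul]

section Transvections

variable {F : Type*} [Field F] {n : ℕ}

theorem col_one_add_vecMulVec (v a : Fin n → F) (i : Fin n) :
    (1 + Matrix.vecMulVec v a).col i = Pi.single i 1 + a i • v := by
  ext m
  simp [Matrix.vecMulVec_apply, Matrix.one_apply, Pi.single_apply, mul_comm]

theorem col_ne_zero_of_mem_transvections {T : Matrix (Fin n) (Fin n) F}
    (hT : T ∈ transvections n F) (i : Fin n) : T.col i ≠ 0 := by
  obtain ⟨a, v, -, -, hav, rfl⟩ := hT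
  change a ⬝ᵥ v = 0 at hav
  rw [col_one_add_vecMulVec]
  intro hcol
  have hai : a i = 0 := by simpa [hav] using congrArg (a ⬝ᵥ ·) hcol
  simp [hai] at hcol

theorem mem_transvectionsTopIdx_iff {i j : Fin n} {T : Matrix (Fin n) (Fin n) F} :
    T ∈ transvectionsTopIdx n F i j ↔
      T ∈ transvections n F ∧ IsGreatest (Function.support (T.col i)) j :=
  and_congr_right fun _ => and_congr_right fun _ => forall_congr' fun m => by
    rw [← not_le, not_imp_comm, Function.mem_support, Matrix.col_apply]

theorem ncard_transvections_col_eq {i : Fin n} {u : Fin n → F} (hu : u ≠ Pi.single i 1) :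
    {T ∈ transvections n F | T.col i = u}.ncard = {a | a i = 1 ∧ a ⬝ᵥ u = 1}.ncard := by
  have hv : u - Pi.single i 1 ≠ 0 := sub_ne_zero.mpr hu
  refine (Set.BijOn.ncard_eq (f := fun a => 1 + Matrix.vecMulVec (u - Pi.single i 1) a)
    ⟨?_, ?_, ?_⟩).symm
  · rintro a ⟨hai, hau⟩
    refine ⟨⟨a, u - Pi.single i 1, fun ha => by simp [ha] at hai, hv, ?_, rfl⟩, ?_⟩
    · exact (dotProduct_sub a u _).trans (by simp [hai, hau])
    · rw [col_one_add_vecMulVec, hai, one_smul, add_sub_cancel]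
  · rintro a - b - hab
    obtain ⟨k, hk⟩ := Function.ne_iff.mp hv
    have hvecMulVec : Matrix.vecMulVec (u - Pi.single i 1) a
        = Matrix.vecMulVec (u - Pi.single i 1) b := add_left_cancel hab
    ext m
    exact mul_left_cancel₀ hk (congrFun₂ hvecMulVec k m)
  · rintro _ ⟨⟨b, w, -, -, hbw, rfl⟩, hcol⟩
    change b ⬝ᵥ w = 0 at hbw
    rw [col_one_add_vecMulVec] at hcol
    subst hcol
    have hbi : b i ≠ 0 := fun h => hu (by simp [h])
    refine ⟨(b i)⁻¹ • b, ⟨by simp [hbi], by simp [hbi, hbw]⟩, ?_⟩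
    simp [Matrix.smul_vecMulVec, Matrix.vecMulVec_smul, smul_smul, hbi]

theorem ncard_transvections_col_eq_of_apply_ne_zero {i k : Fin n} (hki : k ≠ i) {u : Fin n → F}
    (hk : u k ≠ 0) :
    {T ∈ transvections n F | T.col i = u}.ncard = Nat.card F ^ (n - 2) := by
  have hu : u ≠ Pi.single i 1 := fun h => hk (by simp [h, hki])
  rw [ncard_transvections_col_eq hu, ncard_apply_eq_and_dotProduct_eq hki hk, Fintype.card_fin]

variable [Finite F]

theorem sub_one_mul_ncard_transvections :
    (Nat.card F - 1) * (transvections n F).ncard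
      = (Nat.card F ^ n - 1) * (Nat.card F ^ (n - 1) - 1) := by
  have ncard_pairs := ncard_nonzero_orthogonal_pairs (F := F) (ι := Fin n)
  rw [Fintype.card_fin] at ncard_pairs
  choose a v ha hv hav hT using fun T : transvections n F => T.2
  rw [← ncard_pairs, ← Nat.card_units, ← Nat.card_coe_set_eq, ← Nat.card_coe_set_eq,
    ← Nat.card_prod]
  refine Nat.card_eq_of_bijective (fun p => ⟨(p.1 • a p.2, p.1⁻¹ • v p.2), ?_, ?_, ?_⟩) ⟨?_, ?_⟩
  · exact (smul_ne_zero_iff_ne _).mpr (ha _)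
  · exact (smul_ne_zero_iff_ne _).mpr (hv _)
  · rw [smul_dotProduct, dotProduct_smul, smul_inv_smul]
    exact hav _
  · rintro ⟨c, T⟩ ⟨d, S⟩ h
    have ha_smul : c • a T = d • a S := congrArg (·.1.1) h
    have hv_smul : c⁻¹ • v T = d⁻¹ • v S := congrArg (·.1.2) h
    have hvecMulVec (e : Fˣ) (R) :
        Matrix.vecMulVec (e⁻¹ • v R) (e • a R) = Matrix.vecMulVec (v R) (a R) :=
      (vecMulVec_eq_vecMulVec_iff (hv R) (ha R)).mpr ⟨e, rfl, rfl⟩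
    obtain rfl : T = S := Subtype.ext <| by
      rw [hT T, hT S, ← hvecMulVec c T, ← hvecMulVec d S, ha_smul, hv_smul]
    obtain ⟨k, hk⟩ := Function.ne_iff.mp (ha T)
    rw [Units.ext (mul_right_cancel₀ hk (congrFun ha_smul k))]
  · rintro ⟨⟨b, w⟩, hb, hw, hbw⟩
    let T : transvections n F := ⟨1 + Matrix.vecMulVec w b, b, w, hb, hw, hbw, rfl⟩
    obtain ⟨c, hbc, hwc⟩ := (vecMulVec_eq_vecMulVec_iff (hv T) (ha T)).mp
      (add_right_injective 1 (hT T))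
    exact ⟨(c, T), by simp only [hbc, hwc]⟩

theorem ncard_transvectionsTopIdx_of_ne {i j : Fin n} (hij : i ≠ j) :
    (transvectionsTopIdx n F i j).ncard
      = (Nat.card F - 1) * Nat.card F ^ (n + (j : ℕ) - 2) := by
  have hn : 2 ≤ n := by omega
  rw [Nat.sub_add_comm hn, add_comm, pow_add, ← mul_assoc, ← ncard_isGreatest_support j]
  refine ncard_eq_mul_of_ncard_fiber (fun T => T.col i) (Set.toFinite _) (Set.toFinite _)
    (fun T hT => (mem_transvectionsTopIdx_iff.mp hT).2) fun u hu => ?_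
  rw [← ncard_transvections_col_eq_of_apply_ne_zero hij.symm hu.1]
  congr 1
  ext T
  simp only [Set.mem_ofPred_eq, mem_transvectionsTopIdx_iff]
  exact and_congr_left fun hTu => and_iff_left (hTu ▸ hu)

theorem sum_ncard_transvectionsTopIdx (i : Fin n) :
    ∑ j, (transvectionsTopIdx n F i j).ncard = (transvections n F).ncard := by
  have iUnion_eq : ⋃ j, transvectionsTopIdx n F i j = transvections n F := by
    ext T
    simpa [mem_transvectionsTopIdx_iff] using
      fun hT => exists_isGreatest_support (col_ne_zero_of_mem_transvections hT i)
  rw [← iUnion_eq, Set.ncard_iUnion_of_finite (fun j => Set.toFinite _), finsum_eq_sum_of_fintype]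
  refine fun j k hjk => Set.disjoint_left.mpr fun T hj hk => hjk ?_
  exact (mem_transvectionsTopIdx_iff.mp hj).2.unique (mem_transvectionsTopIdx_iff.mp hk).2

theorem ncard_transvectionsTopIdx_self_add (hn : 2 ≤ n) (i : Fin n) :
    (transvectionsTopIdx n F i i).ncard + Nat.card F ^ (n - 2) * (Nat.card F ^ n - 1)
      = (transvections n F).ncard + (Nat.card F - 1) * Nat.card F ^ (n + (i : ℕ) - 2) := by
  have sum_formula : ∑ j : Fin n, (Nat.card F - 1) * Nat.card F ^ (n + (j : ℕ) - 2)
      = Nat.card F ^ (n - 2) * (Nat.card F ^ n - 1) := by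
    calc ∑ j : Fin n, (Nat.card F - 1) * Nat.card F ^ (n + (j : ℕ) - 2)
        = ∑ j ∈ Finset.range n, Nat.card F ^ (n - 2) * (Nat.card F ^ j * (Nat.card F - 1)) := by
          rw [← Fin.sum_univ_eq_sum_range]
          refine Finset.sum_congr rfl fun j _ => ?_
          rw [Nat.sub_add_comm hn, pow_add]
          ring
      _ = Nat.card F ^ (n - 2) * (Nat.card F ^ n - 1) := by
          rw [← Finset.mul_sum, ← Finset.sum_mul, geom_sum_mul_of_one_le Nat.card_pos]
  have split_diag (f : Fin n → ℕ) : ∑ j, f j = f i + ∑ j ∈ Finset.univ.erase i, f j :=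
    (Finset.add_sum_erase _ f (Finset.mem_univ i)).symm
  have off_diag : ∑ j ∈ Finset.univ.erase i, (transvectionsTopIdx n F i j).ncard
      = ∑ j ∈ Finset.univ.erase i, (Nat.card F - 1) * Nat.card F ^ (n + (j : ℕ) - 2) :=
    Finset.sum_congr rfl fun j hj =>
      ncard_transvectionsTopIdx_of_ne (Finset.ne_of_mem_erase hj).symm
  rw [← sum_formula, ← sum_ncard_transvectionsTopIdx i, split_diag, split_diag, off_diag]
  ring

theorem sub_one_mul_ncard_transvectionsTopIdx_self (hn : 2 ≤ n) (i : Fin n) :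
    (Nat.card F - 1) * (transvectionsTopIdx n F i i).ncard
      = (Nat.card F ^ (n - 1) - 1) ^ 2
        + (Nat.card F - 1) ^ 2 * (Nat.card F ^ (i : ℕ) - 1) * Nat.card F ^ (n - 2) := by
  have hself := ncard_transvectionsTopIdx_self_add (F := F) hn i
  have htotal := sub_one_mul_ncard_transvections (F := F) (n := n)
  obtain ⟨d, rfl⟩ := Nat.exists_eq_add_of_le' hn
  have hq (k : ℕ) : 1 ≤ Nat.card F ^ k := Nat.one_le_pow _ _ Nat.card_pos
  have hq1 : 1 ≤ Nat.card F := Nat.card_pos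
  zify [hq, hq1] at hself htotal ⊢
  simp only [Nat.add_sub_cancel, show d + 2 - 1 = d + 1 by omega,
    show d + 2 + (i : ℕ) - 2 = d + i by omega] at hself htotal ⊢
  linear_combination (Nat.card F - 1 : ℤ) * hself + htotal

theorem div_ncard_transvections (x : ℝ) :
    x / (transvections n F).ncard = ((Nat.card F : ℝ) - 1) * x
      / (((Nat.card F : ℝ) ^ n - 1) * ((Nat.card F : ℝ) ^ (n - 1) - 1)) := by
  have hq : 1 < Nat.card F := Finite.one_lt_card
  have htotal := congrArg (Nat.cast : ℕ → ℝ) (sub_one_mul_ncard_transvections (F := F) (n := n))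
  push_cast [Nat.cast_pred, hq.le, Nat.card_pos, Nat.one_le_pow] at htotal
  rw [← htotal, mul_div_mul_left]
  exact sub_ne_zero.mpr (by exact_mod_cast hq.ne')

end Transvections

/-- Counts for the top-label chain lumped from random transvections.
(Indices here are `0`-based elements of `Fin n`, corresponding to the `1`-based indices
`i+1, j+1` of the informal statement; e.g. `q^{n+j−3}` for `1`-based `j` becomes
`q^{n+j−2}` for `0`-based `j`.)
(i) For `i ≠ j`, `|{T ∈ 𝒯 : ℓ(T,i) = j}| = (q−1) q^{n+j−2}`;
(ii) `(q−1)·|{T ∈ 𝒯 : ℓ(T,i) = i}| = (q^{n−1}−1)² + (q−1)²(q^i − 1) q^{n−2}`.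
Consequently the top-label chain `P₁(i,j) = |{T ∈ 𝒯 : ℓ(T,i)=j}|/|𝒯|` satisfies
`P₁(i,j) = (q−1)² q^{n+j−2} / ((qⁿ−1)(q^{n−1}−1))` for `i ≠ j` and
`P₁(i,i) = ((q^{n−1}−1)² + (q−1)²(q^i−1) q^{n−2}) / ((qⁿ−1)(q^{n−1}−1))`. -/
theorem top_label_chain_transitions
    (F : Type*) [Field F] [Fintype F] (n : ℕ) (hn : 2 ≤ n) :
    (∀ i j : Fin n, i ≠ j →
      Nat.card (transvectionsTopIdx n F i j)
        = (Fintype.card F - 1) * Fintype.card F ^ (n + (j : ℕ) - 2)) ∧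
    (∀ i : Fin n,
      (Fintype.card F - 1) * Nat.card (transvectionsTopIdx n F i i)
        = (Fintype.card F ^ (n - 1) - 1) ^ 2
          + (Fintype.card F - 1) ^ 2 * (Fintype.card F ^ (i : ℕ) - 1)
              * Fintype.card F ^ (n - 2)) ∧
    (∀ i j : Fin n, i ≠ j →
      (Nat.card (transvectionsTopIdx n F i j) : ℝ) / (Nat.card (transvections n F) : ℝ)
        = ((Fintype.card F : ℝ) - 1) ^ 2 * (Fintype.card F : ℝ) ^ (n + (j : ℕ) - 2)
            / (((Fintype.card F : ℝ) ^ n - 1) * ((Fintype.card F : ℝ) ^ (n - 1) - 1))) ∧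
    (∀ i : Fin n,
      (Nat.card (transvectionsTopIdx n F i i) : ℝ) / (Nat.card (transvections n F) : ℝ)
        = (((Fintype.card F : ℝ) ^ (n - 1) - 1) ^ 2
              + ((Fintype.card F : ℝ) - 1) ^ 2 * ((Fintype.card F : ℝ) ^ (i : ℕ) - 1)
                  * (Fintype.card F : ℝ) ^ (n - 2))
            / (((Fintype.card F : ℝ) ^ n - 1) * ((Fintype.card F : ℝ) ^ (n - 1) - 1))) := by
  simp only [Nat.card_coe_set_eq, ← Nat.card_eq_fintype_card]
  refine ⟨fun i j => ncard_transvectionsTopIdx_of_ne,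
    sub_one_mul_ncard_transvectionsTopIdx_self hn, fun i j hij => ?_, fun i => ?_⟩
  · rw [div_ncard_transvections, ncard_transvectionsTopIdx_of_ne hij]
    push_cast [Nat.cast_pred, Nat.card_pos]
    ring
  · have hself := congrArg (Nat.cast : ℕ → ℝ)
      (sub_one_mul_ncard_transvectionsTopIdx_self (F := F) hn i)
    push_cast [Nat.cast_pred, Nat.card_pos, Nat.one_le_pow] at hself
    rw [div_ncard_transvections, hself]
end
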